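/- Fix T > 0, p > 0, constants α, β, γ, δ ≥ 0, and v₀ ∈ C^∞([0,1]) with 0 ≤ v₀ ≤ 1. Set v₋ = (p+α+γ−√((p−α+γ)²+4αγ))/(2p) and v₊ = (p−β−δ+√((p−β+δ)²+4βδ))/(2p). For each ε > 0 let u^ε ∈ C^∞([0,T]×[0,1]) with 0 ≤ u^ε ≤ 1 satisfy ∂_t u^ε = ε ∂_x² u^ε − p ∂_x[J(u^ε)] on (0,T)×(0,1), u^ε(0,·) = v₀, and the Robin boundary conditions [ε∂_x u^ε − pJ(u^ε) + α − (α+γ)u^ε]|_{x=0} = 0 and [ε∂_x u^ε − pJ(u^ε) − δ + (β+δ)u^ε]|_{x=1} = 0 for all t ∈ [0,T]. Then as ε → 0, u^ε converges in the weak-⋆ topology of L^∞([0,T]×[0,1]) to a function u satisfying: (i) ∫∫ [F(u)∂_t ψ + pQ(u)∂_x ψ] dx dt ≥ 0 for every Lax entropy flux pair (F,Q) and every nonnegative ψ ∈ C_c^∞((0,T)×(0,1)); (ii) esslim_{t→0+} ∫₀¹ |u(t,x) − v₀(x)| dx = 0; (iii) for every boundary entropy flux pair (ℱ,𝒬) and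 every nonnegative φ ∈ C([0,T]), esslim_{x→0+} ∫₀ᵀ φ(t) 𝒬(u(t,x), v₋) dt ≤ 0 and esslim_{x→1−} ∫₀ᵀ φ(t) 𝒬(u(t,x), v₊) dt ≥ 0. (Theorem 2.8, Robin boundary case.) -/

import Mathlib

open Set MeasureTheory intervalIntegral Filter

/-- The flux `J u = u (1 - u)`. -/
noncomputable def J (u : ℝ) : ℝ := u * (1 - u)

/-- A Lax entropy flux pair for the flux `J u = u * (1 - u)`. -/
def IsLaxPair (F Q : ℝ → ℝ) : Prop :=
  ContDiff ℝ 2 F ∧ ContDiff ℝ 2 Q ∧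
  (∀ u ∈ Set.Icc (0:ℝ) 1, deriv Q u = (1 - 2*u) * deriv F u) ∧
  (∀ u ∈ Set.Icc (0:ℝ) 1, 0 ≤ deriv (deriv F) u)

/-- A boundary entropy flux pair. -/
def IsBoundaryPair (F Q : ℝ → ℝ → ℝ) : Prop :=
  ∀ v ∈ Set.Icc (0:ℝ) 1,
    IsLaxPair (fun u => F u v) (fun u => Q u v) ∧
    F v v = 0 ∧ deriv (fun u => F u v) v = 0 ∧ Q v v = 0

open scoped Topology NNReal

/-
The potentials `V^ε` with `∂ₓV = u^ε` and `∂ₜV = ε ∂ₓu^ε - p J(u^ε)` solve a viscous Hamilton–Jacobi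
equation, and doubling the variables shows that they converge uniformly to a Lipschitz `U`. Hence
`u^ε` converges weakly-⋆ to `w = ∂ₓU`. Touching `U` from above by paraboloids gives
`∂ₜU ≤ -p J(w)` almost everywhere. Up to vanishing terms, `p ∫∫ (u^ε - w)²` equals
`∫∫ (∂ₜU + p J(w)) ≤ 0`, so the strict concavity of `J` turns weak into strong convergence and the
viscous entropy inequalities pass to the limit. The boundary traces exist because
`x ↦ ∫ φ(t) p Q(w(t, x)) dt - C x` is nonincreasing for a suitable `C`, and the Robin conditions
give their signs.
-/

/-! ### Space-time calculus -/

/-- The space-time rectangle `[0, T] × [0, 1]`. -/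
def rect (T : ℝ) : Set (ℝ × ℝ) := Icc (0 : ℝ) T ×ˢ Icc (0 : ℝ) 1

/-- The time derivative `∂ₜ f` of a function of `(t, x)`. -/
noncomputable def Dt (f : ℝ × ℝ → ℝ) (z : ℝ × ℝ) : ℝ := fderiv ℝ f z (1, 0)

/-- The space derivative `∂ₓ f` of a function of `(t, x)`. -/
noncomputable def Dx (f : ℝ × ℝ → ℝ) (z : ℝ × ℝ) : ℝ := fderiv ℝ f z (0, 1)

section Rect

variable {T : ℝ}

lemma mem_rect {t x : ℝ} : (t, x) ∈ rect T ↔ t ∈ Icc (0 : ℝ) T ∧ x ∈ Icc (0 : ℝ) 1 := Iff.rfl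

lemma isCompact_rect (T : ℝ) : IsCompact (rect T) := isCompact_Icc.prod isCompact_Icc

lemma convex_rect (T : ℝ) : Convex ℝ (rect T) := (convex_Icc _ _).prod (convex_Icc _ _)

lemma measurableSet_rect (T : ℝ) : MeasurableSet (rect T) := (isCompact_rect T).measurableSet

lemma Ioo_prod_Ioo_subset_rect (T : ℝ) : Ioo (0 : ℝ) T ×ˢ Ioo (0 : ℝ) 1 ⊆ rect T :=
  prod_mono Ioo_subset_Icc_self Ioo_subset_Icc_self

lemma isOpen_Ioo_prod_Ioo (T : ℝ) : IsOpen (Ioo (0 : ℝ) T ×ˢ Ioo (0 : ℝ) 1) :=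
  isOpen_Ioo.prod isOpen_Ioo

lemma closure_Ioo_prod_Ioo (hT : 0 < T) : closure (Ioo (0 : ℝ) T ×ˢ Ioo (0 : ℝ) 1) = rect T := by
  rw [closure_prod_eq, closure_Ioo hT.ne, closure_Ioo zero_ne_one, rect]

lemma eqOn_rect_of_eqOn_Ioo_prod_Ioo (hT : 0 < T) {f g : ℝ × ℝ → ℝ} (hf : Continuous f)
    (hg : Continuous g) (h : EqOn f g (Ioo (0 : ℝ) T ×ˢ Ioo (0 : ℝ) 1)) : EqOn f g (rect T) :=
  closure_Ioo_prod_Ioo hT ▸ h.closure hf hg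

end Rect

section PartialDerivatives

variable {f : ℝ × ℝ → ℝ} {m n : WithTop ℕ∞}

lemma fderiv_apply_eq_Dt_Dx (f : ℝ × ℝ → ℝ) (z a : ℝ × ℝ) :
    fderiv ℝ f z a = a.1 * Dt f z + a.2 * Dx f z := by
  have ha : a = a.1 • ((1, 0) : ℝ × ℝ) + a.2 • ((0, 1) : ℝ × ℝ) := by ext <;> simp
  conv_lhs => rw [ha]
  simp only [map_add, map_smul, smul_eq_mul, Dt, Dx]

lemma contDiff_Dt (hf : ContDiff ℝ n f) (hmn : m + 1 ≤ n) : ContDiff ℝ m (Dt f) :=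
  (hf.fderiv_right hmn).clm_apply contDiff_const

lemma contDiff_Dx (hf : ContDiff ℝ n f) (hmn : m + 1 ≤ n) : ContDiff ℝ m (Dx f) :=
  (hf.fderiv_right hmn).clm_apply contDiff_const

lemma measurable_Dt (f : ℝ × ℝ → ℝ) : Measurable (Dt f) := measurable_fderiv_apply_const ℝ f _

lemma measurable_Dx (f : ℝ × ℝ → ℝ) : Measurable (Dx f) := measurable_fderiv_apply_const ℝ f _

lemma Dt_neg (f : ℝ × ℝ → ℝ) : Dt (-f) = -Dt f := by
  ext z; simp [Dt, fderiv_neg]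

lemma Dx_neg (f : ℝ × ℝ → ℝ) : Dx (-f) = -Dx f := by
  ext z; simp [Dx, fderiv_neg]

lemma hasDerivAt_prodMk_left (t x : ℝ) : HasDerivAt (fun s : ℝ => (s, x)) ((1 : ℝ), (0 : ℝ)) t :=
  (hasDerivAt_id t).prodMk (hasDerivAt_const t x)

lemma hasDerivAt_prodMk_right (t x : ℝ) : HasDerivAt (fun y : ℝ => (t, y)) ((0 : ℝ), (1 : ℝ)) x :=
  (hasDerivAt_const x t).prodMk (hasDerivAt_id x)

lemma hasDerivAt_Dt {t x : ℝ} (hf : DifferentiableAt ℝ f (t, x)) :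
    HasDerivAt (fun s => f (s, x)) (Dt f (t, x)) t :=
  hf.hasFDerivAt.comp_hasDerivAt t (hasDerivAt_prodMk_left t x)

lemma hasDerivAt_Dx {t x : ℝ} (hf : DifferentiableAt ℝ f (t, x)) :
    HasDerivAt (fun y => f (t, y)) (Dx f (t, x)) x :=
  hf.hasFDerivAt.comp_hasDerivAt x (hasDerivAt_prodMk_right t x)

lemma Dt_Dx_comm (hf : ContDiff ℝ 2 f) (z : ℝ × ℝ) : Dt (Dx f) z = Dx (Dt f) z := by
  have hsymm : IsSymmSndFDerivAt ℝ f z := hf.contDiffAt.isSymmSndFDerivAt (by simp)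
  have hdiff : DifferentiableAt ℝ (fderiv ℝ f) z :=
    (hf.fderiv_right (m := 1) (by norm_num)).differentiable one_ne_zero z
  have happly (a b : ℝ × ℝ) :
      fderiv ℝ (fun y => fderiv ℝ f y a) z b = fderiv ℝ (fderiv ℝ f) z b a := by
    rw [fderiv_clm_apply hdiff (differentiableAt_const a)]
    simp
  exact (happly _ _).trans ((hsymm.eq _ _).trans (happly _ _).symm)

end PartialDerivatives

/-! ### Maximum principles -/

lemma sub_mul_nonpos_of_isMaxOn {g : ℝ → ℝ} {s : Set ℝ} {x y g' : ℝ} (hs : Convex ℝ s)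
    (hmax : IsMaxOn g s x) (hg : HasDerivWithinAt g g' s x) (hx : x ∈ s) (hy : y ∈ s) :
    (y - x) * g' ≤ 0 := by
  simpa using hmax.localize.hasFDerivWithinAt_nonpos hg.hasFDerivWithinAt
    (sub_mem_posTangentConeAt_of_segment_subset (hs.segment_subset hx hy))

lemma deriv_deriv_nonpos_of_isLocalMax {g : ℝ → ℝ} {x : ℝ} (hmax : IsLocalMax g x)
    (hg : ContinuousAt g x) : deriv (deriv g) x ≤ 0 := by
  by_contra! hpos
  have hmin := isLocalMin_of_deriv_deriv_pos hpos hmax.deriv_eq_zero hg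
  have hconst : g =ᶠ[𝓝 x] fun _ => g x := by
    filter_upwards [hmax, hmin] with y h₁ h₂ using le_antisymm h₁ h₂
  simp [hconst.deriv.deriv_eq] at hpos

lemma eq_zero_and_nonpos_of_isLocalMax {g g₁ : ℝ → ℝ} {x g₂ : ℝ} (hmax : IsLocalMax g x)
    (hg : ∀ᶠ y in 𝓝 x, HasDerivAt g (g₁ y) y) (hg₁ : HasDerivAt g₁ g₂ x) :
    g₁ x = 0 ∧ g₂ ≤ 0 := by
  have hderiv : deriv g =ᶠ[𝓝 x] g₁ := hg.mono fun y hy => hy.deriv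
  refine ⟨hmax.hasDerivAt_eq_zero hg.self_of_nhds, ?_⟩
  rw [← hg₁.deriv, ← hderiv.deriv_eq]
  exact deriv_deriv_nonpos_of_isLocalMax hmax hg.self_of_nhds.continuousAt

/-- The parabolic boundary of `rect T`: the initial segment and the two lateral sides. -/
def parabolicBoundary (T : ℝ) : Set (ℝ × ℝ) := {z ∈ rect T | z.1 = 0 ∨ z.2 = 0 ∨ z.2 = 1}

lemma derivatives_of_isMaxOn_rect {T : ℝ} {f : ℝ × ℝ → ℝ} (hf : ContDiff ℝ 2 f) {z : ℝ × ℝ}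
    (hz : z ∈ rect T) (hz' : z ∉ parabolicBoundary T) (hmax : IsMaxOn f (rect T) z) :
    Dx f z = 0 ∧ Dx (Dx f) z ≤ 0 ∧ 0 ≤ Dt f z := by
  obtain ⟨t, x⟩ := z
  have hdiff : Differentiable ℝ f := hf.differentiable two_ne_zero
  have hdiff' : Differentiable ℝ (Dx f) :=
    (contDiff_Dx (m := 1) hf (by norm_num)).differentiable one_ne_zero
  obtain ⟨ht0, hx0, hx1⟩ : t ≠ 0 ∧ x ≠ 0 ∧ x ≠ 1 := by
    simpa [parabolicBoundary, hz] using hz'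
  have hx : x ∈ Ioo (0 : ℝ) 1 := ⟨hz.2.1.lt_of_ne' hx0, hz.2.2.lt_of_ne hx1⟩
  have hloc : IsLocalMax (fun y => f (t, y)) x := by
    filter_upwards [Ioo_mem_nhds hx.1 hx.2] with y hy
      using hmax (mem_rect.2 ⟨hz.1, Ioo_subset_Icc_self hy⟩)
  obtain ⟨h₁, h₂⟩ := eq_zero_and_nonpos_of_isLocalMax hloc
    (Eventually.of_forall fun y => hasDerivAt_Dx (hdiff (t, y))) (hasDerivAt_Dx (hdiff' (t, x)))
  have hmaxt : IsMaxOn (fun s => f (s, x)) (Icc 0 T) t := fun s hs => hmax (mem_rect.2 ⟨hs, hz.2⟩)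
  have h₃ := sub_mul_nonpos_of_isMaxOn (convex_Icc 0 T) hmaxt
    (hasDerivAt_Dt (hdiff (t, x))).hasDerivWithinAt hz.1 ⟨le_rfl, hz.1.1.trans hz.1.2⟩
  exact ⟨h₁, h₂, by nlinarith [hz.1.1.lt_of_ne' ht0]⟩

lemma le_on_rect_of_parabolic {T M : ℝ} {f : ℝ × ℝ → ℝ} (hf : ContDiff ℝ 2 f)
    (hpar : ∀ z ∈ rect T, Dx f z = 0 → Dx (Dx f) z ≤ 0 → Dt f z ≤ 0)
    (hbdry : ∀ z ∈ parabolicBoundary T, f z ≤ M) : ∀ z ∈ rect T, f z ≤ M := by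
  intro z hz
  have hT : 0 ≤ T := hz.1.1.trans hz.1.2
  refine le_of_forall_pos_le_add fun κ hκ => ?_
  -- Subtracting `c t` makes the time derivative strictly negative at an interior maximum.
  obtain ⟨c, hc, hcT⟩ : ∃ c > 0, c * T ≤ κ :=
    ⟨κ / (T + 1), by positivity, by rw [div_mul_eq_mul_div, div_le_iff₀ (by positivity)]; nlinarith⟩
  set g : ℝ × ℝ → ℝ := fun z => f z - c * z.1
  have hgC : ContDiff ℝ 2 g := hf.sub (contDiff_const.mul contDiff_fst)
  have hDg (z a : ℝ × ℝ) : fderiv ℝ g z a = fderiv ℝ f z a - c * a.1 := by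
    have h := (hf.differentiable two_ne_zero z).hasFDerivAt.sub
      ((hasFDerivAt_fst (𝕜 := ℝ) (p := z)).const_mul c)
    rw [show fderiv ℝ g z = _ from h.fderiv]
    simp
  have hDx : Dx g = Dx f := by ext z; simp [Dx, hDg]
  obtain ⟨z₀, hz₀, hmax⟩ := (isCompact_rect T).exists_isMaxOn ⟨z, hz⟩ hgC.continuous.continuousOn
  have hfz₀ : f z₀ ≤ M := by
    by_contra! hlt
    obtain ⟨h₁, h₂, h₃⟩ :=
      derivatives_of_isMaxOn_rect hgC hz₀ (fun h => (hbdry _ h).not_gt hlt) hmax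
    rw [hDx] at h₁ h₂
    have h₄ : Dt g z₀ = Dt f z₀ - c := by simp [Dt, hDg]
    linarith [hpar z₀ hz₀ h₁ h₂]
  have h₁ : f z - c * z.1 ≤ f z₀ - c * z₀.1 := hmax hz
  have h₂ : c * z.1 ≤ c * T := mul_le_mul_of_nonneg_left hz.1.2 hc.le
  have h₃ : 0 ≤ c * z₀.1 := mul_nonneg hc.le hz₀.1.1
  linarith

/-- The doubled function of Kružkov's and Crandall–Lions' comparison argument, with
penalisation parameter `σ` and slope `l` in time. -/
noncomputable def doubled (σ l : ℝ) (f g : ℝ × ℝ → ℝ) (w : ℝ × ℝ × ℝ) : ℝ :=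
  f (w.1, w.2.1) - g (w.1, w.2.2) - (w.2.1 - w.2.2) ^ 2 / (2 * σ) - l * w.1

lemma exists_isMaxOn_doubled {T σ l : ℝ} (hT : 0 ≤ T) {f g : ℝ × ℝ → ℝ}
    (hf : ContinuousOn f (rect T)) (hg : ContinuousOn g (rect T)) :
    ∃ t ∈ Icc (0 : ℝ) T, ∃ x ∈ Icc (0 : ℝ) 1, ∃ y ∈ Icc (0 : ℝ) 1,
      IsMaxOn (doubled σ l f g) (Icc 0 T ×ˢ Icc 0 1 ×ˢ Icc 0 1) (t, x, y) := by
  have hcont : ContinuousOn (doubled σ l f g)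
      (Icc (0 : ℝ) T ×ˢ Icc (0 : ℝ) 1 ×ˢ Icc (0 : ℝ) 1) := by
    refine ContinuousOn.sub (ContinuousOn.sub (ContinuousOn.sub ?_ ?_) (by fun_prop)) (by fun_prop)
    · exact hf.comp (by fun_prop) fun w hw => ⟨hw.1, hw.2.1⟩
    · exact hg.comp (by fun_prop) fun w hw => ⟨hw.1, hw.2.2⟩
  obtain ⟨⟨t, x, y⟩, ⟨ht, hx, hy⟩, hmax⟩ := (isCompact_Icc.prod
    (isCompact_Icc.prod isCompact_Icc)).exists_isMaxOn
    ⟨(0, 0, 0), ⟨le_rfl, hT⟩, ⟨le_rfl, zero_le_one⟩, ⟨le_rfl, zero_le_one⟩⟩ hcont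
  exact ⟨t, ht, x, hx, y, hy, hmax⟩

lemma sub_le_of_not_isMaxOn_doubled {T σ l : ℝ} (hσ : 0 < σ) (hl : 0 ≤ l) {f g : ℝ × ℝ → ℝ}
    (hf : ContinuousOn f (rect T)) (hg : ContinuousOn g (rect T))
    (hlip : ∀ t ∈ Icc (0 : ℝ) T, ∀ x ∈ Icc (0 : ℝ) 1, ∀ y ∈ Icc (0 : ℝ) 1,
      |f (t, x) - f (t, y)| ≤ |x - y|)
    (h0 : ∀ x ∈ Icc (0 : ℝ) 1, f (0, x) = g (0, x))
    (hnot : ∀ t ∈ Ioc (0 : ℝ) T, ∀ x ∈ Icc (0 : ℝ) 1, ∀ y ∈ Icc (0 : ℝ) 1, |x - y| ≤ 2 * σ →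
      ¬ IsMaxOn (doubled σ l f g) (Icc 0 T ×ˢ Icc 0 1 ×ˢ Icc 0 1) (t, x, y)) :
    ∀ z ∈ rect T, f z - g z ≤ l * T + σ := by
  rintro ⟨t', x'⟩ hz
  obtain ⟨t, ht, x, hx, y, hy, hmax⟩ :=
    exists_isMaxOn_doubled (σ := σ) (l := l) (hz.1.1.trans hz.1.2) hf hg
  have hmax' : ∀ t₁ ∈ Icc (0 : ℝ) T, ∀ x₁ ∈ Icc (0 : ℝ) 1,
      f (t₁, x₁) - g (t₁, x₁) - l * t₁ ≤ f (t, x) - g (t, y) - (x - y) ^ 2 / (2 * σ) - l * t := by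
    intro t₁ ht₁ x₁ hx₁
    simpa [doubled] using hmax (a := (t₁, x₁, x₁)) ⟨ht₁, hx₁, hx₁⟩
  have hfxy := (le_abs_self _).trans (hlip t ht x hx y hy)
  rcases ht.1.eq_or_lt with rfl | htpos
  · have hpen : |x - y| - (x - y) ^ 2 / (2 * σ) ≤ σ := by
      rw [sub_le_iff_le_add, ← sub_le_iff_le_add', le_div_iff₀ (by positivity), ← sq_abs (x - y)]
      nlinarith [sq_nonneg (|x - y| - σ)]
    have hlt' : l * t' ≤ l * T := mul_le_mul_of_nonneg_left hz.1.2 hl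
    linarith [hmax' t' hz.1 x' hz.2, h0 y hy]
  · have hpen : (x - y) ^ 2 / (2 * σ) ≤ |x - y| := by linarith [hmax' t ht y hy]
    rw [div_le_iff₀ (by positivity), ← sq_abs] at hpen
    refine absurd hmax (hnot t ⟨htpos, ht.2⟩ x hx y hy ?_)
    by_contra! h
    nlinarith [abs_nonneg (x - y)]

/-! ### Potentials -/

/-- `U` is a primitive on `rect T` of the differential form `m dt + v dx`. -/
def IsPotential (T : ℝ) (m v U : ℝ × ℝ → ℝ) : Prop :=
  ∀ z ∈ rect T, HasFDerivWithinAt U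
    (m z • ContinuousLinearMap.fst ℝ ℝ ℝ + v z • ContinuousLinearMap.snd ℝ ℝ ℝ) (rect T) z

lemma exists_isPotential {T : ℝ} {m v : ℝ × ℝ → ℝ} (hm : Differentiable ℝ m)
    (hv : Differentiable ℝ v) (hclosed : ∀ z ∈ rect T, Dx m z = Dt v z) :
    ∃ U, IsPotential T m v U ∧ U (0, 0) = 0 := by
  obtain ⟨U, hU⟩ := (convex_rect T).exists_forall_hasFDerivWithinAt_of_hasFDerivWithinAt_symmetric
    (ω := fun z => m z • ContinuousLinearMap.fst ℝ ℝ ℝ + v z • ContinuousLinearMap.snd ℝ ℝ ℝ)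
    (fun z _ => (((hm z).hasFDerivAt.smul_const _).add
      ((hv z).hasFDerivAt.smul_const _)).hasFDerivWithinAt)
    (by
      intro z hz a _ b _
      simp only [add_apply, ContinuousLinearMap.smulRight_apply, smul_apply,
        ContinuousLinearMap.coe_fst', ContinuousLinearMap.coe_snd', smul_eq_mul,
        fderiv_apply_eq_Dt_Dx, hclosed z hz]
      ring)
  exact ⟨fun z => U z - U (0, 0), fun z hz => (hU z hz).sub_const _, sub_self _⟩

namespace IsPotential

variable {T : ℝ} {m v U : ℝ × ℝ → ℝ}

lemma hasDerivWithinAt_time (hU : IsPotential T m v U) {t x : ℝ} (hz : (t, x) ∈ rect T) :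
    HasDerivWithinAt (fun s => U (s, x)) (m (t, x)) (Icc 0 T) t := by
  have h : HasDerivWithinAt (fun s => U (s, x)) _ (Icc 0 T) t :=
    (hU _ hz).comp_hasDerivWithinAt t (hasDerivAt_prodMk_left t x).hasDerivWithinAt
      fun s hs => mem_rect.2 ⟨hs, hz.2⟩
  simpa using h

lemma hasDerivWithinAt_space (hU : IsPotential T m v U) {t x : ℝ} (hz : (t, x) ∈ rect T) :
    HasDerivWithinAt (fun y => U (t, y)) (v (t, x)) (Icc 0 1) x := by
  have h : HasDerivWithinAt (fun y => U (t, y)) _ (Icc 0 1) x :=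
    (hU _ hz).comp_hasDerivWithinAt x (hasDerivAt_prodMk_right t x).hasDerivWithinAt
      fun s hs => mem_rect.2 ⟨hz.1, hs⟩
  simpa using h

lemma continuousOn (hU : IsPotential T m v U) : ContinuousOn U (rect T) :=
  fun z hz => (hU z hz).continuousWithinAt

lemma abs_sub_le (hU : IsPotential T m v U) {A B : ℝ} (hm : ∀ z ∈ rect T, |m z| ≤ A)
    (hv : ∀ z ∈ rect T, |v z| ≤ B) {z z' : ℝ × ℝ} (hz : z ∈ rect T) (hz' : z' ∈ rect T) :
    |U z' - U z| ≤ (A + B) * ‖z' - z‖ := by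
  have hAB : 0 ≤ A + B :=
    add_nonneg ((abs_nonneg _).trans (hm z hz)) ((abs_nonneg _).trans (hv z hz))
  refine (convex_rect T).norm_image_sub_le_of_norm_hasFDerivWithin_le hU (fun y hy => ?_) hz hz'
  refine ContinuousLinearMap.opNorm_le_bound _ hAB fun a => ?_
  simp only [add_apply, smul_apply, ContinuousLinearMap.coe_fst', ContinuousLinearMap.coe_snd',
    smul_eq_mul, Real.norm_eq_abs]
  calc |m y * a.1 + v y * a.2| ≤ |m y| * |a.1| + |v y| * |a.2| := by
        rw [← abs_mul, ← abs_mul]; exact abs_add_le _ _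
    _ ≤ A * ‖a‖ + B * ‖a‖ := by
        gcongr
        exacts [(abs_nonneg _).trans (hm y hy), hm y hy, norm_fst_le a,
          (abs_nonneg _).trans (hv y hy), hv y hy, norm_snd_le a]
    _ = (A + B) * ‖a‖ := by ring

end IsPotential

/-! ### The Robin problem -/

lemma J_mem_Icc {a : ℝ} (ha : a ∈ Icc (0 : ℝ) 1) : J a ∈ Icc (0 : ℝ) 1 := by
  unfold J; constructor <;> nlinarith [ha.1, ha.2]

lemma hasDerivAt_J (a : ℝ) : HasDerivAt J (1 - 2 * a) a := by
  refine ((hasDerivAt_id a).mul ((hasDerivAt_id a).const_sub 1)).congr_deriv ?_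
  simp only [id]; ring

/-- `g` is a nondecreasing boundary flux selecting the density `v`: along it, the balance
`p J(a) + g(a)` changes sign from nonpositive to nonnegative at `v`. For the Robin condition
`g(a) = (α + γ) a - α` the density `v` is the stationary boundary density. -/
structure IsBoundaryFlux (p : ℝ) (g : ℝ → ℝ) (v : ℝ) : Prop where
  mem : v ∈ Icc (0 : ℝ) 1
  monotoneOn : MonotoneOn g (Icc 0 1)
  nonpos : ∀ a ∈ Icc 0 v, p * J a + g a ≤ 0
  nonneg : ∀ a ∈ Icc v 1, 0 ≤ p * J a + g a

lemma IsBoundaryFlux.abs_apply_le {p v : ℝ} {g : ℝ → ℝ} (B : IsBoundaryFlux p g v) {a : ℝ}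
    (ha : a ∈ Icc (0 : ℝ) 1) : |g a| ≤ |g 0| + |g 1| := by
  have h₀ : g 0 ≤ g a := B.monotoneOn ⟨le_rfl, zero_le_one⟩ ha ha.1
  have h₁ : g a ≤ g 1 := B.monotoneOn ha ⟨zero_le_one, le_rfl⟩ ha.2
  rw [abs_le]
  constructor <;>
    linarith [neg_abs_le (g 0), le_abs_self (g 1), abs_nonneg (g 0), abs_nonneg (g 1)]

lemma balance_eq_mul_sub_mul_sub {p α γ r : ℝ} (hp : p ≠ 0)
    (hr : r ^ 2 = (p - α + γ) ^ 2 + 4 * α * γ) (a : ℝ) :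
    p * J a + ((α + γ) * a - α) =
      p * ((a - (p + α + γ - r) / (2 * p)) * ((p + α + γ + r) / (2 * p) - a)) := by
  unfold J
  field_simp
  linear_combination (-1) * hr

lemma isBoundaryFlux_robin {p α γ v : ℝ} (hp : 0 < p) (hα : 0 ≤ α) (hγ : 0 ≤ γ)
    (hv : v = (p + α + γ - √((p - α + γ) ^ 2 + 4 * α * γ)) / (2 * p)) :
    IsBoundaryFlux p (fun a => (α + γ) * a - α) v := by
  have hr := Real.sq_sqrt (show 0 ≤ (p - α + γ) ^ 2 + 4 * α * γ by positivity)
  have hr0 := Real.sqrt_nonneg ((p - α + γ) ^ 2 + 4 * α * γ)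
  generalize √((p - α + γ) ^ 2 + 4 * α * γ) = r at hv hr hr0
  have hfactor := balance_eq_mul_sub_mul_sub hp.ne' hr
  have hv'pos : 0 < (p + α + γ + r) / (2 * p) := by positivity
  have hle : v ≤ (p + α + γ + r) / (2 * p) := by rw [hv]; gcongr; linarith
  rw [← hv] at hfactor
  generalize (p + α + γ + r) / (2 * p) = v' at hfactor hv'pos hle
  have hv0 : 0 ≤ v := by
    have h := hfactor 0
    simp only [J] at h
    by_contra! hneg
    nlinarith [mul_pos hp (mul_pos_of_neg_of_neg hneg (neg_neg_of_pos hv'pos))]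
  have h₁ : 0 ≤ (1 - v) * (v' - 1) := by
    have h := hfactor 1
    simp only [J] at h
    exact nonneg_of_mul_nonneg_right (by linarith) hp
  have hv1 : v ≤ 1 := by by_contra! h; nlinarith
  have hv'1 : 1 ≤ v' := by by_contra! h; nlinarith
  refine ⟨⟨hv0, hv1⟩, fun a _ b _ hab => by gcongr, fun a ha => ?_, fun a ha => ?_⟩
  · rw [hfactor]
    exact mul_nonpos_of_nonneg_of_nonpos hp.le
      (mul_nonpos_of_nonpos_of_nonneg (by linarith [ha.2]) (by linarith [ha.2]))
  · rw [hfactor]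
    exact mul_nonneg hp.le (mul_nonneg (by linarith [ha.1]) (by linarith [ha.2]))

/-- The negative `ε ∂ₓv - p J(v)` of the viscous flux, so that the conservation law reads
`∂ₜ v = ∂ₓ (flux ε p v)`. -/
noncomputable def flux (ε p : ℝ) (v : ℝ × ℝ → ℝ) (z : ℝ × ℝ) : ℝ := ε * Dx v z - p * J (v z)

lemma contDiff_flux {ε p : ℝ} {v : ℝ × ℝ → ℝ} {m n : WithTop ℕ∞} (hv : ContDiff ℝ n v)
    (hmn : m + 1 ≤ n) : ContDiff ℝ m (flux ε p v) := by
  have hDx := contDiff_Dx hv hmn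
  have hv' : ContDiff ℝ m v := hv.of_le (le_self_add.trans hmn)
  unfold flux J
  fun_prop

lemma fderiv_flux {ε p : ℝ} {v : ℝ × ℝ → ℝ} (hv : ContDiff ℝ 2 v) (z a : ℝ × ℝ) :
    fderiv ℝ (flux ε p v) z a =
      ε * fderiv ℝ (Dx v) z a - p * ((1 - 2 * v z) * fderiv ℝ v z a) := by
  have hDx : HasFDerivAt (Dx v) (fderiv ℝ (Dx v) z) z :=
    ((contDiff_Dx (m := 1) hv (by norm_num)).differentiable one_ne_zero z).hasFDerivAt
  have hJ := (hasDerivAt_J (v z)).comp_hasFDerivAt z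
    (hv.differentiable two_ne_zero z).hasFDerivAt
  rw [show fderiv ℝ (flux ε p v) z = _ from ((hDx.const_mul ε).sub (hJ.const_mul p)).fderiv]
  simp

/-- `v` is a `[0, 1]`-valued classical solution on `rect T` of `∂ₜ v = ε ∂ₓ² v - p ∂ₓ J(v)` with
initial datum `v0`, whose flux at the left end is `g₀` of the density `v` and at the right end
`g₁` of the hole density `1 - v`. Read in terms of holes, both ends obey the same kind of
boundary law. -/
structure IsRobinSol (T p : ℝ) (g₀ g₁ : ℝ → ℝ) (v0 : ℝ → ℝ) (ε : ℝ) (v : ℝ × ℝ → ℝ) :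
    Prop where
  contDiff : ContDiff ℝ 3 v
  mem : ∀ z ∈ rect T, v z ∈ Icc (0 : ℝ) 1
  pde : ∀ z ∈ rect T, Dt v z = Dx (flux ε p v) z
  init : ∀ x ∈ Icc (0 : ℝ) 1, v (0, x) = v0 x
  left : ∀ t ∈ Icc (0 : ℝ) T, flux ε p v (t, 0) = g₀ (v (t, 0))
  right : ∀ t ∈ Icc (0 : ℝ) T, flux ε p v (t, 1) = g₁ (1 - v (t, 1))

namespace IsRobinSol

variable {T p ε : ℝ} {g₀ g₁ v0 : ℝ → ℝ} {v : ℝ × ℝ → ℝ}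

lemma contDiff_flux (S : IsRobinSol T p g₀ g₁ v0 ε v) : ContDiff ℝ 2 (flux ε p v) :=
  _root_.contDiff_flux S.contDiff (by norm_num)

lemma contDiff_Dx (S : IsRobinSol T p g₀ g₁ v0 ε v) : ContDiff ℝ 2 (Dx v) :=
  _root_.contDiff_Dx S.contDiff (by norm_num)

lemma differentiable (S : IsRobinSol T p g₀ g₁ v0 ε v) : Differentiable ℝ v :=
  S.contDiff.differentiable three_ne_zero

lemma differentiable_flux (S : IsRobinSol T p g₀ g₁ v0 ε v) : Differentiable ℝ (flux ε p v) :=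
  S.contDiff_flux.differentiable two_ne_zero

lemma abs_le_one (S : IsRobinSol T p g₀ g₁ v0 ε v) {z : ℝ × ℝ} (hz : z ∈ rect T) : |v z| ≤ 1 :=
  abs_le.2 ⟨by linarith [(S.mem z hz).1], (S.mem z hz).2⟩

lemma one_sub_mem (S : IsRobinSol T p g₀ g₁ v0 ε v) {z : ℝ × ℝ} (hz : z ∈ rect T) :
    1 - v z ∈ Icc (0 : ℝ) 1 :=
  ⟨by linarith [(S.mem z hz).2], by linarith [(S.mem z hz).1]⟩

lemma Dt_flux (S : IsRobinSol T p g₀ g₁ v0 ε v) (hT : 0 < T) {z : ℝ × ℝ} (hz : z ∈ rect T) :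
    Dt (flux ε p v) z =
      ε * Dx (Dx (flux ε p v)) z - p * ((1 - 2 * v z) * Dx (flux ε p v) z) := by
  have hv2 : ContDiff ℝ 2 v := S.contDiff.of_le (by norm_num)
  have hDxm : ContDiff ℝ 1 (Dx (flux ε p v)) := _root_.contDiff_Dx S.contDiff_flux (by norm_num)
  have hleft := (contDiff_Dt (m := 1) S.contDiff_flux (by norm_num)).continuous
  have hright : Continuous fun z => ε * Dx (Dx (flux ε p v)) z
      - p * ((1 - 2 * v z) * Dx (flux ε p v) z) := by
    have h₁ := (_root_.contDiff_Dx (m := 0) hDxm (by norm_num)).continuous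
    have h₂ := hDxm.continuous
    have h₃ := hv2.continuous
    fun_prop
  refine eqOn_rect_of_eqOn_Ioo_prod_Ioo hT hleft hright (fun z hz => ?_) hz
  have hDt : Dt v =ᶠ[𝓝 z] Dx (flux ε p v) := by
    filter_upwards [(isOpen_Ioo_prod_Ioo T).mem_nhds hz] with y hy
      using S.pde y (Ioo_prod_Ioo_subset_rect T hy)
  have hDxDt : Dx (Dt v) z = Dx (Dx (flux ε p v)) z := by simp only [Dx, hDt.fderiv_eq]
  calc Dt (flux ε p v) z = ε * Dt (Dx v) z - p * ((1 - 2 * v z) * Dt v z) := fderiv_flux hv2 z _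
    _ = _ := by rw [Dt_Dx_comm hv2, hDxDt, S.pde z (Ioo_prod_Ioo_subset_rect T hz)]

lemma Dx_init (S : IsRobinSol T p g₀ g₁ v0 ε v) {x : ℝ} (hx : x ∈ Icc (0 : ℝ) 1) :
    Dx v (0, x) = derivWithin v0 (Icc 0 1) x := by
  have h : HasDerivWithinAt v0 (Dx v (0, x)) (Icc 0 1) x :=
    (hasDerivAt_Dx (S.differentiable (0, x))).hasDerivWithinAt.congr
      (fun y hy => (S.init y hy).symm) (S.init x hx).symm
  exact (h.derivWithin (uniqueDiffOn_Icc zero_lt_one x hx)).symm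

lemma exists_abs_derivWithin_init_le (S : IsRobinSol T p g₀ g₁ v0 ε v) :
    ∃ C, ∀ x ∈ Icc (0 : ℝ) 1, |derivWithin v0 (Icc 0 1) x| ≤ C := by
  have hcont : ContinuousOn (fun x : ℝ => Dx v (0, x)) (Icc 0 1) :=
    (S.contDiff_Dx.continuous.comp (by fun_prop)).continuousOn
  obtain ⟨C, hC⟩ := isCompact_Icc.exists_bound_of_continuousOn hcont
  exact ⟨C, fun x hx => S.Dx_init hx ▸ hC x hx⟩

lemma abs_flux_le_of_parabolicBoundary (S : IsRobinSol T p g₀ g₁ v0 ε v) (hT : 0 < T)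
    (hε : 0 ≤ ε) {M : ℝ} (hM : ∀ z ∈ parabolicBoundary T, |flux ε p v z| ≤ M) :
    ∀ z ∈ rect T, |flux ε p v z| ≤ M := by
  refine fun z hz => abs_le'.2 ⟨?_, ?_⟩
  · refine le_on_rect_of_parabolic S.contDiff_flux (fun z hz h₁ h₂ => ?_)
      (fun z hz => (abs_le.1 (hM z hz)).2) z hz
    rw [S.Dt_flux hT hz, h₁]
    nlinarith
  · refine le_on_rect_of_parabolic (f := -flux ε p v) S.contDiff_flux.neg (fun z hz h₁ h₂ => ?_)
      (fun z hz => by simpa using neg_le.1 (abs_le.1 (hM z hz)).1) z hz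
    simp only [Dx_neg, Dt_neg, Pi.neg_apply, neg_eq_zero] at h₁ h₂ ⊢
    rw [S.Dt_flux hT hz, h₁]
    nlinarith

lemma abs_flux_le (S : IsRobinSol T p g₀ g₁ v0 ε v) {vm vp : ℝ} (B₀ : IsBoundaryFlux p g₀ vm)
    (B₁ : IsBoundaryFlux p g₁ (1 - vp)) (hT : 0 < T) (hp : 0 ≤ p) (hε : 0 ≤ ε) (hε1 : ε ≤ 1)
    {C : ℝ} (hC : ∀ x ∈ Icc (0 : ℝ) 1, |derivWithin v0 (Icc 0 1) x| ≤ C) :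
    ∀ z ∈ rect T, |flux ε p v z| ≤ |g₀ 0| + |g₀ 1| + (|g₁ 0| + |g₁ 1|) + (C + p) := by
  have hC0 : 0 ≤ C := (abs_nonneg _).trans (hC 0 ⟨le_rfl, zero_le_one⟩)
  refine S.abs_flux_le_of_parabolicBoundary hT hε ?_
  rintro ⟨t, x⟩ ⟨hz, rfl | rfl | rfl⟩
  · have hJ := J_mem_Icc (S.mem _ hz)
    have hinit : |flux ε p v (0, x)| ≤ C + p := by
      have hDx := abs_le.1 (hC x hz.2)
      rw [flux, S.Dx_init hz.2, abs_le]
      constructor <;> nlinarith [hJ.1, hJ.2, hDx.1, hDx.2]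
    linarith [abs_nonneg (g₀ 0), abs_nonneg (g₀ 1), abs_nonneg (g₁ 0), abs_nonneg (g₁ 1)]
  · rw [S.left t hz.1]
    linarith [B₀.abs_apply_le (S.mem _ hz), abs_nonneg (g₁ 0), abs_nonneg (g₁ 1)]
  · rw [S.right t hz.1]
    linarith [B₁.abs_apply_le (S.one_sub_mem hz), abs_nonneg (g₀ 0), abs_nonneg (g₀ 1)]

lemma exists_isPotential (S : IsRobinSol T p g₀ g₁ v0 ε v) :
    ∃ U, IsPotential T (flux ε p v) v U ∧ U (0, 0) = 0 :=
  _root_.exists_isPotential S.differentiable_flux S.differentiable fun z hz => (S.pde z hz).symm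

end IsRobinSol

/-! ### Comparison of potentials -/

section Touching

variable {T p ε vm vp t x K : ℝ} {g₀ g₁ v0 φ φ' : ℝ → ℝ} {v U : ℝ × ℝ → ℝ}

lemma flux_le_of_touch_above (B₀ : IsBoundaryFlux p g₀ vm) (B₁ : IsBoundaryFlux p g₁ (1 - vp))
    (S : IsRobinSol T p g₀ g₁ v0 ε v) (hU : IsPotential T (flux ε p v) v U) (hε : 0 ≤ ε)
    (hz : (t, x) ∈ rect T) (hφ : ∀ y, HasDerivAt φ (φ' y) y) (hφ' : HasDerivAt φ' K x)
    (hK : 0 ≤ K) (h₀ : φ' 0 ≤ vm) (h₁ : vp ≤ φ' 1)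
    (hmax : IsMaxOn (fun y => U (t, y) - φ y) (Icc 0 1) x) :
    flux ε p v (t, x) ≤ ε * K - p * J (φ' x) := by
  have hderiv (y : ℝ) (hy : y ∈ Icc (0 : ℝ) 1) :
      HasDerivWithinAt (fun y => U (t, y) - φ y) (v (t, y) - φ' y) (Icc 0 1) y :=
    (hU.hasDerivWithinAt_space (mem_rect.2 ⟨hz.1, hy⟩)).sub (hφ y).hasDerivWithinAt
  have hsign (y : ℝ) (hy : y ∈ Icc (0 : ℝ) 1) : (y - x) * (v (t, x) - φ' x) ≤ 0 :=
    sub_mul_nonpos_of_isMaxOn (convex_Icc 0 1) hmax (hderiv x hz.2) hz.2 hy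
  have hv := S.mem _ hz
  have hεK : 0 ≤ ε * K := mul_nonneg hε hK
  rcases hz.2.1.eq_or_lt with rfl | hx0
  · have hvφ : v (t, 0) ≤ φ' 0 := by linarith [hsign 1 ⟨zero_le_one, le_rfl⟩]
    have hmono := B₀.monotoneOn hv ⟨hv.1.trans hvφ, h₀.trans B₀.mem.2⟩ hvφ
    have hnonpos := B₀.nonpos (φ' 0) ⟨hv.1.trans hvφ, h₀⟩
    rw [S.left t hz.1]
    linarith
  rcases hz.2.2.eq_or_lt with rfl | hx1
  · have hvφ : φ' 1 ≤ v (t, 1) := by linarith [hsign 0 ⟨le_rfl, zero_le_one⟩]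
    have hmem : 1 - φ' 1 ∈ Icc 0 (1 - vp) := ⟨by linarith [hv.2], by linarith⟩
    have hmono := B₁.monotoneOn (S.one_sub_mem hz) ⟨hmem.1, hmem.2.trans B₁.mem.2⟩
      (sub_le_sub_left hvφ 1)
    have hnonpos := B₁.nonpos _ hmem
    have hJ : J (1 - φ' 1) = J (φ' 1) := by unfold J; ring
    rw [S.right t hz.1, ← hJ]
    linarith
  · have hIcc : ∀ᶠ y in 𝓝 x, y ∈ Ioo (0 : ℝ) 1 := Ioo_mem_nhds hx0 hx1
    have hloc : IsLocalMax (fun y => U (t, y) - φ y) x := by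
      filter_upwards [hIcc] with y hy using hmax (Ioo_subset_Icc_self hy)
    obtain ⟨hvφ, hDx⟩ := eq_zero_and_nonpos_of_isLocalMax hloc
      (hIcc.mono fun y hy => (hderiv y (Ioo_subset_Icc_self hy)).hasDerivAt
        (Icc_mem_nhds hy.1 hy.2))
      ((hasDerivAt_Dx (S.differentiable (t, x))).sub hφ')
    rw [flux, sub_eq_zero.1 hvφ]
    exact sub_le_sub_right (mul_le_mul_of_nonneg_left (sub_nonpos.1 hDx) hε) _

lemma le_flux_of_touch_below (B₀ : IsBoundaryFlux p g₀ vm) (B₁ : IsBoundaryFlux p g₁ (1 - vp))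
    (S : IsRobinSol T p g₀ g₁ v0 ε v) (hU : IsPotential T (flux ε p v) v U) (hε : 0 ≤ ε)
    (hz : (t, x) ∈ rect T) (hφ : ∀ y, HasDerivAt φ (φ' y) y) (hφ' : HasDerivAt φ' (-K) x)
    (hK : 0 ≤ K) (h₀ : vm ≤ φ' 0) (h₁ : φ' 1 ≤ vp)
    (hmax : IsMaxOn (fun y => φ y - U (t, y)) (Icc 0 1) x) :
    -(ε * K) - p * J (φ' x) ≤ flux ε p v (t, x) := by
  have hderiv (y : ℝ) (hy : y ∈ Icc (0 : ℝ) 1) :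
      HasDerivWithinAt (fun y => φ y - U (t, y)) (φ' y - v (t, y)) (Icc 0 1) y :=
    (hφ y).hasDerivWithinAt.sub (hU.hasDerivWithinAt_space (mem_rect.2 ⟨hz.1, hy⟩))
  have hsign (y : ℝ) (hy : y ∈ Icc (0 : ℝ) 1) : (y - x) * (φ' x - v (t, x)) ≤ 0 :=
    sub_mul_nonpos_of_isMaxOn (convex_Icc 0 1) hmax (hderiv x hz.2) hz.2 hy
  have hv := S.mem _ hz
  have hεK : 0 ≤ ε * K := mul_nonneg hε hK
  rcases hz.2.1.eq_or_lt with rfl | hx0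
  · have hvφ : φ' 0 ≤ v (t, 0) := by linarith [hsign 1 ⟨zero_le_one, le_rfl⟩]
    have hmono := B₀.monotoneOn ⟨B₀.mem.1.trans h₀, hvφ.trans hv.2⟩ hv hvφ
    have hnonneg := B₀.nonneg (φ' 0) ⟨h₀, hvφ.trans hv.2⟩
    rw [S.left t hz.1]
    linarith
  rcases hz.2.2.eq_or_lt with rfl | hx1
  · have hvφ : v (t, 1) ≤ φ' 1 := by linarith [hsign 0 ⟨le_rfl, zero_le_one⟩]
    have hmem : 1 - φ' 1 ∈ Icc (1 - vp) 1 := ⟨by linarith, by linarith [hv.1]⟩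
    have hmono := B₁.monotoneOn ⟨B₁.mem.1.trans hmem.1, hmem.2⟩ (S.one_sub_mem hz)
      (sub_le_sub_left hvφ 1)
    have hnonneg := B₁.nonneg _ hmem
    have hJ : J (1 - φ' 1) = J (φ' 1) := by unfold J; ring
    rw [S.right t hz.1, ← hJ]
    linarith
  · have hIcc : ∀ᶠ y in 𝓝 x, y ∈ Ioo (0 : ℝ) 1 := Ioo_mem_nhds hx0 hx1
    have hloc : IsLocalMax (fun y => φ y - U (t, y)) x := by
      filter_upwards [hIcc] with y hy using hmax (Ioo_subset_Icc_self hy)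
    obtain ⟨hvφ, hDx⟩ := eq_zero_and_nonpos_of_isLocalMax hloc
      (hIcc.mono fun y hy => (hderiv y (Ioo_subset_Icc_self hy)).hasDerivAt
        (Icc_mem_nhds hy.1 hy.2))
      (hφ'.sub (hasDerivAt_Dx (S.differentiable (t, x))))
    rw [flux, ← sub_eq_zero.1 hvφ, ← mul_neg]
    exact sub_le_sub_right (mul_le_mul_of_nonneg_left (sub_nonpos.1 hDx) hε) _

end Touching

section Comparison

/-- A quadratic polynomial whose slope interpolates linearly between `vm` at `0` and `vp` at `1`.
Subtracting it from a potential makes the lateral boundary conditions compatible with the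
quadratic penalisation of `doubled`. -/
noncomputable def corrector (vm vp y : ℝ) : ℝ := vm * y + (vp - vm) * (y ^ 2 / 2)

/-- The derivative of `corrector`. -/
noncomputable def slopeCorrector (vm vp y : ℝ) : ℝ := vm + (vp - vm) * y

variable {T p ε η vm vp σ : ℝ} {g₀ g₁ v0 : ℝ → ℝ} {v v₁ v₂ U U₁ U₂ : ℝ × ℝ → ℝ}

lemma hasDerivAt_corrector (vm vp y : ℝ) :
    HasDerivAt (corrector vm vp) (slopeCorrector vm vp y) y := by
  refine (((hasDerivAt_id y).const_mul vm).add
    ((((hasDerivAt_id y).pow 2).div_const 2).const_mul (vp - vm))).congr_deriv ?_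
  simp only [slopeCorrector, id]
  ring

lemma hasDerivAt_slopeCorrector (vm vp y : ℝ) :
    HasDerivAt (slopeCorrector vm vp) (vp - vm) y :=
  (((hasDerivAt_id y).const_mul (vp - vm)).const_add vm).congr_deriv (mul_one _)

lemma slopeCorrector_mem (hvm : vm ∈ Icc (0 : ℝ) 1) (hvp : vp ∈ Icc (0 : ℝ) 1) {y : ℝ}
    (hy : y ∈ Icc (0 : ℝ) 1) : slopeCorrector vm vp y ∈ Icc (0 : ℝ) 1 := by
  have h := convex_Icc (0 : ℝ) 1 hvm hvp (sub_nonneg.2 hy.2) hy.1 (sub_add_cancel 1 y)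
  convert h using 1
  simp only [slopeCorrector, smul_eq_mul]
  ring

lemma abs_slopeCorrector_sub_le (hvm : vm ∈ Icc (0 : ℝ) 1) (hvp : vp ∈ Icc (0 : ℝ) 1) (x y : ℝ) :
    |slopeCorrector vm vp x - slopeCorrector vm vp y| ≤ |x - y| := by
  have h : |vp - vm| ≤ 1 := abs_le.2 ⟨by linarith [hvm.2, hvp.1], by linarith [hvm.1, hvp.2]⟩
  calc |slopeCorrector vm vp x - slopeCorrector vm vp y| = |vp - vm| * |x - y| := by
        rw [← abs_mul]; congr 1; unfold slopeCorrector; ring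
    _ ≤ |x - y| := mul_le_of_le_one_left (abs_nonneg _) h

lemma J_add_sub_J_add_le {a b q : ℝ} (ha : a ∈ Icc (0 : ℝ) 1) (hb : b ∈ Icc (0 : ℝ) 1)
    (hq : |q| ≤ 2) : J (b + q) - J (a + q) ≤ 5 * |b - a| := by
  obtain ⟨hq₁, hq₂⟩ := abs_le.1 hq
  have h : |1 - a - b - 2 * q| ≤ 5 :=
    abs_le.2 ⟨by linarith [ha.2, hb.2], by linarith [ha.1, hb.1]⟩
  calc J (b + q) - J (a + q) = (1 - a - b - 2 * q) * (b - a) := by unfold J; ring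
    _ ≤ |1 - a - b - 2 * q| * |b - a| := by rw [← abs_mul]; exact le_abs_self _
    _ ≤ 5 * |b - a| := by gcongr

lemma IsPotential.abs_sub_corrector_sub_le {m : ℝ × ℝ → ℝ} (hU : IsPotential T m v U)
    (hv : ∀ z ∈ rect T, v z ∈ Icc (0 : ℝ) 1) (hvm : vm ∈ Icc (0 : ℝ) 1)
    (hvp : vp ∈ Icc (0 : ℝ) 1) {t x y : ℝ} (ht : t ∈ Icc (0 : ℝ) T) (hx : x ∈ Icc (0 : ℝ) 1)
    (hy : y ∈ Icc (0 : ℝ) 1) :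
    |U (t, x) - corrector vm vp x - (U (t, y) - corrector vm vp y)| ≤ |x - y| := by
  have h := (convex_Icc (0 : ℝ) 1).norm_image_sub_le_of_norm_hasDerivWithin_le
    (f := fun y => U (t, y) - corrector vm vp y)
    (f' := fun y => v (t, y) - slopeCorrector vm vp y) (C := 1)
    (fun y hy => (hU.hasDerivWithinAt_space (mem_rect.2 ⟨ht, hy⟩)).sub
      (hasDerivAt_corrector vm vp y).hasDerivWithinAt) (fun y hy => ?_) hy hx
  · simpa using h
  · have h₁ := hv (t, y) (mem_rect.2 ⟨ht, hy⟩)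
    have h₂ := slopeCorrector_mem hvm hvp hy
    rw [Real.norm_eq_abs, abs_le]
    constructor <;> linarith [h₁.1, h₁.2, h₂.1, h₂.2]

lemma le_sub_of_isMaxOn_doubled {l t x y f' g' : ℝ} {f g : ℝ × ℝ → ℝ} (ht : t ∈ Ioc (0 : ℝ) T)
    (hx : x ∈ Icc (0 : ℝ) 1) (hy : y ∈ Icc (0 : ℝ) 1)
    (hf : HasDerivWithinAt (fun s => f (s, x)) f' (Icc 0 T) t)
    (hg : HasDerivWithinAt (fun s => g (s, y)) g' (Icc 0 T) t)
    (hmax : IsMaxOn (doubled σ l f g) (Icc 0 T ×ˢ Icc 0 1 ×ˢ Icc 0 1) (t, x, y)) :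
    l ≤ f' - g' := by
  have hderiv : HasDerivWithinAt (fun s => doubled σ l f g (s, x, y)) (f' - g' - l) (Icc 0 T) t :=
    ((hf.sub hg).sub_const ((x - y) ^ 2 / (2 * σ))).sub
      (((hasDerivWithinAt_id t _).const_mul l).congr_deriv (mul_one l))
  have hmax' : IsMaxOn (fun s => doubled σ l f g (s, x, y)) (Icc 0 T) t :=
    fun s hs => hmax (a := (s, x, y)) ⟨hs, hx, hy⟩
  have h := sub_mul_nonpos_of_isMaxOn (convex_Icc 0 T) hmax' hderiv (Ioc_subset_Icc_self ht)
    ⟨le_rfl, ht.1.le.trans ht.2⟩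
  nlinarith [ht.1]

lemma flux_le_of_isMaxOn_doubled (B₀ : IsBoundaryFlux p g₀ vm) (B₁ : IsBoundaryFlux p g₁ (1 - vp))
    (S : IsRobinSol T p g₀ g₁ v0 ε v) (hU : IsPotential T (flux ε p v) v U) (hε : 0 ≤ ε)
    (hσ : 0 < σ) (hσ1 : σ ≤ 1) {l t x y : ℝ} {g : ℝ × ℝ → ℝ} (ht : t ∈ Icc (0 : ℝ) T)
    (hx : x ∈ Icc (0 : ℝ) 1) (hy : y ∈ Icc (0 : ℝ) 1)
    (hmax : IsMaxOn (doubled σ l (fun z => U z - corrector vm vp z.2) g)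
      (Icc 0 T ×ˢ Icc 0 1 ×ˢ Icc 0 1) (t, x, y)) :
    flux ε p v (t, x) ≤
      ε * (vp - vm + 1 / σ) - p * J (slopeCorrector vm vp x + (x - y) / σ) := by
  have hσ' : 1 ≤ 1 / σ := (one_le_div hσ).2 hσ1
  refine flux_le_of_touch_above (φ := fun x => corrector vm vp x + (x - y) ^ 2 / (2 * σ))
    (φ' := fun x => slopeCorrector vm vp x + (x - y) / σ) B₀ B₁ S hU hε (mem_rect.2 ⟨ht, hx⟩)
    (fun x => ?_) ?_ (by linarith [B₀.mem.2, B₁.mem.2]) ?_ ?_ fun x₁ hx₁ => ?_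
  · refine ((hasDerivAt_corrector vm vp x).add
      ((((hasDerivAt_id x).sub_const y).pow 2).div_const (2 * σ))).congr_deriv ?_
    simp only [id]
    field_simp
    norm_num
    ring
  · exact (hasDerivAt_slopeCorrector vm vp x).add (((hasDerivAt_id x).sub_const y).div_const σ)
  · have h : (0 - y) / σ ≤ 0 := div_nonpos_of_nonpos_of_nonneg (by linarith [hy.1]) hσ.le
    simp only [slopeCorrector]
    linarith
  · have h : 0 ≤ (1 - y) / σ := div_nonneg (by linarith [hy.2]) hσ.le
    simp only [slopeCorrector]
    linarith
  · have h : doubled σ l _ g (t, x₁, y) ≤ _ := hmax ⟨ht, hx₁, hy⟩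
    simp only [doubled, mem_ofPred_eq] at h ⊢
    linarith

lemma le_flux_of_isMaxOn_doubled (B₀ : IsBoundaryFlux p g₀ vm) (B₁ : IsBoundaryFlux p g₁ (1 - vp))
    (S : IsRobinSol T p g₀ g₁ v0 ε v) (hU : IsPotential T (flux ε p v) v U) (hε : 0 ≤ ε)
    (hσ : 0 < σ) (hσ1 : σ ≤ 1) {l t x y : ℝ} {f : ℝ × ℝ → ℝ} (ht : t ∈ Icc (0 : ℝ) T)
    (hx : x ∈ Icc (0 : ℝ) 1) (hy : y ∈ Icc (0 : ℝ) 1)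
    (hmax : IsMaxOn (doubled σ l f fun z => U z - corrector vm vp z.2)
      (Icc 0 T ×ˢ Icc 0 1 ×ˢ Icc 0 1) (t, x, y)) :
    -(ε * (1 / σ - (vp - vm))) - p * J (slopeCorrector vm vp y + (x - y) / σ) ≤
      flux ε p v (t, y) := by
  have hσ' : 1 ≤ 1 / σ := (one_le_div hσ).2 hσ1
  refine le_flux_of_touch_below (φ := fun y => corrector vm vp y - (x - y) ^ 2 / (2 * σ))
    (φ' := fun y => slopeCorrector vm vp y + (x - y) / σ) B₀ B₁ S hU hε (mem_rect.2 ⟨ht, hy⟩)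
    (fun y => ?_) ?_ (by linarith [B₀.mem.1, B₁.mem.1]) ?_ ?_ fun y₁ hy₁ => ?_
  · refine ((hasDerivAt_corrector vm vp y).sub
      ((((hasDerivAt_id y).const_sub x).pow 2).div_const (2 * σ))).congr_deriv ?_
    simp only [id]
    field_simp
    ring
  · refine ((hasDerivAt_slopeCorrector vm vp y).add
      (((hasDerivAt_id y).const_sub x).div_const σ)).congr_deriv ?_
    ring
  · have h : 0 ≤ (x - 0) / σ := div_nonneg (by linarith [hx.1]) hσ.le
    simp only [slopeCorrector]
    linarith
  · have h : (x - 1) / σ ≤ 0 := div_nonpos_of_nonpos_of_nonneg (by linarith [hx.2]) hσ.le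
    simp only [slopeCorrector]
    linarith
  · have h : doubled σ l f _ (t, x, y₁) ≤ _ := hmax ⟨ht, hx, hy₁⟩
    simp only [doubled, mem_ofPred_eq] at h ⊢
    linarith

lemma not_isMaxOn_doubled_potential (B₀ : IsBoundaryFlux p g₀ vm)
    (B₁ : IsBoundaryFlux p g₁ (1 - vp)) (hp : 0 ≤ p) (hε : 0 ≤ ε) (hη : 0 ≤ η) (hσ : 0 < σ)
    (hσ1 : σ ≤ 1) (hεσ : ε ≤ σ ^ 2) (hησ : η ≤ σ ^ 2)
    (S₁ : IsRobinSol T p g₀ g₁ v0 ε v₁) (hU₁ : IsPotential T (flux ε p v₁) v₁ U₁)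
    (S₂ : IsRobinSol T p g₀ g₁ v0 η v₂) (hU₂ : IsPotential T (flux η p v₂) v₂ U₂)
    {t x y : ℝ} (ht : t ∈ Ioc (0 : ℝ) T) (hx : x ∈ Icc (0 : ℝ) 1) (hy : y ∈ Icc (0 : ℝ) 1)
    (hxy : |x - y| ≤ 2 * σ) :
    ¬ IsMaxOn (doubled σ ((3 + 10 * p) * σ) (fun z => U₁ z - corrector vm vp z.2)
      fun z => U₂ z - corrector vm vp z.2) (Icc 0 T ×ˢ Icc 0 1 ×ˢ Icc 0 1) (t, x, y) := by
  intro hmax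
  have ht' := Ioc_subset_Icc_self ht
  have hvp : vp ∈ Icc (0 : ℝ) 1 := ⟨by linarith [B₁.mem.2], by linarith [B₁.mem.1]⟩
  have htime : (3 + 10 * p) * σ ≤ flux ε p v₁ (t, x) - flux η p v₂ (t, y) :=
    le_sub_of_isMaxOn_doubled ht hx hy
      ((hU₁.hasDerivWithinAt_time (mem_rect.2 ⟨ht', hx⟩)).sub_const (corrector vm vp x))
      ((hU₂.hasDerivWithinAt_time (mem_rect.2 ⟨ht', hy⟩)).sub_const (corrector vm vp y)) hmax
  have hupper := flux_le_of_isMaxOn_doubled B₀ B₁ S₁ hU₁ hε hσ hσ1 ht' hx hy hmax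
  have hlower := le_flux_of_isMaxOn_doubled B₀ B₁ S₂ hU₂ hη hσ hσ1 ht' hx hy hmax
  have hq : |(x - y) / σ| ≤ 2 := by rwa [abs_div, abs_of_pos hσ, div_le_iff₀ hσ]
  have hJ : J (slopeCorrector vm vp y + (x - y) / σ) - J (slopeCorrector vm vp x + (x - y) / σ)
      ≤ 10 * σ := by
    have h₁ := J_add_sub_J_add_le (slopeCorrector_mem B₀.mem hvp hx)
      (slopeCorrector_mem B₀.mem hvp hy) hq
    have h₂ := abs_slopeCorrector_sub_le B₀.mem hvp y x
    rw [abs_sub_comm y x] at h₂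
    linarith
  have hσ' : 1 ≤ 1 / σ := (one_le_div hσ).2 hσ1
  have hviscous : ε * (vp - vm + 1 / σ) + η * (1 / σ - (vp - vm)) ≤ 2 * σ := calc
    _ ≤ σ ^ 2 * (vp - vm + 1 / σ) + σ ^ 2 * (1 / σ - (vp - vm)) := by
      gcongr <;> linarith [B₀.mem.1, B₀.mem.2, hvp.1, hvp.2]
    _ = 2 * σ := by field_simp; ring
  nlinarith [mul_le_mul_of_nonneg_left hJ hp]

lemma potential_sub_le (B₀ : IsBoundaryFlux p g₀ vm) (B₁ : IsBoundaryFlux p g₁ (1 - vp))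
    (hp : 0 ≤ p) (hε : 0 ≤ ε) (hη : 0 ≤ η) (hσ : 0 < σ) (hσ1 : σ ≤ 1) (hεσ : ε ≤ σ ^ 2)
    (hησ : η ≤ σ ^ 2) (S₁ : IsRobinSol T p g₀ g₁ v0 ε v₁)
    (hU₁ : IsPotential T (flux ε p v₁) v₁ U₁) (S₂ : IsRobinSol T p g₀ g₁ v0 η v₂)
    (hU₂ : IsPotential T (flux η p v₂) v₂ U₂)
    (h0 : ∀ x ∈ Icc (0 : ℝ) 1, U₁ (0, x) = U₂ (0, x)) :
    ∀ z ∈ rect T, U₁ z - U₂ z ≤ ((3 + 10 * p) * T + 1) * σ := by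
  have hvp : vp ∈ Icc (0 : ℝ) 1 := ⟨by linarith [B₁.mem.2], by linarith [B₁.mem.1]⟩
  have hcorr : Continuous fun z : ℝ × ℝ => corrector vm vp z.2 := by unfold corrector; fun_prop
  intro z hz
  have h := sub_le_of_not_isMaxOn_doubled (l := (3 + 10 * p) * σ)
    (f := fun z => U₁ z - corrector vm vp z.2) (g := fun z => U₂ z - corrector vm vp z.2)
    hσ (by positivity)
    (hU₁.continuousOn.sub hcorr.continuousOn) (hU₂.continuousOn.sub hcorr.continuousOn)
    (fun t ht x hx y hy => hU₁.abs_sub_corrector_sub_le S₁.mem B₀.mem hvp ht hx hy)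
    (fun x hx => by rw [h0 x hx])
    (fun t ht x hx y hy hxy =>
      not_isMaxOn_doubled_potential B₀ B₁ hp hε hη hσ hσ1 hεσ hησ S₁ hU₁ S₂ hU₂ ht hx hy hxy)
    z hz
  linarith

end Comparison

/-! ### Energy and entropy estimates -/

section Green

variable {f g : ℝ × ℝ → ℝ} {a₁ b₁ a₂ b₂ : ℝ}

lemma Dt_mul {z : ℝ × ℝ} (hf : DifferentiableAt ℝ f z) (hg : DifferentiableAt ℝ g z) :
    Dt (fun z => f z * g z) z = Dt f z * g z + f z * Dt g z := by
  rw [Dt, fderiv_fun_mul hf hg]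
  simp only [add_apply, smul_apply, smul_eq_mul, Dt]
  ring

lemma Dx_mul {z : ℝ × ℝ} (hf : DifferentiableAt ℝ f z) (hg : DifferentiableAt ℝ g z) :
    Dx (fun z => f z * g z) z = Dx f z * g z + f z * Dx g z := by
  rw [Dx, fderiv_fun_mul hf hg]
  simp only [add_apply, smul_apply, smul_eq_mul, Dx]
  ring

lemma integrableOn_Icc_prod_Icc (hf : Continuous f) :
    IntegrableOn f (Icc a₁ b₁ ×ˢ Icc a₂ b₂) :=
  hf.continuousOn.integrableOn_compact (isCompact_Icc.prod isCompact_Icc)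

lemma setIntegral_Icc_prod_Icc (h₁ : a₁ ≤ b₁) (h₂ : a₂ ≤ b₂)
    (hf : IntegrableOn f (Icc a₁ b₁ ×ˢ Icc a₂ b₂)) :
    ∫ z in Icc a₁ b₁ ×ˢ Icc a₂ b₂, f z = ∫ t in a₁..b₁, ∫ x in a₂..b₂, f (t, x) := by
  rw [Measure.volume_eq_prod] at hf ⊢
  simp_rw [setIntegral_prod f hf, integral_of_le h₁, integral_of_le h₂,
    integral_Icc_eq_integral_Ioc]

lemma setIntegral_Icc_prod_Icc_swap (h₁ : a₁ ≤ b₁) (h₂ : a₂ ≤ b₂)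
    (hf : IntegrableOn f (Icc a₁ b₁ ×ˢ Icc a₂ b₂)) :
    ∫ z in Icc a₁ b₁ ×ˢ Icc a₂ b₂, f z = ∫ x in a₂..b₂, ∫ t in a₁..b₁, f (t, x) := by
  rw [Measure.volume_eq_prod] at hf ⊢
  rw [← setIntegral_prod_swap]
  exact setIntegral_Icc_prod_Icc (f := fun z => f z.swap) h₂ h₁ hf.swap

lemma integral_Dt_add_Dx (h₁ : a₁ ≤ b₁) (h₂ : a₂ ≤ b₂) (hf : ContDiff ℝ 1 f)
    (hg : ContDiff ℝ 1 g) :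
    ∫ z in Icc a₁ b₁ ×ˢ Icc a₂ b₂, (Dt f z + Dx g z) =
      ((∫ t in a₁..b₁, g (t, b₂)) - ∫ t in a₁..b₁, g (t, a₂)) + (∫ x in a₂..b₂, f (b₁, x))
        - ∫ x in a₂..b₂, f (a₁, x) := by
  have hcont : Continuous fun z => Dt f z + Dx g z :=
    (contDiff_Dt (m := 0) hf (by norm_num)).continuous.add
      (contDiff_Dx (m := 0) hg (by norm_num)).continuous
  rw [setIntegral_Icc_prod_Icc h₁ h₂ (integrableOn_Icc_prod_Icc hcont)]
  exact integral2_divergence_prod_of_hasFDerivAt f g (fderiv ℝ f) (fderiv ℝ g)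
    a₁ a₂ b₁ b₂ hf.continuous.continuousOn hg.continuous.continuousOn
    (fun z _ => (hf.differentiable one_ne_zero z).hasFDerivAt)
    (fun z _ => (hg.differentiable one_ne_zero z).hasFDerivAt)
    (hcont.continuousOn.integrableOn_compact (isCompact_uIcc.prod isCompact_uIcc))

lemma abs_setIntegral_Icc_prod_Icc_le {C : ℝ} (h₁ : a₁ ≤ b₁) (h₂ : a₂ ≤ b₂)
    (hC : ∀ z ∈ Icc a₁ b₁ ×ˢ Icc a₂ b₂, |f z| ≤ C) :
    |∫ z in Icc a₁ b₁ ×ˢ Icc a₂ b₂, f z| ≤ C * ((b₁ - a₁) * (b₂ - a₂)) := by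
  have hvol : volume.real (Icc a₁ b₁ ×ˢ Icc a₂ b₂) = (b₁ - a₁) * (b₂ - a₂) := by
    rw [Measure.volume_eq_prod, measureReal_prod_prod, Real.volume_real_Icc_of_le h₁,
      Real.volume_real_Icc_of_le h₂]
  rw [← hvol]
  exact norm_setIntegral_le_of_norm_le_const (f := f)
    (isCompact_Icc.prod isCompact_Icc).measure_lt_top hC

end Green

lemma abs_intervalIntegral_le {f : ℝ → ℝ} {a b C : ℝ} (h : a ≤ b)
    (hC : ∀ x ∈ Icc a b, |f x| ≤ C) : |∫ x in a..b, f x| ≤ C * (b - a) := by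
  rw [← abs_of_nonneg (sub_nonneg.2 h)]
  refine intervalIntegral.norm_integral_le_of_norm_le_const (f := f) fun x hx => hC x ?_
  exact Ioc_subset_Icc_self (uIoc_of_le h ▸ hx)

lemma Dt_comp {F : ℝ → ℝ} {v : ℝ × ℝ → ℝ} {z : ℝ × ℝ} (hF : DifferentiableAt ℝ F (v z))
    (hv : DifferentiableAt ℝ v z) : Dt (fun z => F (v z)) z = deriv F (v z) * Dt v z := by
  rw [Dt, show fderiv ℝ (fun z => F (v z)) z = _ from
    (hF.hasDerivAt.comp_hasFDerivAt z hv.hasFDerivAt).fderiv]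
  rfl

namespace IsLaxPair

variable {F Q : ℝ → ℝ}

lemma contDiff_deriv (h : IsLaxPair F Q) : ContDiff ℝ 1 (deriv F) :=
  ((contDiff_succ_iff_deriv (n := 1)).1 (by rw [one_add_one_eq_two]; exact h.1)).2.2

lemma contDiff_one (h : IsLaxPair F Q) : ContDiff ℝ 1 F := h.1.of_le one_le_two

lemma contDiff_one_flux (h : IsLaxPair F Q) : ContDiff ℝ 1 Q := h.2.1.of_le one_le_two

end IsLaxPair

lemma isLaxPair_id : IsLaxPair (fun u => u) J := by
  refine ⟨contDiff_id, by unfold J; fun_prop, fun u _ => ?_, fun u _ => ?_⟩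
  · rw [(hasDerivAt_J u).deriv, deriv_id'', mul_one]
  · simp

lemma isLaxPair_sq :
    IsLaxPair (fun u => u ^ 2 / 2) (fun u => u ^ 2 / 2 - 2 * u ^ 3 / 3) := by
  have hderiv : deriv (fun u : ℝ => u ^ 2 / 2) = fun u => u := by
    ext u; simp
  refine ⟨by fun_prop, by fun_prop, fun u _ => ?_, fun u _ => ?_⟩
  · rw [hderiv]
    refine HasDerivAt.deriv ?_
    refine (((hasDerivAt_pow 2 u).div_const 2).sub
      (((hasDerivAt_pow 3 u).const_mul 2).div_const 3)).congr_deriv ?_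
    push_cast
    ring
  · rw [hderiv, deriv_id'']
    exact zero_le_one

/-- The viscous entropy flux `p Q(v) - F'(v) ε ∂ₓv`. -/
noncomputable def entropyFlux (ε p : ℝ) (F Q : ℝ → ℝ) (v : ℝ × ℝ → ℝ) (z : ℝ × ℝ) : ℝ :=
  p * Q (v z) - deriv F (v z) * (ε * Dx v z)

lemma entropyFlux_id (ε p : ℝ) (v : ℝ × ℝ → ℝ) (z : ℝ × ℝ) :
    entropyFlux ε p (fun u => u) J v z = -flux ε p v z := by
  simp only [entropyFlux, flux, deriv_id'']
  ring

lemma abs_entropyFlux_sq_le {ε p M : ℝ} {v : ℝ × ℝ → ℝ} {z : ℝ × ℝ} (hp : 0 ≤ p)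
    (hv : v z ∈ Icc (0 : ℝ) 1) (hM : |flux ε p v z| ≤ M) :
    |entropyFlux ε p (fun u => u ^ 2 / 2) (fun u => u ^ 2 / 2 - 2 * u ^ 3 / 3) v z| ≤ M + p := by
  have hsplit : entropyFlux ε p (fun u => u ^ 2 / 2) (fun u => u ^ 2 / 2 - 2 * u ^ 3 / 3) v z
      = -(v z * flux ε p v z) - p * (v z ^ 2 / 2 - v z ^ 3 / 3) := by
    simp [entropyFlux, flux, J]
    ring
  obtain ⟨hv0, hv1⟩ := hv
  have hsq : v z ^ 2 ≤ 1 := pow_le_one₀ hv0 hv1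
  have hcube : v z ^ 3 ≤ v z ^ 2 := pow_le_pow_of_le_one hv0 hv1 (by norm_num)
  have hcube0 : 0 ≤ v z ^ 3 := by positivity
  rw [hsplit, abs_le]
  obtain ⟨hM₁, hM₂⟩ := abs_le.1 hM
  constructor <;> nlinarith

namespace IsRobinSol

variable {T p ε : ℝ} {g₀ g₁ v0 F Q : ℝ → ℝ} {v : ℝ × ℝ → ℝ}

lemma contDiff_entropyFlux (S : IsRobinSol T p g₀ g₁ v0 ε v) (hFQ : IsLaxPair F Q) :
    ContDiff ℝ 1 (entropyFlux ε p F Q v) := by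
  have hv : ContDiff ℝ 1 v := S.contDiff.of_le (by norm_num)
  have hDx : ContDiff ℝ 1 (Dx v) := S.contDiff_Dx.of_le one_le_two
  exact (contDiff_const.mul (hFQ.contDiff_one_flux.comp hv)).sub
    ((hFQ.contDiff_deriv.comp hv).mul (contDiff_const.mul hDx))

lemma Dx_entropyFlux (S : IsRobinSol T p g₀ g₁ v0 ε v) (hFQ : IsLaxPair F Q) (z : ℝ × ℝ) :
    Dx (entropyFlux ε p F Q v) z = p * (deriv Q (v z) * Dx v z)
      - (deriv (deriv F) (v z) * (ε * Dx v z ^ 2) + deriv F (v z) * (ε * Dx (Dx v) z)) := by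
  have hv := (S.differentiable z).hasFDerivAt
  have hDx := (S.contDiff_Dx.differentiable two_ne_zero z).hasFDerivAt
  have hQ := (hFQ.contDiff_one_flux.differentiable one_ne_zero (v z)).hasDerivAt
  have hF' := (hFQ.contDiff_deriv.differentiable one_ne_zero (v z)).hasDerivAt
  rw [Dx, show fderiv ℝ (entropyFlux ε p F Q v) z = _ from
    (((hQ.comp_hasFDerivAt z hv).const_mul p).sub
      ((hF'.comp_hasFDerivAt z hv).mul (hDx.const_mul ε))).fderiv]
  simp [Dx]
  ring

lemma Dt_comp_add_Dx_entropyFlux (S : IsRobinSol T p g₀ g₁ v0 ε v) (hFQ : IsLaxPair F Q)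
    {z : ℝ × ℝ} (hz : z ∈ rect T) :
    Dt (fun z => F (v z)) z + Dx (entropyFlux ε p F Q v) z =
      -(deriv (deriv F) (v z) * (ε * Dx v z ^ 2)) := by
  have hflux : Dx (flux ε p v) z = ε * Dx (Dx v) z - p * ((1 - 2 * v z) * Dx v z) :=
    fderiv_flux (S.contDiff.of_le (by norm_num)) z _
  rw [S.Dx_entropyFlux hFQ, Dt_comp (hFQ.contDiff_one.differentiable one_ne_zero _)
    (S.differentiable z), S.pde z hz, hflux, hFQ.2.2.1 _ (S.mem z hz)]
  ring

lemma integral_entropy_balance (S : IsRobinSol T p g₀ g₁ v0 ε v) (hFQ : IsLaxPair F Q)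
    {ψ : ℝ × ℝ → ℝ} (hψ : ContDiff ℝ 1 ψ) {t x₁ x₂ : ℝ} (ht : t ∈ Icc (0 : ℝ) T)
    (hx₁ : 0 ≤ x₁) (hx : x₁ ≤ x₂) (hx₂ : x₂ ≤ 1) :
    ((∫ s in (0 : ℝ)..t, ψ (s, x₂) * entropyFlux ε p F Q v (s, x₂))
      - ∫ s in (0 : ℝ)..t, ψ (s, x₁) * entropyFlux ε p F Q v (s, x₁))
      + (∫ x in x₁..x₂, ψ (t, x) * F (v (t, x))) - ∫ x in x₁..x₂, ψ (0, x) * F (v (0, x))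
    = (∫ z in Icc (0 : ℝ) t ×ˢ Icc x₁ x₂, (Dt ψ z * F (v z) + Dx ψ z * entropyFlux ε p F Q v z))
      - ∫ z in Icc (0 : ℝ) t ×ˢ Icc x₁ x₂, ψ z * (deriv (deriv F) (v z) * (ε * Dx v z ^ 2)) := by
  have hv : ContDiff ℝ 1 v := S.contDiff.of_le (by norm_num)
  have hFv : ContDiff ℝ 1 fun z => F (v z) := hFQ.contDiff_one.comp hv
  have hB := S.contDiff_entropyFlux hFQ
  rw [← integral_Dt_add_Dx ht.1 hx (hψ.mul hFv) (hψ.mul hB), ← MeasureTheory.integral_sub]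
  · refine setIntegral_congr_fun (measurableSet_Icc.prod measurableSet_Icc) fun z hz => ?_
    have hz' : z ∈ rect T := ⟨⟨hz.1.1, hz.1.2.trans ht.2⟩, hx₁.trans hz.2.1, hz.2.2.trans hx₂⟩
    have hψz := hψ.differentiable one_ne_zero z
    rw [Dt_mul hψz (hFv.differentiable one_ne_zero z),
      Dx_mul hψz (hB.differentiable one_ne_zero z)]
    linear_combination ψ z * S.Dt_comp_add_Dx_entropyFlux hFQ hz'
  · exact integrableOn_Icc_prod_Icc <|
      ((contDiff_Dt (m := 0) hψ (by norm_num)).continuous.mul hFv.continuous).add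
        ((_root_.contDiff_Dx (m := 0) hψ (by norm_num)).continuous.mul hB.continuous)
  · have hDx := S.contDiff_Dx.continuous
    have hF'' := (hFQ.contDiff_deriv.continuous_deriv (by norm_num)).comp hv.continuous
    exact integrableOn_Icc_prod_Icc (hψ.continuous.mul (hF''.mul (by fun_prop)))

lemma integral_entropy_inequality (S : IsRobinSol T p g₀ g₁ v0 ε v) (hT : 0 ≤ T) (hε : 0 ≤ ε)
    (hFQ : IsLaxPair F Q) {ψ : ℝ × ℝ → ℝ} (hψ : ContDiff ℝ 1 ψ) (hψ0 : ∀ z ∈ rect T, 0 ≤ ψ z)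
    {x₁ x₂ : ℝ} (hx₁ : 0 ≤ x₁) (hx : x₁ ≤ x₂) (hx₂ : x₂ ≤ 1) :
    ((∫ t in (0 : ℝ)..T, ψ (t, x₂) * entropyFlux ε p F Q v (t, x₂))
      - ∫ t in (0 : ℝ)..T, ψ (t, x₁) * entropyFlux ε p F Q v (t, x₁))
      + (∫ x in x₁..x₂, ψ (T, x) * F (v (T, x))) - ∫ x in x₁..x₂, ψ (0, x) * F (v (0, x))
    ≤ ∫ z in Icc (0 : ℝ) T ×ˢ Icc x₁ x₂,
        (Dt ψ z * F (v z) + Dx ψ z * entropyFlux ε p F Q v z) := by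
  rw [S.integral_entropy_balance hFQ hψ ⟨hT, le_rfl⟩ hx₁ hx hx₂]
  refine sub_le_self _ (setIntegral_nonneg (measurableSet_Icc.prod measurableSet_Icc) ?_)
  intro z hz
  have hz' : z ∈ rect T := ⟨hz.1, hx₁.trans hz.2.1, hz.2.2.trans hx₂⟩
  exact mul_nonneg (hψ0 z hz') (mul_nonneg (hFQ.2.2.2 _ (S.mem z hz')) (by positivity))

section Energy

variable {C M t : ℝ}

lemma integral_sq_add_dissipation_le (S : IsRobinSol T p g₀ g₁ v0 ε v) (hp : 0 ≤ p)
    (hM : ∀ z ∈ rect T, |flux ε p v z| ≤ M) (ht : t ∈ Icc (0 : ℝ) T) :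
    (∫ x in (0 : ℝ)..1, v (t, x) ^ 2 / 2) - (∫ x in (0 : ℝ)..1, v (0, x) ^ 2 / 2)
      + ∫ z in Icc (0 : ℝ) t ×ˢ Icc (0 : ℝ) 1, ε * Dx v z ^ 2 ≤ 2 * (M + p) * t := by
  have hbalance := S.integral_entropy_balance isLaxPair_sq (ψ := fun _ => 1) contDiff_const ht
    le_rfl zero_le_one le_rfl
  have hderiv : deriv (deriv fun u : ℝ => u ^ 2 / 2) = fun _ => 1 := by
    rw [show deriv (fun u : ℝ => u ^ 2 / 2) = fun u => u by ext u; simp, deriv_id'']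
  have hDt : Dt (fun _ => 1) = 0 := by ext; simp [Dt]
  have hDx : Dx (fun _ => 1) = 0 := by ext; simp [Dx]
  simp only [one_mul, hderiv, hDt, hDx, Pi.zero_apply, zero_mul, add_zero,
    MeasureTheory.integral_zero] at hbalance
  have hB (x : ℝ) (hx : x ∈ Icc (0 : ℝ) 1) := abs_le.1 <| abs_intervalIntegral_le ht.1
    fun s (hs : s ∈ Icc 0 t) =>
      have hz : (s, x) ∈ rect T := ⟨⟨hs.1, hs.2.trans ht.2⟩, hx⟩
      abs_entropyFlux_sq_le hp (S.mem _ hz) (hM _ hz)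
  linarith [(hB 0 ⟨le_rfl, zero_le_one⟩).2, (hB 1 ⟨zero_le_one, le_rfl⟩).1]

lemma integral_init_mul_sub_le (S : IsRobinSol T p g₀ g₁ v0 ε v)
    (hC : ∀ x ∈ Icc (0 : ℝ) 1, |derivWithin v0 (Icc 0 1) x| ≤ C)
    (hM : ∀ z ∈ rect T, |flux ε p v z| ≤ M) (ht : t ∈ Icc (0 : ℝ) T) :
    (∫ x in (0 : ℝ)..1, v (0, x) * v (0, x)) - (∫ x in (0 : ℝ)..1, v (0, x) * v (t, x))
      ≤ (C * M + 2 * M) * t := by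
  have hψ : ContDiff ℝ 1 fun z : ℝ × ℝ => v (0, z.2) :=
    (S.contDiff.of_le (by norm_num)).comp (contDiff_const.prodMk contDiff_snd)
  have hbalance := S.integral_entropy_balance isLaxPair_id hψ ht le_rfl zero_le_one le_rfl
  have hsub (s x : ℝ) (hs : s ∈ Icc 0 t) (hx : x ∈ Icc (0 : ℝ) 1) : (s, x) ∈ rect T :=
    ⟨⟨hs.1, hs.2.trans ht.2⟩, hx⟩
  have hDt : Dt (fun z : ℝ × ℝ => v (0, z.2)) = 0 := by
    ext ⟨s, x⟩
    exact (hasDerivAt_Dt (hψ.differentiable one_ne_zero _)).unique (hasDerivAt_const s (v (0, x)))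
  have hDx (z : ℝ × ℝ) : Dx (fun z : ℝ × ℝ => v (0, z.2)) z = Dx v (0, z.2) :=
    (hasDerivAt_Dx (hψ.differentiable one_ne_zero z)).unique
      (hasDerivAt_Dx (S.differentiable (0, z.2)))
  have hDx_le (x : ℝ) (hx : x ∈ Icc (0 : ℝ) 1) : |Dx v (0, x)| ≤ C := S.Dx_init hx ▸ hC x hx
  simp only [entropyFlux_id, deriv_id'', deriv_const, hDt, hDx, Pi.zero_apply, zero_mul,
    zero_add, mul_zero, MeasureTheory.integral_zero, sub_zero] at hbalance
  have hbulk := abs_le.1 <| abs_setIntegral_Icc_prod_Icc_le ht.1 zero_le_one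
    fun z (hz : z ∈ Icc 0 t ×ˢ Icc (0 : ℝ) 1) =>
      calc |Dx v (0, z.2) * -flux ε p v z| = |Dx v (0, z.2)| * |flux ε p v z| := by
            rw [abs_mul, abs_neg]
        _ ≤ C * M := mul_le_mul (hDx_le _ hz.2) (hM _ (hsub _ _ hz.1 hz.2)) (abs_nonneg _)
            ((abs_nonneg _).trans (hDx_le _ hz.2))
  have hB (x : ℝ) (hx : x ∈ Icc (0 : ℝ) 1) := abs_le.1 <| abs_intervalIntegral_le ht.1
    fun s (hs : s ∈ Icc 0 t) =>
      calc |v (0, x) * -flux ε p v (s, x)| = |v (0, x)| * |flux ε p v (s, x)| := by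
            rw [abs_mul, abs_neg]
        _ ≤ 1 * M := mul_le_mul (S.abs_le_one (hsub 0 x ⟨le_rfl, ht.1⟩ hx))
            (hM _ (hsub s x hs hx)) (abs_nonneg _) zero_le_one
  linarith [(hB 0 ⟨le_rfl, zero_le_one⟩).1, (hB 1 ⟨zero_le_one, le_rfl⟩).2, hbulk.1]

lemma energy_le (S : IsRobinSol T p g₀ g₁ v0 ε v) (hp : 0 ≤ p)
    (hC : ∀ x ∈ Icc (0 : ℝ) 1, |derivWithin v0 (Icc 0 1) x| ≤ C)
    (hM : ∀ z ∈ rect T, |flux ε p v z| ≤ M) (ht : t ∈ Icc (0 : ℝ) T) :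
    (∫ x in (0 : ℝ)..1, (v (t, x) - v0 x) ^ 2 / 2)
      + ∫ z in Icc (0 : ℝ) t ×ˢ Icc (0 : ℝ) 1, ε * Dx v z ^ 2
    ≤ (C * M + 4 * M + 2 * p) * t := by
  have hv := S.contDiff.continuous
  have hexpand : ∫ x in (0 : ℝ)..1, (v (t, x) - v0 x) ^ 2 / 2 =
      (∫ x in (0 : ℝ)..1, v (t, x) ^ 2 / 2) - (∫ x in (0 : ℝ)..1, v (0, x) ^ 2 / 2)
      + ((∫ x in (0 : ℝ)..1, v (0, x) * v (0, x)) - ∫ x in (0 : ℝ)..1, v (0, x) * v (t, x)) := by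
    have hInt {f : ℝ → ℝ} (hf : Continuous f) := hf.intervalIntegrable (μ := volume) 0 1
    rw [← intervalIntegral.integral_sub (hInt (by fun_prop)) (hInt (by fun_prop)),
      ← intervalIntegral.integral_sub (hInt (by fun_prop)) (hInt (by fun_prop)),
      ← intervalIntegral.integral_add (hInt (by fun_prop)) (hInt (by fun_prop))]
    refine integral_congr fun x hx => ?_
    rw [uIcc_of_le zero_le_one] at hx
    simp only [← S.init x hx]
    ring
  linarith [S.integral_sq_add_dissipation_le hp hM ht, S.integral_init_mul_sub_le hC hM ht]

end Energy

end IsRobinSol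

/-! ### The limit potential -/

lemma uniformCauchySeqOn_of_sub_le {X : Type*} {V : ℝ → X → ℝ} {s : Set X} {D : ℝ} (hD : 0 ≤ D)
    (hV : ∀ σ > 0, σ ≤ 1 → ∀ ε > 0, ε ≤ σ ^ 2 → ∀ η > 0, η ≤ σ ^ 2 →
      ∀ z ∈ s, V ε z - V η z ≤ D * σ) :
    UniformCauchySeqOn V (𝓝[>] 0) s := by
  intro r hr
  obtain ⟨κ, hκ, hκr⟩ := Metric.mem_uniformity_dist.1 hr
  obtain ⟨σ, hσ, hσ1, hσκ⟩ : ∃ σ > 0, σ ≤ 1 ∧ D * σ < κ := by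
    refine ⟨min 1 (κ / (D + 1)), by positivity, min_le_left _ _, ?_⟩
    calc D * min 1 (κ / (D + 1)) ≤ D * (κ / (D + 1)) := by gcongr; exact min_le_right _ _
      _ < (D + 1) * (κ / (D + 1)) := by gcongr; linarith
      _ = κ := by field_simp
  have hsmall : ∀ᶠ ε in 𝓝[>] (0 : ℝ), 0 < ε ∧ ε ≤ σ ^ 2 :=
    Ioc_mem_nhdsGT (by positivity)
  filter_upwards [hsmall.prod_mk hsmall] with ⟨ε, η⟩ ⟨⟨hε, hεσ⟩, hη, hησ⟩ z hz
  refine hκr (lt_of_le_of_lt (abs_le.2 ⟨?_, hV σ hσ hσ1 ε hε hεσ η hη hησ z hz⟩) hσκ)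
  linarith [hV σ hσ hσ1 η hη hησ ε hε hεσ z hz]

lemma exists_lipschitzWith_tendstoUniformlyOn {X ι : Type*} [PseudoMetricSpace X] {l : Filter ι}
    [l.NeBot] {V : ι → X → ℝ} {s : Set X} {K : ℝ≥0} (hV : UniformCauchySeqOn V l s)
    (hlip : ∀ᶠ i in l, LipschitzOnWith K (V i) s) :
    ∃ U, LipschitzWith K U ∧ TendstoUniformlyOn V U l s := by
  have hlim : ∀ z ∈ s, ∃ a, Tendsto (fun i => V i z) l (𝓝 a) := fun z hz =>
    cauchy_map_iff_exists_tendsto.1 (hV.cauchy_map hz)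
  choose! W hW using hlim
  have hWlip : LipschitzOnWith K W s := LipschitzOnWith.of_dist_le_mul fun z hz z' hz' =>
    le_of_tendsto ((hW z hz).dist (hW z' hz')) (hlip.mono fun i hi => hi.dist_le_mul z hz z' hz')
  obtain ⟨U, hU, hWU⟩ := hWlip.extend_real
  exact ⟨U, hU, (hV.tendstoUniformlyOn_of_tendsto hW).congr_right hWU⟩

lemma IsPotential.eq_of_initial_eq {T : ℝ} {m₁ v₁ U₁ m₂ v₂ U₂ : ℝ × ℝ → ℝ} (hT : 0 ≤ T)
    (h₁ : IsPotential T m₁ v₁ U₁) (h₂ : IsPotential T m₂ v₂ U₂)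
    (h0 : U₁ (0, 0) = U₂ (0, 0)) (hv : ∀ x ∈ Icc (0 : ℝ) 1, v₁ (0, x) = v₂ (0, x)) :
    ∀ x ∈ Icc (0 : ℝ) 1, U₁ (0, x) = U₂ (0, x) := by
  intro x hx
  have hz {y : ℝ} (hy : y ∈ Icc (0 : ℝ) 1) : (0, y) ∈ rect T := ⟨⟨le_rfl, hT⟩, hy⟩
  have hconst := (convex_Icc (0 : ℝ) 1).norm_image_sub_le_of_norm_hasDerivWithin_le (C := 0)
    (fun y hy => (h₁.hasDerivWithinAt_space (hz hy)).sub (h₂.hasDerivWithinAt_space (hz hy)))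
    (fun y hy => by simp [hv y hy]) (left_mem_Icc.2 zero_le_one) hx
  simp only [Pi.sub_apply, h0, sub_self, sub_zero, zero_mul, norm_le_zero_iff] at hconst
  exact sub_eq_zero.1 hconst

/-- A family `u ε` of viscous solutions whose potentials `V ε` converge uniformly to a Lipschitz
function `U` as the viscosity vanishes; `M` bounds the viscous fluxes. -/
structure IsViscousFamily (T p : ℝ) (g₀ g₁ v0 : ℝ → ℝ) (M : ℝ) (K : ℝ≥0)
    (u V : ℝ → ℝ × ℝ → ℝ) (U : ℝ × ℝ → ℝ) : Prop where
  sol : ∀ ε > 0, IsRobinSol T p g₀ g₁ v0 ε (u ε)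
  pot : ∀ ε > 0, IsPotential T (flux ε p (u ε)) (u ε) (V ε)
  abs_flux_le : ∀ ε > 0, ε ≤ 1 → ∀ z ∈ rect T, |flux ε p (u ε) z| ≤ M
  lim : TendstoUniformlyOn V U (𝓝[>] 0) (rect T)
  lip : LipschitzWith K U

lemma exists_isViscousFamily {T p vm vp : ℝ} {g₀ g₁ v0 : ℝ → ℝ} {u : ℝ → ℝ × ℝ → ℝ}
    (B₀ : IsBoundaryFlux p g₀ vm) (B₁ : IsBoundaryFlux p g₁ (1 - vp)) (hT : 0 < T) (hp : 0 ≤ p)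
    (S : ∀ ε > 0, IsRobinSol T p g₀ g₁ v0 ε (u ε)) :
    ∃ M K V U, IsViscousFamily T p g₀ g₁ v0 M K u V U := by
  obtain ⟨C, hC⟩ := (S 1 one_pos).exists_abs_derivWithin_init_le
  choose! V hV hV0 using fun ε (hε : 0 < ε) => (S ε hε).exists_isPotential
  have hM : ∀ ε > 0, ε ≤ 1 → ∀ z ∈ rect T, |flux ε p (u ε) z| ≤ _ := fun ε hε hε1 =>
    (S ε hε).abs_flux_le B₀ B₁ hT hp hε.le hε1 hC
  generalize |g₀ 0| + |g₀ 1| + (|g₁ 0| + |g₁ 1|) + (C + p) = M at hM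
  have hcauchy : UniformCauchySeqOn V (𝓝[>] 0) (rect T) := by
    refine uniformCauchySeqOn_of_sub_le (D := (3 + 10 * p) * T + 1) (by positivity) ?_
    intro σ hσ hσ1 ε hε hεσ η hη hησ
    refine potential_sub_le B₀ B₁ hp hε.le hη.le hσ hσ1 hεσ hησ (S ε hε) (hV ε hε) (S η hη)
      (hV η hη) ((hV ε hε).eq_of_initial_eq hT.le (hV η hη) ?_ fun x hx => ?_)
    · rw [hV0 ε hε, hV0 η hη]
    · rw [(S ε hε).init x hx, (S η hη).init x hx]
  have hlip : ∀ᶠ ε in 𝓝[>] (0 : ℝ), LipschitzOnWith (M + 1).toNNReal (V ε) (rect T) := by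
    filter_upwards [Ioc_mem_nhdsGT zero_lt_one] with ε hε
    refine LipschitzOnWith.of_dist_le_mul fun z hz z' hz' => ?_
    rw [Real.dist_eq, dist_eq_norm]
    refine ((hV ε hε.1).abs_sub_le (hM ε hε.1 hε.2) (fun z => (S ε hε.1).abs_le_one)
      hz' hz).trans ?_
    gcongr
    exact Real.le_coe_toNNReal _
  obtain ⟨U, hU, hlim⟩ := exists_lipschitzWith_tendstoUniformlyOn hcauchy hlip
  exact ⟨M, _, V, U, S, hV, hM, hlim, hU⟩

/-! ### Touching by paraboloids -/

/-- The paraboloid with slope `(a, b)` and curvature `c` that vanishes at its base point `z₀`. -/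
noncomputable def paraboloid (a b c : ℝ) (z₀ z : ℝ × ℝ) : ℝ :=
  a * (z.1 - z₀.1) + b * (z.2 - z₀.2) + c / 2 * ((z.1 - z₀.1) ^ 2 + (z.2 - z₀.2) ^ 2)

section Paraboloid

variable {a b c : ℝ} {z₀ : ℝ × ℝ}

lemma continuous_paraboloid : Continuous (paraboloid a b c z₀) := by
  unfold paraboloid; fun_prop

lemma hasDerivAt_paraboloid_time (t x : ℝ) :
    HasDerivAt (fun s => paraboloid a b c z₀ (s, x)) (a + c * (t - z₀.1)) t := by
  have h := (hasDerivAt_id t).sub_const z₀.1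
  refine (((h.const_mul a).add_const (b * (x - z₀.2))).add
    (((h.pow 2).add_const ((x - z₀.2) ^ 2)).const_mul (c / 2))).congr_deriv ?_
  simp only [id]
  push_cast
  ring

lemma hasDerivAt_paraboloid_space (t x : ℝ) :
    HasDerivAt (fun y => paraboloid a b c z₀ (t, y)) (b + c * (x - z₀.2)) x := by
  have h := (hasDerivAt_id x).sub_const z₀.2
  refine (((h.const_mul b).const_add (a * (t - z₀.1))).add
    (((h.pow 2).const_add ((t - z₀.1) ^ 2)).const_mul (c / 2))).congr_deriv ?_
  simp only [id]
  push_cast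
  ring

lemma exists_isLocalMax_sub_paraboloid {U f : ℝ × ℝ → ℝ} {κ r : ℝ} (hr : 0 < r) (hκ : 0 ≤ κ)
    (hf : ContinuousOn f (Metric.closedBall z₀ r))
    (hU : ∀ z ∈ Metric.closedBall z₀ r,
      |U z - U z₀ - (a * (z.1 - z₀.1) + b * (z.2 - z₀.2))| ≤ κ / 4 * ‖z - z₀‖)
    (hUf : ∀ z ∈ Metric.closedBall z₀ r, |U z - f z| < κ * r / 8) :
    ∃ z ∈ Metric.ball z₀ r, IsLocalMax (fun z => f z - paraboloid a b (κ / r) z₀ z) z := by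
  have hz₀ : z₀ ∈ Metric.closedBall z₀ r := Metric.mem_closedBall_self hr.le
  obtain ⟨z, hz, hmax⟩ := (isCompact_closedBall z₀ r).exists_isMaxOn ⟨z₀, hz₀⟩
    (hf.sub continuous_paraboloid.continuousOn)
  suffices hball : z ∈ Metric.ball z₀ r from ⟨z, hball, hmax.isLocalMax
    (mem_of_superset (Metric.isOpen_ball.mem_nhds hball) Metric.ball_subset_closedBall)⟩
  by_contra hsphere
  have hnorm : ‖z - z₀‖ = r := by
    rw [← dist_eq_norm]
    exact le_antisymm hz (not_lt.1 hsphere)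
  have hsq : r ^ 2 ≤ (z.1 - z₀.1) ^ 2 + (z.2 - z₀.2) ^ 2 := by
    rw [← hnorm, Prod.norm_def]
    rcases max_choice ‖(z - z₀).1‖ ‖(z - z₀).2‖ with h | h <;> rw [h] <;>
      simp only [Prod.fst_sub, Prod.snd_sub, Real.norm_eq_abs, sq_abs] <;> nlinarith
  have hcurv : κ * r / 2 ≤ κ / r / 2 * ((z.1 - z₀.1) ^ 2 + (z.2 - z₀.2) ^ 2) := by
    calc κ * r / 2 = κ / r / 2 * r ^ 2 := by field_simp
      _ ≤ _ := by gcongr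
  have hle := hmax hz₀
  simp only [mem_ofPred_eq, Pi.sub_apply, paraboloid, sub_self, mul_zero, add_zero, sub_zero,
    ne_eq, OfNat.ofNat_ne_zero, not_false_eq_true, zero_pow] at hle
  have hUz := (abs_le.1 (hU z hz)).2
  rw [hnorm] at hUz
  linarith [(abs_lt.1 (hUf z hz)).1, (abs_lt.1 (hUf z₀ hz₀)).2]

lemma IsPotential.derivatives_of_isLocalMax {T : ℝ} {m v V : ℝ × ℝ → ℝ} (hV : IsPotential T m v V)
    {z : ℝ × ℝ} (hz : z ∈ Ioo (0 : ℝ) T ×ˢ Ioo (0 : ℝ) 1) (hv : DifferentiableAt ℝ v z)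
    (hmax : IsLocalMax (fun z => V z - paraboloid a b c z₀ z) z) :
    m z = a + c * (z.1 - z₀.1) ∧ v z = b + c * (z.2 - z₀.2) ∧ Dx v z ≤ c := by
  obtain ⟨t, x⟩ := z
  have hV_time : HasDerivAt (fun s => V (s, x)) (m (t, x)) t :=
    (hV.hasDerivWithinAt_time (Ioo_prod_Ioo_subset_rect T hz)).hasDerivAt
      (Icc_mem_nhds hz.1.1 hz.1.2)
  have hV_space : ∀ᶠ y in 𝓝 x, HasDerivAt (fun y => V (t, y)) (v (t, y)) y := by
    filter_upwards [Ioo_mem_nhds hz.2.1 hz.2.2] with y hy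
    exact (hV.hasDerivWithinAt_space (x := y)
      (Ioo_prod_Ioo_subset_rect T ⟨hz.1, hy⟩)).hasDerivAt (Icc_mem_nhds hy.1 hy.2)
  have hmax_time : IsLocalMax (fun s => V (s, x) - paraboloid a b c z₀ (s, x)) t :=
    hmax.comp_continuous (g := fun s => (s, x)) (b := t) (by fun_prop)
  have hmax_space : IsLocalMax (fun y => V (t, y) - paraboloid a b c z₀ (t, y)) x :=
    hmax.comp_continuous (g := fun y => (t, y)) (b := x) (by fun_prop)
  have hslope : HasDerivAt (fun y => b + c * (y - z₀.2)) c x :=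
    ((((hasDerivAt_id x).sub_const z₀.2).const_mul c).const_add b).congr_deriv (mul_one c)
  obtain ⟨hfst, hsnd⟩ := eq_zero_and_nonpos_of_isLocalMax hmax_space
    (hV_space.mono fun y hy => hy.sub (hasDerivAt_paraboloid_space t y))
    ((hasDerivAt_Dx hv).sub hslope)
  exact ⟨sub_eq_zero.1 (hmax_time.hasDerivAt_eq_zero
    (hV_time.sub (hasDerivAt_paraboloid_time t x))), sub_eq_zero.1 hfst, sub_nonpos.1 hsnd⟩

end Paraboloid

namespace IsViscousFamily

variable {T p M : ℝ} {K : ℝ≥0} {g₀ g₁ v0 : ℝ → ℝ} {u V : ℝ → ℝ × ℝ → ℝ} {U : ℝ × ℝ → ℝ}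
  {z₀ : ℝ × ℝ}

lemma exists_near_derivatives (H : IsViscousFamily T p g₀ g₁ v0 M K u V U)
    (hz₀ : z₀ ∈ Ioo (0 : ℝ) T ×ˢ Ioo (0 : ℝ) 1) (hd : DifferentiableAt ℝ U z₀) {κ : ℝ}
    (hκ : 0 < κ) :
    ∃ ε > 0, ∃ z ∈ rect T, |flux ε p (u ε) z - Dt U z₀| ≤ κ ∧ |u ε z - Dx U z₀| ≤ κ ∧
      ε * Dx (u ε) z ≤ κ := by
  have hexpansion : ∀ᶠ z in 𝓝 z₀, z ∈ Ioo (0 : ℝ) T ×ˢ Ioo (0 : ℝ) 1 ∧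
      |U z - U z₀ - fderiv ℝ U z₀ (z - z₀)| ≤ κ / 4 * ‖z - z₀‖ :=
    ((isOpen_Ioo_prod_Ioo T).eventually_mem hz₀).and
      (hd.hasFDerivAt.isLittleO.def (by positivity))
  obtain ⟨r, hr, hball⟩ := Metric.nhds_basis_closedBall.eventually_iff.1 hexpansion
  have hrect : Metric.closedBall z₀ r ⊆ rect T := fun z hz =>
    Ioo_prod_Ioo_subset_rect T (hball hz).1
  obtain ⟨ε, hclose, hε, hεr⟩ := ((Metric.tendstoUniformlyOn_iff.1 H.lim (κ * r / 8)
    (by positivity)).and (Ioc_mem_nhdsGT hr)).exists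
  obtain ⟨z, hz, hmax⟩ := exists_isLocalMax_sub_paraboloid (a := Dt U z₀) (b := Dx U z₀) hr hκ.le
    ((H.pot ε hε).continuousOn.mono hrect)
    (fun z hz => by simpa [fderiv_apply_eq_Dt_Dx, mul_comm] using (hball hz).2)
    (fun z hz => hclose z (hrect hz))
  have hz' := Metric.ball_subset_closedBall hz
  obtain ⟨hm, hv, hDx⟩ := (H.pot ε hε).derivatives_of_isLocalMax (hball hz').1
    ((H.sol ε hε).differentiable z) hmax
  have hscale {y : ℝ} (hy : |y| ≤ ‖z - z₀‖) : |κ / r * y| ≤ κ := by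
    rw [abs_mul, abs_of_pos (by positivity)]
    calc κ / r * |y| ≤ κ / r * r := by
          gcongr; exact hy.trans (dist_eq_norm z z₀ ▸ Metric.mem_closedBall.1 hz')
      _ = κ := by field_simp
  refine ⟨ε, hε, z, hrect hz', ?_, ?_, ?_⟩
  · rw [hm, add_sub_cancel_left]
    exact hscale (norm_fst_le (z - z₀))
  · rw [hv, add_sub_cancel_left]
    exact hscale (norm_snd_le (z - z₀))
  · calc ε * Dx (u ε) z ≤ ε * (κ / r) := by gcongr
      _ ≤ r * (κ / r) := by gcongr
      _ = κ := by field_simp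

lemma Dx_mem (H : IsViscousFamily T p g₀ g₁ v0 M K u V U)
    (hz₀ : z₀ ∈ Ioo (0 : ℝ) T ×ˢ Ioo (0 : ℝ) 1) (hd : DifferentiableAt ℝ U z₀) :
    Dx U z₀ ∈ Icc (0 : ℝ) 1 := by
  constructor <;> refine le_of_forall_pos_le_add fun κ hκ => ?_ <;>
  · obtain ⟨ε, hε, z, hz, -, hnear, -⟩ := H.exists_near_derivatives hz₀ hd hκ
    linarith [((H.sol ε hε).mem z hz).1, ((H.sol ε hε).mem z hz).2, (abs_le.1 hnear).1,
      (abs_le.1 hnear).2]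

lemma Dt_le (H : IsViscousFamily T p g₀ g₁ v0 M K u V U) (hp : 0 ≤ p)
    (hz₀ : z₀ ∈ Ioo (0 : ℝ) T ×ˢ Ioo (0 : ℝ) 1) (hd : DifferentiableAt ℝ U z₀) :
    Dt U z₀ ≤ -(p * J (Dx U z₀)) := by
  refine le_of_forall_pos_le_add fun κ hκ => ?_
  obtain ⟨ε, hε, z, hz, hm, hv, hDx⟩ := H.exists_near_derivatives hz₀ hd
    (κ := κ / (2 + p)) (by positivity)
  have hmem := (H.sol ε hε).mem z hz
  have hmem₀ := H.Dx_mem hz₀ hd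
  have hJ : |J (u ε z) - J (Dx U z₀)| ≤ κ / (2 + p) := by
    calc |J (u ε z) - J (Dx U z₀)| = |u ε z - Dx U z₀| * |1 - u ε z - Dx U z₀| := by
          rw [← abs_mul]; unfold J; ring_nf
      _ ≤ κ / (2 + p) * 1 := by
          gcongr
          rw [abs_le]; constructor <;> linarith [hmem.1, hmem.2, hmem₀.1, hmem₀.2]
      _ = _ := mul_one _
  have hsplit : (2 + p) * (κ / (2 + p)) = κ := by field_simp
  have hflux := (abs_le.1 hm).1
  unfold flux at hflux
  nlinarith [mul_le_mul_of_nonneg_left (abs_le.1 hJ).1 hp]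

end IsViscousFamily

/-! ### Weak convergence of the densities -/

section LipschitzWith

variable {U : ℝ × ℝ → ℝ} {K : ℝ≥0} {a b c d : ℝ}

lemma integrableOn_Icc_prod_Icc_of_bounded {f : ℝ × ℝ → ℝ} {C : ℝ} (hf : Measurable f)
    (hC : ∀ z ∈ Icc a b ×ˢ Icc c d, |f z| ≤ C) : IntegrableOn f (Icc a b ×ˢ Icc c d) :=
  Measure.integrableOn_of_bounded (isCompact_Icc.prod isCompact_Icc).measure_lt_top.ne
    hf.aestronglyMeasurable
    (ae_restrict_of_forall_mem (measurableSet_Icc.prod measurableSet_Icc) hC)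

lemma abs_Dt_le_of_lipschitzWith (hU : LipschitzWith K U) (z : ℝ × ℝ) : |Dt U z| ≤ K := by
  simpa [Prod.norm_def, Dt] using
    (fderiv ℝ U z).le_of_opNorm_le (norm_fderiv_le_of_lipschitz ℝ hU) (1, 0)

lemma abs_Dx_le_of_lipschitzWith (hU : LipschitzWith K U) (z : ℝ × ℝ) : |Dx U z| ≤ K := by
  simpa [Prod.norm_def, Dx] using
    (fderiv ℝ U z).le_of_opNorm_le (norm_fderiv_le_of_lipschitz ℝ hU) (0, 1)

lemma integral_eq_sub_of_lipschitzWith {f f' : ℝ → ℝ} (hf : LipschitzWith K f)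
    (hf' : ∀ᵐ x, HasDerivAt f (f' x) x) : ∫ x in a..b, f' x = f b - f a := by
  rw [← (hf.lipschitzOnWith (s := uIcc a b)).absolutelyContinuousOnInterval.integral_deriv_eq_sub]
  refine integral_congr_ae ?_
  filter_upwards [hf'] with x hx _ using hx.deriv.symm

lemma setIntegral_Dx_of_lipschitzWith (hU : LipschitzWith K U) (hab : a ≤ b) (hcd : c ≤ d) :
    ∫ z in Icc a b ×ˢ Icc c d, Dx U z = ∫ t in a..b, (U (t, d) - U (t, c)) := by
  have hae : ∀ᵐ z ∂(volume : Measure ℝ).prod volume, DifferentiableAt ℝ U z :=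
    hU.ae_differentiableAt
  rw [setIntegral_Icc_prod_Icc hab hcd (integrableOn_Icc_prod_Icc_of_bounded (measurable_Dx U)
    fun z _ => abs_Dx_le_of_lipschitzWith hU z)]
  refine integral_congr_ae ?_
  filter_upwards [Measure.ae_ae_of_ae_prod hae] with t ht _
  exact integral_eq_sub_of_lipschitzWith (hU.comp (LipschitzWith.prodMk_left t))
    (ht.mono fun x hx => hasDerivAt_Dx hx)

lemma setIntegral_Dt_of_lipschitzWith (hU : LipschitzWith K U) (hab : a ≤ b) (hcd : c ≤ d) :
    ∫ z in Icc a b ×ˢ Icc c d, Dt U z = ∫ x in c..d, (U (b, x) - U (a, x)) := by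
  have hae : ∀ᵐ z ∂(volume : Measure ℝ).prod volume, DifferentiableAt ℝ U z.swap :=
    Measure.measurePreserving_swap.quasiMeasurePreserving.ae hU.ae_differentiableAt
  rw [setIntegral_Icc_prod_Icc_swap hab hcd (integrableOn_Icc_prod_Icc_of_bounded
    (measurable_Dt U) fun z _ => abs_Dt_le_of_lipschitzWith hU z)]
  refine integral_congr_ae ?_
  filter_upwards [Measure.ae_ae_of_ae_prod hae] with x hx _
  exact integral_eq_sub_of_lipschitzWith (hU.comp (LipschitzWith.prodMk_right x))
    (hx.mono fun t ht => hasDerivAt_Dt ht)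

end LipschitzWith

namespace IsPotential

variable {T b d : ℝ} {m v V : ℝ × ℝ → ℝ}

lemma setIntegral_space (hV : IsPotential T m v V) (hv : Continuous v) (hb : b ∈ Icc (0 : ℝ) T)
    (hd : d ∈ Icc (0 : ℝ) 1) :
    ∫ z in Icc 0 b ×ˢ Icc 0 d, v z = ∫ t in (0 : ℝ)..b, (V (t, d) - V (t, 0)) := by
  rw [setIntegral_Icc_prod_Icc hb.1 hd.1 (integrableOn_Icc_prod_Icc hv)]
  refine integral_congr fun t ht => ?_
  rw [uIcc_of_le hb.1] at ht
  have hderiv {x : ℝ} (hx : x ∈ Icc 0 d) : HasDerivWithinAt (fun y => V (t, y)) (v (t, x))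
      (Icc 0 1) x :=
    hV.hasDerivWithinAt_space ⟨⟨ht.1, ht.2.trans hb.2⟩, hx.1, hx.2.trans hd.2⟩
  exact integral_eq_sub_of_hasDerivAt_of_le hd.1
    (fun x hx => ((hderiv hx).mono (Icc_subset_Icc_right hd.2)).continuousWithinAt)
    (fun x hx => (hderiv (Ioo_subset_Icc_self hx)).hasDerivAt
      (Icc_mem_nhds hx.1 (hx.2.trans_le hd.2)))
    (Continuous.intervalIntegrable (by fun_prop) _ _)

lemma setIntegral_time (hV : IsPotential T m v V) (hm : Continuous m) (hb : b ∈ Icc (0 : ℝ) T)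
    (hd : d ∈ Icc (0 : ℝ) 1) :
    ∫ z in Icc 0 b ×ˢ Icc 0 d, m z = ∫ x in (0 : ℝ)..d, (V (b, x) - V (0, x)) := by
  rw [setIntegral_Icc_prod_Icc_swap hb.1 hd.1 (integrableOn_Icc_prod_Icc hm)]
  refine integral_congr fun x hx => ?_
  rw [uIcc_of_le hd.1] at hx
  have hderiv {t : ℝ} (ht : t ∈ Icc 0 b) : HasDerivWithinAt (fun s => V (s, x)) (m (t, x))
      (Icc 0 T) t :=
    hV.hasDerivWithinAt_time ⟨⟨ht.1, ht.2.trans hb.2⟩, hx.1, hx.2.trans hd.2⟩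
  exact integral_eq_sub_of_hasDerivAt_of_le hb.1
    (fun t ht => ((hderiv ht).mono (Icc_subset_Icc_right hb.2)).continuousWithinAt)
    (fun t ht => (hderiv (Ioo_subset_Icc_self ht)).hasDerivAt
      (Icc_mem_nhds ht.1 (ht.2.trans_le hb.2)))
    (Continuous.intervalIntegrable (by fun_prop) _ _)

end IsPotential

lemma tendsto_intervalIntegral_of_tendstoUniformlyOn {ι : Type*} {l : Filter ι} {f : ι → ℝ → ℝ}
    {g : ℝ → ℝ} {a b : ℝ} (hab : a ≤ b) (hf : ∀ᶠ i in l, ContinuousOn (f i) (Icc a b))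
    (hg : ContinuousOn g (Icc a b)) (h : TendstoUniformlyOn f g l (Icc a b)) :
    Tendsto (fun i => ∫ t in a..b, f i t) l (𝓝 (∫ t in a..b, g t)) := by
  rw [Metric.tendsto_nhds]
  intro κ hκ
  have hba := sub_nonneg.2 hab
  filter_upwards [hf, Metric.tendstoUniformlyOn_iff.1 h (κ / (b - a + 1)) (by positivity)]
    with i hi hclose
  rw [Real.dist_eq, ← intervalIntegral.integral_sub (hi.intervalIntegrable_of_Icc hab)
    (hg.intervalIntegrable_of_Icc hab)]
  calc |∫ t in a..b, (f i t - g t)| ≤ κ / (b - a + 1) * (b - a) :=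
        abs_intervalIntegral_le hab fun t ht => by
          rw [abs_sub_comm]
          exact (hclose t ht).le
    _ < κ / (b - a + 1) * (b - a + 1) := by gcongr; linarith
    _ = κ := by field_simp

namespace IsViscousFamily

variable {T p M b d : ℝ} {K : ℝ≥0} {g₀ g₁ v0 : ℝ → ℝ} {u V : ℝ → ℝ × ℝ → ℝ} {U : ℝ × ℝ → ℝ}

lemma tendsto_setIntegral_Icc (H : IsViscousFamily T p g₀ g₁ v0 M K u V U)
    (hb : b ∈ Icc (0 : ℝ) T) (hd : d ∈ Icc (0 : ℝ) 1) :
    Tendsto (fun ε => ∫ z in Icc 0 b ×ˢ Icc 0 d, u ε z) (𝓝[>] 0)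
      (𝓝 (∫ z in Icc 0 b ×ˢ Icc 0 d, Dx U z)) := by
  rw [setIntegral_Dx_of_lipschitzWith H.lip hb.1 hd.1]
  have hmaps {x : ℝ} (hx : x ∈ Icc (0 : ℝ) 1) : MapsTo (fun t => (t, x)) (Icc 0 b) (rect T) :=
    fun t ht => ⟨⟨ht.1, ht.2.trans hb.2⟩, hx⟩
  have hlim {x : ℝ} (hx : x ∈ Icc (0 : ℝ) 1) :=
    (H.lim.comp (fun t => (t, x))).mono (hmaps hx)
  have hcont {ε x : ℝ} (hε : 0 < ε) (hx : x ∈ Icc (0 : ℝ) 1) :=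
    (H.pot ε hε).continuousOn.comp (f := fun t => (t, x)) (by fun_prop) (hmaps hx)
  have hU := H.lip.continuous
  have h0 : (0 : ℝ) ∈ Icc (0 : ℝ) 1 := ⟨le_rfl, zero_le_one⟩
  refine (tendsto_intervalIntegral_of_tendstoUniformlyOn hb.1 ?_ ?_
    ((hlim hd).sub (hlim h0))).congr' ?_
  · filter_upwards [self_mem_nhdsWithin] with ε hε using (hcont hε hd).sub (hcont hε h0)
  · exact Continuous.continuousOn (by fun_prop)
  · filter_upwards [self_mem_nhdsWithin] with ε hε
    exact ((H.pot ε hε).setIntegral_space (H.sol ε hε).contDiff.continuous hb hd).symm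

lemma tendsto_integral_flux (H : IsViscousFamily T p g₀ g₁ v0 M K u V U) (hT : 0 ≤ T) :
    Tendsto (fun ε => ∫ z in rect T, flux ε p (u ε) z) (𝓝[>] 0) (𝓝 (∫ z in rect T, Dt U z)) := by
  have h0 := left_mem_Icc.2 hT
  have hT' := right_mem_Icc.2 hT
  have h1 := right_mem_Icc.2 (zero_le_one (α := ℝ))
  rw [show ∫ z in rect T, Dt U z = _ from setIntegral_Dt_of_lipschitzWith H.lip hT zero_le_one]
  have hmaps {t : ℝ} (ht : t ∈ Icc 0 T) : MapsTo (fun x => (t, x)) (Icc 0 1) (rect T) :=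
    fun x hx => ⟨ht, hx⟩
  have hlim {t : ℝ} (ht : t ∈ Icc 0 T) := (H.lim.comp (fun x => (t, x))).mono (hmaps ht)
  have hcont {ε t : ℝ} (hε : 0 < ε) (ht : t ∈ Icc 0 T) :=
    (H.pot ε hε).continuousOn.comp (f := fun x => (t, x)) (by fun_prop) (hmaps ht)
  have hU := H.lip.continuous
  refine (tendsto_intervalIntegral_of_tendstoUniformlyOn zero_le_one ?_ ?_
    ((hlim hT').sub (hlim h0))).congr' ?_
  · filter_upwards [self_mem_nhdsWithin] with ε hε using (hcont hε hT').sub (hcont hε h0)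
  · exact Continuous.continuousOn (by fun_prop)
  · filter_upwards [self_mem_nhdsWithin] with ε hε
    exact ((H.pot ε hε).setIntegral_time (H.sol ε hε).contDiff_flux.continuous hT' h1).symm

end IsViscousFamily

lemma tendsto_setIntegral_of_Iic_prod_Iic {ι : Type*} {l : Filter ι} {μ : Measure (ℝ × ℝ)}
    [IsFiniteMeasure μ] {f : ι → ℝ × ℝ → ℝ} {g : ℝ × ℝ → ℝ} {C : ℝ}
    (hf : ∀ᶠ i in l, Integrable (f i) μ ∧ ∀ᵐ z ∂μ, |f i z| ≤ C) (hg : Integrable g μ)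
    (huniv : Tendsto (fun i => ∫ z, f i z ∂μ) l (𝓝 (∫ z, g z ∂μ)))
    (hIic : ∀ a c, Tendsto (fun i => ∫ z in Iic a ×ˢ Iic c, f i z ∂μ) l
      (𝓝 (∫ z in Iic a ×ˢ Iic c, g z ∂μ)))
    {A : Set (ℝ × ℝ)} (hA : MeasurableSet A) :
    Tendsto (fun i => ∫ z in A, f i z ∂μ) l (𝓝 (∫ z in A, g z ∂μ)) := by
  have hgen : MeasurableSpace.generateFrom (range (Iic : ℝ → Set ℝ)) = Real.measurableSpace := by
    rw [← borel_eq_generateFrom_Iic, ← BorelSpace.measurable_eq]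
  have hspan : IsCountablySpanning (range (Iic : ℝ → Set ℝ)) :=
    ⟨fun n : ℕ => Iic (n : ℝ), fun n => mem_range_self _, iUnion_eq_univ_iff.2 exists_nat_ge⟩
  induction A, hA using MeasurableSpace.induction_on_inter
    (generateFrom_eq_prod hgen hgen hspan hspan).symm (isPiSystem_Iic.prod isPiSystem_Iic) with
  | empty => simpa using tendsto_const_nhds
  | basic t ht =>
    obtain ⟨_, ⟨a, rfl⟩, _, ⟨c, rfl⟩, rfl⟩ := ht
    exact hIic a c
  | compl t ht ih =>
    rw [setIntegral_compl ht hg]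
    refine (huniv.sub ih).congr' ?_
    filter_upwards [hf] with i hi using (setIntegral_compl ht hi.1).symm
  | iUnion s hd hs ih =>
    rw [integral_iUnion hs hd hg.integrableOn]
    refine (tendsto_tsum_of_dominated_convergence (bound := fun k => C * μ.real (s k))
      ((summable_measure_toReal hs hd).mul_left C) ih ?_).congr' ?_
    · filter_upwards [hf] with i hi k
      exact norm_setIntegral_le_of_norm_le_const_ae (f := f i) (measure_lt_top μ _)
        (ae_restrict_of_ae hi.2)
    · filter_upwards [hf] with i hi using (integral_iUnion hs hd hi.1.integrableOn).symm

section WeakStar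

variable {X ι : Type*} [MeasurableSpace X] {μ : Measure X} {C : ℝ}

lemma abs_integral_mul_sub_le {f h k : X → ℝ} (hf : AEStronglyMeasurable f μ)
    (hC : ∀ᵐ z ∂μ, |f z| ≤ C) (hh : Integrable h μ) (hk : Integrable k μ) :
    |(∫ z, f z * h z ∂μ) - ∫ z, f z * k z ∂μ| ≤ C * ∫ z, |h z - k z| ∂μ := by
  rw [← MeasureTheory.integral_sub (hh.bdd_mul hf hC) (hk.bdd_mul hf hC),
    ← MeasureTheory.integral_const_mul, ← Real.norm_eq_abs]
  refine norm_integral_le_of_norm_le (g := fun z => C * |h z - k z|)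
    ((hh.sub hk).abs.const_mul C) ?_
  filter_upwards [hC] with z hz
  rw [← mul_sub, norm_mul]
  exact mul_le_mul_of_nonneg_right hz (abs_nonneg _)

variable {l : Filter ι} {f : ι → X → ℝ} {g : X → ℝ}

lemma isClosed_tendsto_integral_mul
    (hf : ∀ᶠ i in l, Integrable (f i) μ ∧ ∀ᵐ z ∂μ, |f i z| ≤ C) (hg : Integrable g μ)
    (hgC : ∀ᵐ z ∂μ, |g z| ≤ C) :
    IsClosed {h : X →₁[μ] ℝ |
      Tendsto (fun i => ∫ z, f i z * h z ∂μ) l (𝓝 (∫ z, g z * h z ∂μ))} := by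
  refine isClosed_of_closure_subset fun h hh => Metric.tendsto_nhds.2 fun κ hκ => ?_
  obtain ⟨k, hk, hdist⟩ := Metric.mem_closure_iff.1 hh (κ / (2 * |C| + 1)) (by positivity)
  have hsmall : 0 < κ - 2 * (|C| * dist h k) := by
    have := (lt_div_iff₀' (by positivity)).1 hdist
    linarith [dist_nonneg (x := h) (y := k)]
  have happrox {f : X → ℝ} (hf : Integrable f μ) (hC : ∀ᵐ z ∂μ, |f z| ≤ C) :
      |(∫ z, f z * h z ∂μ) - ∫ z, f z * k z ∂μ| ≤ |C| * dist h k := by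
    rw [L1.dist_eq_integral_dist]
    exact abs_integral_mul_sub_le hf.1 (hC.mono fun z hz => hz.trans (le_abs_self C))
      (L1.integrable_coeFn h) (L1.integrable_coeFn k)
  filter_upwards [hf, Metric.tendsto_nhds.1 hk _ hsmall] with i hi hik
  rw [Real.dist_eq, abs_lt] at hik ⊢
  have hih := abs_le.1 (happrox hi.1 hi.2)
  have hgh := abs_le.1 (happrox hg hgC)
  constructor <;> linarith

lemma tendsto_integral_mul_of_setIntegral
    (hf : ∀ᶠ i in l, Integrable (f i) μ ∧ ∀ᵐ z ∂μ, |f i z| ≤ C) (hg : Integrable g μ)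
    (hgC : ∀ᵐ z ∂μ, |g z| ≤ C)
    (hset : ∀ A, MeasurableSet A →
      Tendsto (fun i => ∫ z in A, f i z ∂μ) l (𝓝 (∫ z in A, g z ∂μ)))
    {h : X → ℝ} (hh : Integrable h μ) :
    Tendsto (fun i => ∫ z, f i z * h z ∂μ) l (𝓝 (∫ z, g z * h z ∂μ)) := by
  refine Integrable.induction
    (fun h => Tendsto (fun i => ∫ z, f i z * h z ∂μ) l (𝓝 (∫ z, g z * h z ∂μ))) ?indicator ?add
    (isClosed_tendsto_integral_mul hf hg hgC) ?ae hh
  case indicator =>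
    intro c s hs _
    have hmul (k : X → ℝ) :
        (fun z => k z * s.indicator (fun _ => c) z) = s.indicator fun z => k z * c := by
      ext z
      by_cases hz : z ∈ s <;> simp [hz]
    simp only [hmul, MeasureTheory.integral_indicator hs, MeasureTheory.integral_mul_const]
    exact (hset s hs).mul_const c
  case add =>
    intro h k _ hh hk ih₁ ih₂
    simp only [Pi.add_apply, mul_add]
    rw [MeasureTheory.integral_add (hh.bdd_mul hg.1 hgC) (hk.bdd_mul hg.1 hgC)]
    refine (ih₁.add ih₂).congr' ?_
    filter_upwards [hf] with i hi
    exact (MeasureTheory.integral_add (hh.bdd_mul hi.1.1 hi.2) (hk.bdd_mul hi.1.1 hi.2)).symm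
  case ae =>
    intro h k hhk _ ih
    have hcongr (f : X → ℝ) : ∫ z, f z * h z ∂μ = ∫ z, f z * k z ∂μ :=
      integral_congr_ae (hhk.mono fun z hz => congrArg (f z * ·) hz)
    simpa only [hcongr] using ih

end WeakStar

/-- The clamping to `[0, 1]` of the space derivative of the limit potential: since that derivative
lies in `[0, 1]` almost everywhere on the rectangle, this is a representative of it with values in
`[0, 1]` everywhere. -/
noncomputable def limitDensity (U : ℝ × ℝ → ℝ) (z : ℝ × ℝ) : ℝ := projIcc 0 1 zero_le_one (Dx U z)

lemma limitDensity_mem (U : ℝ × ℝ → ℝ) (z : ℝ × ℝ) : limitDensity U z ∈ Icc (0 : ℝ) 1 :=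
  (projIcc 0 1 zero_le_one (Dx U z)).2

lemma abs_limitDensity_le_one (U : ℝ × ℝ → ℝ) (z : ℝ × ℝ) : |limitDensity U z| ≤ 1 := by
  rw [abs_of_nonneg (limitDensity_mem U z).1]
  exact (limitDensity_mem U z).2

lemma measurable_limitDensity (U : ℝ × ℝ → ℝ) : Measurable (limitDensity U) :=
  (continuous_subtype_val.comp continuous_projIcc).measurable.comp (measurable_Dx U)

instance isFiniteMeasure_restrict_rect (T : ℝ) : IsFiniteMeasure (volume.restrict (rect T)) :=
  isFiniteMeasure_restrict.2 (isCompact_rect T).measure_lt_top.ne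

lemma integrableOn_comp_limitDensity {f : ℝ → ℝ} (hf : Continuous f) (U : ℝ × ℝ → ℝ) (T : ℝ) :
    IntegrableOn (fun z => f (limitDensity U z)) (rect T) := by
  obtain ⟨C, hC⟩ := isCompact_Icc.exists_bound_of_continuousOn hf.continuousOn
  exact integrableOn_Icc_prod_Icc_of_bounded (hf.measurable.comp (measurable_limitDensity U))
    fun z _ => hC _ (limitDensity_mem U z)

lemma restrict_Ioo_prod_Ioo (T : ℝ) :
    (volume : Measure (ℝ × ℝ)).restrict (Ioo 0 T ×ˢ Ioo (0 : ℝ) 1) = volume.restrict (rect T) := by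
  rw [rect, Measure.volume_eq_prod, ← Measure.prod_restrict, ← Measure.prod_restrict,
    restrict_Ioo_eq_restrict_Icc, restrict_Ioo_eq_restrict_Icc]

lemma ae_mem_Ioo_prod_Ioo (T : ℝ) :
    ∀ᵐ z ∂(volume.restrict (rect T)), z ∈ Ioo (0 : ℝ) T ×ˢ Ioo (0 : ℝ) 1 :=
  restrict_Ioo_prod_Ioo T ▸ ae_restrict_mem (measurableSet_Ioo.prod measurableSet_Ioo)

namespace IsViscousFamily

variable {T p M : ℝ} {K : ℝ≥0} {g₀ g₁ v0 : ℝ → ℝ} {u V : ℝ → ℝ × ℝ → ℝ} {U : ℝ × ℝ → ℝ}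

lemma ae_Dx_eq_limitDensity (H : IsViscousFamily T p g₀ g₁ v0 M K u V U) :
    ∀ᵐ z ∂(volume.restrict (rect T)), Dx U z = limitDensity U z := by
  filter_upwards [ae_mem_Ioo_prod_Ioo T, ae_restrict_of_ae H.lip.ae_differentiableAt] with z hz hd
  rw [limitDensity, projIcc_of_mem zero_le_one (H.Dx_mem hz hd)]

lemma eventually_integrable_and_abs_le (H : IsViscousFamily T p g₀ g₁ v0 M K u V U) :
    ∀ᶠ ε in 𝓝[>] 0, IntegrableOn (u ε) (rect T) ∧
      ∀ᵐ z ∂(volume.restrict (rect T)), |u ε z| ≤ 1 := by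
  filter_upwards [self_mem_nhdsWithin] with ε hε
  exact ⟨integrableOn_Icc_prod_Icc (H.sol ε hε).contDiff.continuous,
    ae_restrict_of_forall_mem (measurableSet_rect T) fun _ hz => (H.sol ε hε).abs_le_one hz⟩

lemma tendsto_setIntegral (H : IsViscousFamily T p g₀ g₁ v0 M K u V U) (hT : 0 ≤ T)
    {A : Set (ℝ × ℝ)} (hA : MeasurableSet A) :
    Tendsto (fun ε => ∫ z in A, u ε z ∂(volume.restrict (rect T))) (𝓝[>] 0)
      (𝓝 (∫ z in A, Dx U z ∂(volume.restrict (rect T)))) := by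
  refine tendsto_setIntegral_of_Iic_prod_Iic H.eventually_integrable_and_abs_le
    (integrableOn_Icc_prod_Icc_of_bounded (measurable_Dx U)
      fun z _ => abs_Dx_le_of_lipschitzWith H.lip z)
    (H.tendsto_setIntegral_Icc ⟨hT, le_rfl⟩ ⟨zero_le_one, le_rfl⟩) (fun a c => ?_) hA
  have hinter : Iic a ×ˢ Iic c ∩ rect T = Icc 0 (min a T) ×ˢ Icc 0 (min c 1) := by
    ext z
    simp only [rect, mem_inter_iff, mem_prod, mem_Iic, mem_Icc, le_min_iff]
    tauto
  rw [Measure.restrict_restrict (measurableSet_Iic.prod measurableSet_Iic), hinter]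
  by_cases ha : 0 ≤ min a T
  · by_cases hc : 0 ≤ min c 1
    · exact H.tendsto_setIntegral_Icc ⟨ha, min_le_right _ _⟩ ⟨hc, min_le_right _ _⟩
    · simp [Icc_eq_empty hc]
  · simp [Icc_eq_empty ha]

lemma tendsto_setIntegral_mul (H : IsViscousFamily T p g₀ g₁ v0 M K u V U) (hT : 0 ≤ T)
    {g : ℝ × ℝ → ℝ} (hg : IntegrableOn g (rect T)) :
    Tendsto (fun ε => ∫ z in rect T, u ε z * g z) (𝓝[>] 0)
      (𝓝 (∫ z in rect T, limitDensity U z * g z)) := by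
  refine tendsto_integral_mul_of_setIntegral H.eventually_integrable_and_abs_le
    (integrableOn_Icc_prod_Icc_of_bounded (measurable_limitDensity U)
      fun z _ => abs_limitDensity_le_one U z)
    (Eventually.of_forall (abs_limitDensity_le_one U)) (fun A hA => ?_) hg
  rw [← integral_congr_ae (ae_restrict_of_ae H.ae_Dx_eq_limitDensity)]
  exact H.tendsto_setIntegral hT hA

end IsViscousFamily

/-! ### Strong convergence -/

lemma IsRobinSol.abs_integral_Dx_le {T p ε : ℝ} {g₀ g₁ v0 : ℝ → ℝ} {v : ℝ × ℝ → ℝ}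
    (S : IsRobinSol T p g₀ g₁ v0 ε v) (hT : 0 ≤ T) : |∫ z in rect T, Dx v z| ≤ 2 * T := by
  have hgreen := integral_Dt_add_Dx (f := 0) (g := v) hT zero_le_one contDiff_const
    (S.contDiff.of_le (by norm_num))
  have hzero : Dt (0 : ℝ × ℝ → ℝ) = 0 := by
    ext z
    simp [Dt]
  have hside {x : ℝ} (hx : x ∈ Icc (0 : ℝ) 1) : |∫ t in (0 : ℝ)..T, v (t, x)| ≤ 1 * (T - 0) :=
    abs_intervalIntegral_le hT fun t ht => S.abs_le_one ⟨ht, hx⟩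
  simp only [hzero, Pi.zero_apply, zero_add, intervalIntegral.integral_zero, add_zero,
    sub_zero] at hgreen
  rw [rect, hgreen]
  have h₀ := hside (left_mem_Icc.2 zero_le_one)
  have h₁ := hside (right_mem_Icc.2 zero_le_one)
  exact (abs_sub _ _).trans (by linarith)

lemma IsRobinSol.integral_visc_sq_le {T p ε C M : ℝ} {g₀ g₁ v0 : ℝ → ℝ} {v : ℝ × ℝ → ℝ}
    (S : IsRobinSol T p g₀ g₁ v0 ε v) (hT : 0 ≤ T) (hp : 0 ≤ p) (hε : 0 ≤ ε)
    (hC : ∀ x ∈ Icc (0 : ℝ) 1, |derivWithin v0 (Icc 0 1) x| ≤ C)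
    (hM : ∀ z ∈ rect T, |flux ε p v z| ≤ M) :
    ∫ z in rect T, (ε * Dx v z) ^ 2 ≤ ε * ((C * M + 4 * M + 2 * p) * T) := by
  have henergy := S.energy_le hp hC hM ⟨hT, le_rfl⟩
  have hinit : 0 ≤ ∫ x in (0 : ℝ)..1, (v (T, x) - v0 x) ^ 2 / 2 :=
    intervalIntegral.integral_nonneg zero_le_one fun x _ => by positivity
  calc ∫ z in rect T, (ε * Dx v z) ^ 2
      = ε * ∫ z in Icc 0 T ×ˢ Icc (0 : ℝ) 1, ε * Dx v z ^ 2 := by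
        rw [← MeasureTheory.integral_const_mul]
        congr! 2
        ring
    _ ≤ ε * ((C * M + 4 * M + 2 * p) * T) := mul_le_mul_of_nonneg_left (by linarith) hε

lemma IsRobinSol.mul_integral_sq_sub_eq {T p ε : ℝ} {g₀ g₁ v0 : ℝ → ℝ} {v w : ℝ × ℝ → ℝ}
    (S : IsRobinSol T p g₀ g₁ v0 ε v) (hw : IntegrableOn w (rect T))
    (hw2 : IntegrableOn (fun z => w z ^ 2) (rect T)) :
    p * ∫ z in rect T, (v z - w z) ^ 2 =
      (∫ z in rect T, flux ε p v z) + p * (∫ z in rect T, v z * (1 - 2 * w z))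
        - (∫ z in rect T, ε * Dx v z) + p * ∫ z in rect T, w z ^ 2 := by
  have hvisc : IntegrableOn (fun z => ε * Dx v z) (rect T) :=
    integrableOn_Icc_prod_Icc (continuous_const.mul S.contDiff_Dx.continuous)
  have hflux : IntegrableOn (flux ε p v) (rect T) :=
    integrableOn_Icc_prod_Icc S.contDiff_flux.continuous
  have hmul : IntegrableOn (fun z => v z * (1 - 2 * w z)) (rect T) :=
    IntegrableOn.continuousOn_mul S.contDiff.continuous.continuousOn
      ((integrable_const 1).sub (hw.const_mul 2)) (isCompact_rect T)
  have hsum : IntegrableOn (fun z => flux ε p v z + p * (v z * (1 - 2 * w z))) (rect T) :=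
    hflux.add (hmul.const_mul p)
  have hdiff : IntegrableOn (fun z => flux ε p v z + p * (v z * (1 - 2 * w z)) - ε * Dx v z)
      (rect T) := hsum.sub hvisc
  simp only [← MeasureTheory.integral_const_mul p]
  rw [← MeasureTheory.integral_add hflux (hmul.const_mul p),
    ← MeasureTheory.integral_sub hsum hvisc, ← MeasureTheory.integral_add hdiff (hw2.const_mul p)]
  refine integral_congr_ae (Eventually.of_forall fun z => ?_)
  simp only [flux, J]
  ring

namespace IsViscousFamily

variable {T p M : ℝ} {K : ℝ≥0} {g₀ g₁ v0 : ℝ → ℝ} {u V : ℝ → ℝ × ℝ → ℝ} {U : ℝ × ℝ → ℝ}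

lemma tendsto_integral_visc (H : IsViscousFamily T p g₀ g₁ v0 M K u V U) (hT : 0 ≤ T) :
    Tendsto (fun ε => ∫ z in rect T, ε * Dx (u ε) z) (𝓝[>] 0) (𝓝 0) := by
  have hlim : Tendsto (fun ε : ℝ => ε * (2 * T)) (𝓝[>] 0) (𝓝 0) :=
    tendsto_nhdsWithin_of_tendsto_nhds ((continuous_mul_const (2 * T)).tendsto' 0 0 (zero_mul _))
  refine squeeze_zero_norm' ?_ hlim
  filter_upwards [self_mem_nhdsWithin] with ε (hε : 0 < ε)
  rw [MeasureTheory.integral_const_mul, Real.norm_eq_abs, abs_mul, abs_of_pos hε]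
  exact mul_le_mul_of_nonneg_left ((H.sol ε hε).abs_integral_Dx_le hT) hε.le

lemma integral_Dt_le (H : IsViscousFamily T p g₀ g₁ v0 M K u V U) (hp : 0 ≤ p) :
    ∫ z in rect T, Dt U z ≤ ∫ z in rect T, -(p * J (limitDensity U z)) := by
  refine integral_mono_ae (integrableOn_Icc_prod_Icc_of_bounded (measurable_Dt U)
    fun z _ => abs_Dt_le_of_lipschitzWith H.lip z)
    (integrableOn_comp_limitDensity (f := fun a => -(p * J a)) (by unfold J; fun_prop) U T) ?_
  filter_upwards [ae_mem_Ioo_prod_Ioo T, ae_restrict_of_ae H.lip.ae_differentiableAt,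
    H.ae_Dx_eq_limitDensity] with z hz hd heq
  rw [← heq]
  exact H.Dt_le hp hz hd

lemma tendsto_mul_integral_sq_sub (H : IsViscousFamily T p g₀ g₁ v0 M K u V U) (hT : 0 ≤ T) :
    Tendsto (fun ε => p * ∫ z in rect T, (u ε z - limitDensity U z) ^ 2) (𝓝[>] 0)
      (𝓝 ((∫ z in rect T, Dt U z) - ∫ z in rect T, -(p * J (limitDensity U z)))) := by
  set w := limitDensity U
  have hInt {f : ℝ → ℝ} (hf : Continuous f) : IntegrableOn (fun z => f (w z)) (rect T) :=
    integrableOn_comp_limitDensity hf U T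
  have hlim := (((H.tendsto_integral_flux hT).add ((H.tendsto_setIntegral_mul hT
    (hInt (f := fun a => 1 - 2 * a) (by fun_prop))).const_mul p)).sub
    (H.tendsto_integral_visc hT)).add_const (p * ∫ z in rect T, w z ^ 2)
  have hval : (∫ z in rect T, -(p * J (w z))) =
      -(p * (∫ z in rect T, w z * (1 - 2 * w z)) + p * ∫ z in rect T, w z ^ 2) := by
    rw [← mul_add, ← MeasureTheory.integral_add (hInt (f := fun a => a * (1 - 2 * a)) (by fun_prop))
      (hInt (f := fun a => a ^ 2) (by fun_prop)), MeasureTheory.integral_neg,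
      MeasureTheory.integral_const_mul]
    congr! 3
    ext z
    simp only [J]
    ring
  rw [hval, sub_neg_eq_add, ← add_assoc]
  rw [sub_zero] at hlim
  refine hlim.congr' ?_
  filter_upwards [self_mem_nhdsWithin] with ε hε
  exact ((H.sol ε hε).mul_integral_sq_sub_eq (hInt continuous_id) (hInt (continuous_pow 2))).symm

lemma tendsto_integral_sq_sub (H : IsViscousFamily T p g₀ g₁ v0 M K u V U) (hT : 0 ≤ T)
    (hp : 0 < p) :
    Tendsto (fun ε => ∫ z in rect T, (u ε z - limitDensity U z) ^ 2) (𝓝[>] 0) (𝓝 0) := by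
  have hlim := H.tendsto_mul_integral_sq_sub hT
  have hnonneg := ge_of_tendsto' hlim fun ε =>
    mul_nonneg hp.le (integral_nonneg fun z => sq_nonneg (u ε z - limitDensity U z))
  rw [sub_eq_zero.2 (le_antisymm (H.integral_Dt_le hp.le) (sub_nonneg.1 hnonneg))] at hlim
  simpa [hp.ne'] using hlim.const_mul p⁻¹

end IsViscousFamily

lemma exists_strictMono_tendsto_ae_of_tendsto_integral {X : Type*} [MeasurableSpace X]
    {μ : Measure X} {f : ℕ → X → ℝ} (hf : ∀ n, Integrable (f n) μ) (hf0 : ∀ n x, 0 ≤ f n x)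
    (h : Tendsto (fun n => ∫ x, f n x ∂μ) atTop (𝓝 0)) :
    ∃ ns : ℕ → ℕ, StrictMono ns ∧ ∀ᵐ x ∂μ, Tendsto (fun n => f (ns n) x) atTop (𝓝 0) := by
  have hnorm (n : ℕ) : eLpNorm (f n - 0) 1 μ = ENNReal.ofReal (∫ x, f n x ∂μ) := by
    rw [sub_zero, eLpNorm_one_eq_lintegral_enorm,
      ofReal_integral_eq_lintegral_ofReal (hf n) (Eventually.of_forall (hf0 n))]
    exact lintegral_congr fun x => Real.enorm_of_nonneg (hf0 n x)
  refine (tendstoInMeasure_of_tendsto_eLpNorm (g := 0) one_ne_zero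
    (fun n => (hf n).aestronglyMeasurable) aestronglyMeasurable_zero ?_).exists_seq_tendsto_ae
  simpa only [hnorm, ENNReal.ofReal_zero] using ENNReal.tendsto_ofReal h

lemma tendsto_zero_of_sq_add_sq {f g : ℕ → ℝ}
    (h : Tendsto (fun n => f n ^ 2 + g n ^ 2) atTop (𝓝 0)) :
    Tendsto f atTop (𝓝 0) ∧ Tendsto g atTop (𝓝 0) := by
  have hsqrt := h.sqrt
  rw [Real.sqrt_zero] at hsqrt
  exact ⟨squeeze_zero_norm (fun n => Real.abs_le_sqrt (by linarith [sq_nonneg (g n)])) hsqrt,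
    squeeze_zero_norm (fun n => Real.abs_le_sqrt (by linarith [sq_nonneg (f n)])) hsqrt⟩

/-! ### Almost everywhere limits of viscous solutions -/

/-- `w` is an almost everywhere limit on `rect T` of solutions `v n` of the viscous problems with
viscosities `e n` and uniformly bounded fluxes, along which the viscous part `e n * ∂ₓ v n` of the
flux disappears as well. -/
structure IsViscousLimit (T p : ℝ) (g₀ g₁ v0 : ℝ → ℝ) (M : ℝ) (e : ℕ → ℝ) (v : ℕ → ℝ × ℝ → ℝ)
    (w : ℝ × ℝ → ℝ) : Prop where
  pos : ∀ n, 0 < e n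
  sol : ∀ n, IsRobinSol T p g₀ g₁ v0 (e n) (v n)
  abs_flux_le : ∀ n, ∀ z ∈ rect T, |flux (e n) p (v n) z| ≤ M
  measurable : Measurable w
  mem : ∀ z, w z ∈ Icc (0 : ℝ) 1
  ae_tendsto : ∀ᵐ z ∂(volume.restrict (rect T)),
    Tendsto (fun n => v n z) atTop (𝓝 (w z)) ∧
    Tendsto (fun n => e n * Dx (v n) z) atTop (𝓝 0)

lemma IsViscousFamily.exists_isViscousLimit {T p M : ℝ} {K : ℝ≥0} {g₀ g₁ v0 : ℝ → ℝ}
    {u V : ℝ → ℝ × ℝ → ℝ} {U : ℝ × ℝ → ℝ} (H : IsViscousFamily T p g₀ g₁ v0 M K u V U)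
    (hT : 0 ≤ T) (hp : 0 < p) :
    ∃ e : ℕ → ℝ, IsViscousLimit T p g₀ g₁ v0 M e (fun n => u (e n)) (limitDensity U) := by
  obtain ⟨C, hC⟩ := (H.sol 1 one_pos).exists_abs_derivWithin_init_le
  set e : ℕ → ℝ := fun n => 1 / (n + 1)
  have hpos (n : ℕ) : 0 < e n := Nat.one_div_pos_of_nat
  have hle (n : ℕ) : e n ≤ 1 := (div_le_one₀ (by positivity)).2 (by simp)
  have he : Tendsto e atTop (𝓝 0) := tendsto_one_div_add_atTop_nhds_zero_nat
  have hL2 : Tendsto (fun n => ∫ z in rect T, (u (e n) z - limitDensity U z) ^ 2) atTop (𝓝 0) :=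
    (H.tendsto_integral_sq_sub hT hp).comp
      (tendsto_nhdsWithin_iff.2 ⟨he, Eventually.of_forall hpos⟩)
  have hvisc : Tendsto (fun n => ∫ z in rect T, (e n * Dx (u (e n)) z) ^ 2) atTop (𝓝 0) := by
    refine squeeze_zero (fun n => integral_nonneg fun z => sq_nonneg _)
      (fun n => (H.sol _ (hpos n)).integral_visc_sq_le hT hp.le (hpos n).le hC
        (H.abs_flux_le _ (hpos n) (hle n))) ?_
    simpa only [zero_mul] using he.mul_const ((C * M + 4 * M + 2 * p) * T)
  have hInt₁ (n : ℕ) : IntegrableOn (fun z => (u (e n) z - limitDensity U z) ^ 2) (rect T) := by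
    refine integrableOn_Icc_prod_Icc_of_bounded (C := 1)
      (((H.sol _ (hpos n)).contDiff.continuous.measurable.sub
        (measurable_limitDensity U)).pow_const 2) fun z hz => ?_
    rw [abs_pow]
    exact pow_le_one₀ (abs_nonneg _)
      (Real.dist_le_of_mem_Icc_01 ((H.sol _ (hpos n)).mem z hz) (limitDensity_mem U z))
  have hInt₂ (n : ℕ) : IntegrableOn (fun z => (e n * Dx (u (e n)) z) ^ 2) (rect T) := by
    have hDx := (H.sol _ (hpos n)).contDiff_Dx.continuous
    exact integrableOn_Icc_prod_Icc (by fun_prop)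
  have hsum := hL2.add hvisc
  simp only [← fun n => MeasureTheory.integral_add (hInt₁ n) (hInt₂ n), add_zero] at hsum
  obtain ⟨ns, -, hns⟩ := exists_strictMono_tendsto_ae_of_tendsto_integral
    (fun n => (hInt₁ n).add (hInt₂ n))
    (fun n z => add_nonneg (sq_nonneg _) (sq_nonneg _)) hsum
  refine ⟨fun n => e (ns n), fun n => hpos _, fun n => H.sol _ (hpos _),
    fun n => H.abs_flux_le _ (hpos _) (hle _), measurable_limitDensity U, limitDensity_mem U, ?_⟩
  filter_upwards [hns] with z hz
  obtain ⟨hz₁, hz₂⟩ := tendsto_zero_of_sq_add_sq hz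
  exact ⟨tendsto_sub_nhds_zero_iff.1 hz₁, hz₂⟩

lemma ae_ae_of_ae_rect {T : ℝ} {P : ℝ × ℝ → Prop} (h : ∀ᵐ z ∂(volume.restrict (rect T)), P z) :
    ∀ᵐ t ∂(volume.restrict (Icc 0 T)), ∀ᵐ x ∂(volume.restrict (Icc (0 : ℝ) 1)), P (t, x) := by
  rw [rect, Measure.volume_eq_prod, ← Measure.prod_restrict] at h
  exact Measure.ae_ae_of_ae_prod h

lemma ae_ae_of_ae_rect_swap {T : ℝ} {P : ℝ × ℝ → Prop}
    (h : ∀ᵐ z ∂(volume.restrict (rect T)), P z) :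
    ∀ᵐ x ∂(volume.restrict (Icc (0 : ℝ) 1)), ∀ᵐ t ∂(volume.restrict (Icc 0 T)), P (t, x) := by
  rw [rect, Measure.volume_eq_prod, ← Measure.prod_restrict] at h
  exact Measure.ae_ae_of_ae_prod (Measure.measurePreserving_swap.quasiMeasurePreserving.ae h)

lemma tendsto_intervalIntegral_of_bounded {f : ℕ → ℝ → ℝ} {g : ℝ → ℝ} {a b C : ℝ} (hab : a ≤ b)
    (hf : ∀ n, ContinuousOn (f n) (Icc a b)) (hC : ∀ n, ∀ x ∈ Icc a b, |f n x| ≤ C)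
    (hlim : ∀ᵐ x ∂(volume.restrict (Icc a b)), Tendsto (fun n => f n x) atTop (𝓝 (g x))) :
    Tendsto (fun n => ∫ x in a..b, f n x) atTop (𝓝 (∫ x in a..b, g x)) := by
  simp only [integral_of_le hab, ← integral_Icc_eq_integral_Ioc]
  exact tendsto_integral_of_dominated_convergence (fun _ => C)
    (fun n => (hf n).aestronglyMeasurable measurableSet_Icc) (integrable_const _)
    (fun n => ae_restrict_of_forall_mem measurableSet_Icc (hC n)) hlim

lemma integral_abs_le_sqrt {X : Type*} [MeasurableSpace X] {μ : Measure X} [IsProbabilityMeasure μ]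
    {f : X → ℝ} (hf : MemLp f 2 μ) : ∫ x, |f x| ∂μ ≤ √(∫ x, f x ^ 2 ∂μ) := by
  refine Real.le_sqrt_of_sq_le ?_
  have hvar := ProbabilityTheory.variance_eq_sub hf.abs ▸ ProbabilityTheory.variance_nonneg |f| μ
  simpa only [sq_abs, Pi.pow_apply, Pi.abs_apply, sub_nonneg] using hvar

namespace IsRobinSol

variable {T p ε : ℝ} {g₀ g₁ v0 : ℝ → ℝ} {v : ℝ × ℝ → ℝ}

lemma continuousOn_init (S : IsRobinSol T p g₀ g₁ v0 ε v) : ContinuousOn v0 (Icc 0 1) :=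
  (S.contDiff.continuous.comp (Continuous.prodMk_right 0)).continuousOn.congr
    fun x hx => (S.init x hx).symm

lemma init_mem (S : IsRobinSol T p g₀ g₁ v0 ε v) (hT : 0 ≤ T) {x : ℝ} (hx : x ∈ Icc (0 : ℝ) 1) :
    v0 x ∈ Icc (0 : ℝ) 1 :=
  S.init x hx ▸ S.mem _ ⟨⟨le_rfl, hT⟩, hx⟩

lemma abs_visc_le {M : ℝ} (S : IsRobinSol T p g₀ g₁ v0 ε v) (hp : 0 ≤ p) {z : ℝ × ℝ}
    (hz : z ∈ rect T) (hM : |flux ε p v z| ≤ M) : |ε * Dx v z| ≤ M + p := by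
  obtain ⟨hJ0, hJ1⟩ := J_mem_Icc (S.mem z hz)
  obtain ⟨hM₁, hM₂⟩ := abs_le.1 hM
  simp only [flux] at hM₁ hM₂
  rw [abs_le]
  constructor <;> nlinarith

end IsRobinSol

namespace IsViscousLimit

variable {T p M : ℝ} {g₀ g₁ v0 F Q : ℝ → ℝ} {e : ℕ → ℝ} {v : ℕ → ℝ × ℝ → ℝ} {w : ℝ × ℝ → ℝ}

lemma exists_abs_entropyFlux_le (H : IsViscousLimit T p g₀ g₁ v0 M e v w) (hp : 0 ≤ p)
    (hFQ : IsLaxPair F Q) :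
    ∃ B, ∀ n, ∀ z ∈ rect T, |entropyFlux (e n) p F Q (v n) z| ≤ B := by
  obtain ⟨B₁, hB₁⟩ := isCompact_Icc.exists_bound_of_continuousOn (s := Icc (0 : ℝ) 1)
    hFQ.contDiff_one_flux.continuous.continuousOn
  obtain ⟨B₂, hB₂⟩ := isCompact_Icc.exists_bound_of_continuousOn (s := Icc (0 : ℝ) 1)
    hFQ.contDiff_deriv.continuous.continuousOn
  refine ⟨p * B₁ + B₂ * (M + p), fun n z hz => ?_⟩
  have hv := (H.sol n).mem z hz
  calc |entropyFlux (e n) p F Q (v n) z|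
      ≤ |p * Q (v n z)| + |deriv F (v n z) * (e n * Dx (v n) z)| := abs_sub _ _
    _ = p * |Q (v n z)| + |deriv F (v n z)| * |e n * Dx (v n) z| := by
        rw [abs_mul, abs_mul (deriv F _), abs_of_nonneg hp]
    _ ≤ p * B₁ + B₂ * (M + p) := by
        gcongr
        · exact hB₁ _ hv
        · exact (norm_nonneg _).trans (hB₂ _ hv)
        · exact hB₂ _ hv
        · exact (H.sol n).abs_visc_le hp hz (H.abs_flux_le n z hz)

lemma ae_tendsto_entropyFlux (H : IsViscousLimit T p g₀ g₁ v0 M e v w) (hFQ : IsLaxPair F Q) :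
    ∀ᵐ z ∂(volume.restrict (rect T)),
      Tendsto (fun n => entropyFlux (e n) p F Q (v n) z) atTop (𝓝 (p * Q (w z))) := by
  filter_upwards [H.ae_tendsto] with z hz
  have hQ := (hFQ.contDiff_one_flux.continuous.tendsto _).comp hz.1
  have hF' := (hFQ.contDiff_deriv.continuous.tendsto _).comp hz.1
  simpa only [entropyFlux, mul_zero, sub_zero, Function.comp_def]
    using (hQ.const_mul p).sub (hF'.mul hz.2)

lemma tendsto_integral_entropy (H : IsViscousLimit T p g₀ g₁ v0 M e v w) (hp : 0 ≤ p)
    (hFQ : IsLaxPair F Q) {ψ : ℝ × ℝ → ℝ} (hψ : ContDiff ℝ 1 ψ) :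
    Tendsto (fun n => ∫ z in rect T,
        (Dt ψ z * F (v n z) + Dx ψ z * entropyFlux (e n) p F Q (v n) z)) atTop
      (𝓝 (∫ z in rect T, (Dt ψ z * F (w z) + Dx ψ z * (p * Q (w z))))) := by
  have hDt : Continuous (Dt ψ) := (contDiff_Dt (m := 0) hψ (by norm_num)).continuous
  have hDx : Continuous (Dx ψ) := (contDiff_Dx (m := 0) hψ (by norm_num)).continuous
  have hF := hFQ.contDiff_one.continuous
  obtain ⟨B, hB⟩ := H.exists_abs_entropyFlux_le hp hFQ
  obtain ⟨BF, hBF⟩ := isCompact_Icc.exists_bound_of_continuousOn (s := Icc (0 : ℝ) 1)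
    hF.continuousOn
  refine tendsto_integral_of_dominated_convergence (fun z => |Dt ψ z| * BF + |Dx ψ z| * B)
    (fun n => ?_) (integrableOn_Icc_prod_Icc (by fun_prop)) (fun n => ?_) ?_
  · have hv := (H.sol n).contDiff.continuous
    have hE := ((H.sol n).contDiff_entropyFlux hFQ).continuous
    exact Continuous.aestronglyMeasurable (by fun_prop)
  · refine ae_restrict_of_forall_mem (measurableSet_rect T) fun z hz => ?_
    refine (norm_add_le _ _).trans ?_
    simp only [norm_mul, Real.norm_eq_abs]
    gcongr
    · exact hBF _ ((H.sol n).mem z hz)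
    · exact hB n z hz
  · filter_upwards [H.ae_tendsto, H.ae_tendsto_entropyFlux hFQ] with z hz hz'
    exact (((hF.tendsto _).comp hz.1).const_mul _).add (hz'.const_mul _)

lemma integral_entropy_nonneg (H : IsViscousLimit T p g₀ g₁ v0 M e v w) (hT : 0 ≤ T) (hp : 0 ≤ p)
    (hFQ : IsLaxPair F Q) {ψ : ℝ × ℝ → ℝ} (hψ : ContDiff ℝ 1 ψ)
    (hsupp : tsupport ψ ⊆ Ioo 0 T ×ˢ Ioo (0 : ℝ) 1) (hψ0 : ∀ z, 0 ≤ ψ z) :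
    0 ≤ ∫ z in rect T, (Dt ψ z * F (w z) + Dx ψ z * (p * Q (w z))) := by
  have hzero {z : ℝ × ℝ} (hz : z ∉ Ioo 0 T ×ˢ Ioo (0 : ℝ) 1) : ψ z = 0 :=
    image_eq_zero_of_notMem_tsupport fun h => hz (hsupp h)
  have hx₀ (t : ℝ) : ψ (t, 0) = 0 := hzero (by simp)
  have hx₁ (t : ℝ) : ψ (t, 1) = 0 := hzero (by simp)
  have ht₀ (x : ℝ) : ψ (0, x) = 0 := hzero (by simp)
  have htT (x : ℝ) : ψ (T, x) = 0 := hzero (by simp)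
  refine ge_of_tendsto' (H.tendsto_integral_entropy hp hFQ hψ) fun n => ?_
  simpa only [rect, hx₀, hx₁, ht₀, htT, zero_mul, intervalIntegral.integral_zero, sub_zero,
    add_zero] using (H.sol n).integral_entropy_inequality hT (H.pos n).le hFQ hψ
      (fun z _ => hψ0 z) le_rfl zero_le_one le_rfl

lemma ae_integral_sq_sub_le (H : IsViscousLimit T p g₀ g₁ v0 M e v w) (hp : 0 ≤ p) {C : ℝ}
    (hC : ∀ x ∈ Icc (0 : ℝ) 1, |derivWithin v0 (Icc 0 1) x| ≤ C) :
    ∀ᵐ t ∂(volume.restrict (Icc 0 T)),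
      ∫ x in (0 : ℝ)..1, (w (t, x) - v0 x) ^ 2 / 2 ≤ (C * M + 4 * M + 2 * p) * t := by
  filter_upwards [ae_ae_of_ae_rect H.ae_tendsto, ae_restrict_mem measurableSet_Icc] with t hlim ht
  refine le_of_tendsto' (tendsto_intervalIntegral_of_bounded (C := 1) zero_le_one
    (f := fun n x => (v n (t, x) - v0 x) ^ 2 / 2) (fun n => ?_) (fun n x hx => ?_) ?_) fun n => ?_
  · have hv := (H.sol n).contDiff.continuous
    have hv0 := (H.sol n).continuousOn_init
    fun_prop
  · obtain ⟨hv, hv'⟩ := (H.sol n).mem (t, x) ⟨ht, hx⟩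
    obtain ⟨h0, h0'⟩ := (H.sol n).init_mem (ht.1.trans ht.2) hx
    rw [abs_of_nonneg (by positivity)]
    nlinarith
  · filter_upwards [hlim] with x hx
    exact ((hx.1.sub_const _).pow 2).div_const _
  · have hdiss : 0 ≤ ∫ z in Icc (0 : ℝ) t ×ˢ Icc (0 : ℝ) 1, e n * Dx (v n) z ^ 2 :=
      integral_nonneg fun z => mul_nonneg (H.pos n).le (sq_nonneg _)
    linarith [(H.sol n).energy_le hp hC (H.abs_flux_le n) ht]

lemma integral_abs_sub_init_le_sqrt (H : IsViscousLimit T p g₀ g₁ v0 M e v w) (hT : 0 ≤ T)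
    (t : ℝ) : ∫ x in (0 : ℝ)..1, |w (t, x) - v0 x|
      ≤ √(2 * ∫ x in (0 : ℝ)..1, (w (t, x) - v0 x) ^ 2 / 2) := by
  have : IsProbabilityMeasure (volume.restrict (Ioc (0 : ℝ) 1)) := ⟨by simp⟩
  have hv0 := (H.sol 0).continuousOn_init.mono Ioc_subset_Icc_self
  have hmem : MemLp (fun x => w (t, x) - v0 x) 2 (volume.restrict (Ioc (0 : ℝ) 1)) := by
    refine MemLp.of_bound ((H.measurable.comp measurable_prodMk_left).aestronglyMeasurable.sub
      (hv0.aestronglyMeasurable measurableSet_Ioc)) 1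
      (ae_restrict_of_forall_mem measurableSet_Ioc fun x hx => ?_)
    exact Real.dist_le_of_mem_Icc_01 (H.mem _)
      ((H.sol 0).init_mem hT (Ioc_subset_Icc_self hx))
  rw [intervalIntegral.integral_div, mul_div_cancel₀ _ two_ne_zero, integral_of_le zero_le_one,
    integral_of_le zero_le_one]
  exact integral_abs_le_sqrt hmem

lemma tendsto_init (H : IsViscousLimit T p g₀ g₁ v0 M e v w) (hT : 0 < T) (hp : 0 ≤ p) :
    Tendsto (fun t => ∫ x in (0 : ℝ)..1, |w (t, x) - v0 x|) (𝓝[>] 0 ⊓ ae volume) (𝓝 0) := by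
  obtain ⟨C, hC⟩ := (H.sol 0).exists_abs_derivWithin_init_le
  have hlim : Tendsto (fun t : ℝ => √(2 * ((C * M + 4 * M + 2 * p) * t))) (𝓝 0) (𝓝 0) := by
    have hcont : Continuous fun t : ℝ => √(2 * ((C * M + 4 * M + 2 * p) * t)) := by fun_prop
    simpa using hcont.tendsto 0
  refine squeeze_zero' (Eventually.of_forall fun t =>
    intervalIntegral.integral_nonneg zero_le_one fun x _ => abs_nonneg _) ?_
    (hlim.mono_left (inf_le_left.trans nhdsWithin_le_nhds))
  filter_upwards [Filter.Eventually.filter_mono inf_le_left (Ioo_mem_nhdsGT hT),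
    ((ae_restrict_iff' measurableSet_Icc).1 (H.ae_integral_sq_sub_le hp hC)).filter_mono
      inf_le_right] with t ht hsq
  refine (H.integral_abs_sub_init_le_sqrt hT.le t).trans ?_
  gcongr
  exact hsq (Ioo_subset_Icc_self ht)

end IsViscousLimit

/-! ### Boundary traces -/

namespace IsLaxPair

variable {F Q : ℝ → ℝ}

lemma reflect (h : IsLaxPair F Q) : IsLaxPair (fun u => F (1 - u)) (fun u => -Q (1 - u)) := by
  have hsub : ContDiff ℝ 2 fun u : ℝ => 1 - u := contDiff_const.sub contDiff_id
  have hmem {u : ℝ} (hu : u ∈ Icc (0 : ℝ) 1) : 1 - u ∈ Icc (0 : ℝ) 1 := by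
    simpa using Icc.one_sub_mem hu
  have hF : deriv (fun u => F (1 - u)) = fun u => -deriv F (1 - u) :=
    funext fun u => deriv_comp_const_sub F 1 u
  refine ⟨h.1.comp hsub, (h.2.1.comp hsub).neg, fun u hu => ?_, fun u hu => ?_⟩
  · rw [deriv.fun_neg, deriv_comp_const_sub, hF, h.2.2.1 _ (hmem hu)]
    ring
  · rw [hF, deriv.fun_neg, deriv_comp_const_sub, neg_neg]
    exact h.2.2.2 _ (hmem hu)

lemma hasDerivAt_deriv_mul_sub (h : IsLaxPair F Q) (p k : ℝ) {s : ℝ} (hs : s ∈ Icc (0 : ℝ) 1) :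
    HasDerivAt (fun s => deriv F s * (p * J s + k) - p * Q s)
      (deriv (deriv F) s * (p * J s + k)) s := by
  have hF := (h.contDiff_deriv.differentiable one_ne_zero s).hasDerivAt
  have hQ := (h.contDiff_one_flux.differentiable one_ne_zero s).hasDerivAt
  refine ((hF.mul (((hasDerivAt_J s).const_mul p).add_const k)).sub
    (hQ.const_mul p)).congr_deriv ?_
  rw [h.2.2.1 s hs]
  ring

lemma mul_flux_sub_nonpos (h : IsLaxPair F Q) {p c a : ℝ} {g : ℝ → ℝ} (B : IsBoundaryFlux p g c)
    (hF : deriv F c = 0) (hQ : Q c = 0) (ha : a ∈ Icc (0 : ℝ) 1) :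
    p * Q a - deriv F a * (p * J a + g a) ≤ 0 := by
  -- With the value `g a` frozen, `E' = F'' (p J + g a)` has a sign between `c` and `a`.
  set E : ℝ → ℝ := fun s => deriv F s * (p * J s + g a) - p * Q s
  have hE {s : ℝ} (hs : s ∈ Icc (0 : ℝ) 1) := h.hasDerivAt_deriv_mul_sub p (g a) hs
  have hcont : ContinuousOn E (Icc 0 1) := fun s hs => (hE hs).continuousAt.continuousWithinAt
  suffices h' : E c ≤ E a by simp only [E, hF, hQ] at h'; linarith
  rcases le_total c a with hca | hac
  · have hsub : Icc c a ⊆ Icc (0 : ℝ) 1 := Icc_subset_Icc B.mem.1 ha.2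
    refine monotoneOn_of_hasDerivWithinAt_nonneg (convex_Icc c a) (hcont.mono hsub)
      (fun s hs => (hE (hsub (interior_subset hs))).hasDerivWithinAt) (fun s hs => ?_)
      (left_mem_Icc.2 hca) (right_mem_Icc.2 hca) hca
    have hs := interior_subset hs
    have hg := B.monotoneOn (hsub hs) ha hs.2
    have hbal := B.nonneg s ⟨hs.1, hs.2.trans ha.2⟩
    exact mul_nonneg (h.2.2.2 s (hsub hs)) (by linarith)
  · have hsub : Icc a c ⊆ Icc (0 : ℝ) 1 := Icc_subset_Icc ha.1 B.mem.2
    refine antitoneOn_of_hasDerivWithinAt_nonpos (convex_Icc a c) (hcont.mono hsub)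
      (fun s hs => (hE (hsub (interior_subset hs))).hasDerivWithinAt) (fun s hs => ?_)
      (left_mem_Icc.2 hac) (right_mem_Icc.2 hac) hac
    have hs := interior_subset hs
    have hg := B.monotoneOn ha (hsub hs) hs.1
    have hbal := B.nonpos s ⟨ha.1.trans hs.1, hs.2⟩
    exact mul_nonpos_of_nonneg_of_nonpos (h.2.2.2 s (hsub hs)) (by linarith)

end IsLaxPair

lemma IsRobinSol.entropyFlux_left_nonpos {T p ε c t : ℝ} {g₀ g₁ v0 F Q : ℝ → ℝ} {v : ℝ × ℝ → ℝ}
    (S : IsRobinSol T p g₀ g₁ v0 ε v) (B : IsBoundaryFlux p g₀ c) (hFQ : IsLaxPair F Q)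
    (hF : deriv F c = 0) (hQ : Q c = 0) (ht : t ∈ Icc 0 T) :
    entropyFlux ε p F Q v (t, 0) ≤ 0 := by
  have hsign := hFQ.mul_flux_sub_nonpos B hF hQ (S.mem (t, 0) ⟨ht, le_rfl, zero_le_one⟩)
  rw [← S.left t ht] at hsign
  simpa only [entropyFlux, flux, add_sub_cancel] using hsign

lemma IsRobinSol.entropyFlux_right_nonneg {T p ε c t : ℝ} {g₀ g₁ v0 F Q : ℝ → ℝ} {v : ℝ × ℝ → ℝ}
    (S : IsRobinSol T p g₀ g₁ v0 ε v) (B : IsBoundaryFlux p g₁ (1 - c)) (hFQ : IsLaxPair F Q)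
    (hF : deriv F c = 0) (hQ : Q c = 0) (ht : t ∈ Icc 0 T) :
    0 ≤ entropyFlux ε p F Q v (t, 1) := by
  have hsign := hFQ.reflect.mul_flux_sub_nonpos B
    (by rw [deriv_comp_const_sub, sub_sub_cancel, hF, neg_zero])
    (by rw [sub_sub_cancel, hQ, neg_zero]) (S.one_sub_mem (z := (t, 1)) ⟨ht, zero_le_one, le_rfl⟩)
  rw [deriv_comp_const_sub, sub_sub_cancel, ← S.right t ht] at hsign
  simp only [entropyFlux, flux, J] at hsign ⊢
  linarith

lemma exists_tendsto_of_eventually_mono {ι : Type*} {l : Filter ι} {g : ι → ℝ} {S : Set ι}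
    {B : ℝ} (hS : ∀ᶠ x in l, x ∈ S) (hmono : ∀ s ∈ S, ∀ᶠ x in l, g s ≤ g x)
    (hle : ∀ s ∈ S, g s ≤ B) : ∃ L ≤ B, Tendsto g l (𝓝 L) := by
  rcases l.eq_or_neBot with rfl | _
  · exact ⟨B, le_rfl, tendsto_bot⟩
  have hne : (g '' S).Nonempty := hS.exists.elim fun x hx => ⟨_, mem_image_of_mem g hx⟩
  have hbdd : B ∈ upperBounds (g '' S) := forall_mem_image.2 hle
  refine ⟨sSup (g '' S), csSup_le hne hbdd, tendsto_order.2 ⟨fun a ha => ?_, fun a ha => ?_⟩⟩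
  · obtain ⟨_, ⟨s, hs, rfl⟩, hlt⟩ := exists_lt_of_lt_csSup hne ha
    exact (hmono s hs).mono fun x hx => hlt.trans_le hx
  · exact hS.mono fun x hx => (le_csSup ⟨B, hbdd⟩ (mem_image_of_mem g hx)).trans_lt ha

lemma exists_tendsto_nhdsGT_of_sub_le {I : ℕ → ℝ → ℝ} {G : ℝ → ℝ} {C : ℝ}
    (hI : ∀ n x₁ x₂, 0 ≤ x₁ → x₁ ≤ x₂ → x₂ ≤ 1 → I n x₂ - I n x₁ ≤ C * (x₂ - x₁))
    (h0 : ∀ n, I n 0 ≤ 0)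
    (hlim : ∀ᵐ x ∂(volume.restrict (Icc 0 1)), Tendsto (fun n => I n x) atTop (𝓝 (G x))) :
    ∃ L ≤ 0, Tendsto G (𝓝[>] 0 ⊓ ae volume) (𝓝 L) := by
  set S : Set ℝ := {x | x ∈ Ioo (0 : ℝ) 1 ∧ Tendsto (fun n => I n x) atTop (𝓝 (G x))}
  have hS : ∀ᶠ x in 𝓝[>] 0 ⊓ ae volume, x ∈ S := by
    filter_upwards [mem_inf_of_left (Ioo_mem_nhdsGT zero_lt_one),
      ((ae_restrict_iff' measurableSet_Icc).1 hlim).filter_mono inf_le_right] with x hx h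
    exact ⟨hx, h (Ioo_subset_Icc_self hx)⟩
  have hanti {x s : ℝ} (hx : x ∈ S) (hs : s ∈ S) (hxs : x ≤ s) : G s - C * s ≤ G x - C * x := by
    linarith [le_of_tendsto' (hs.2.sub hx.2) fun n => hI n x s hx.1.1.le hxs hs.1.2.le]
  have hle (s : ℝ) (hs : s ∈ S) : G s - C * s ≤ 0 := by
    have hn (n : ℕ) : I n s ≤ C * s := by linarith [hI n 0 s le_rfl hs.1.1.le hs.1.2.le, h0 n]
    exact sub_nonpos.2 (le_of_tendsto' hs.2 hn)
  obtain ⟨L, hL, hGL⟩ := exists_tendsto_of_eventually_mono hS (fun s hs => by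
    filter_upwards [hS, mem_inf_of_left (Ioo_mem_nhdsGT hs.1.1)] with x hx hxs
    exact hanti hx hs hxs.2.le) hle
  have hx : Tendsto (fun x : ℝ => C * x) (𝓝[>] 0 ⊓ ae volume) (𝓝 0) :=
    (Continuous.tendsto' (by fun_prop) 0 0 (mul_zero C)).mono_left
      (inf_le_left.trans nhdsWithin_le_nhds)
  exact ⟨L, hL, by simpa only [sub_add_cancel, add_zero] using hGL.add hx⟩

lemma tendsto_one_sub_nhdsLT_inf_ae :
    Tendsto (fun x : ℝ => 1 - x) (𝓝[<] 1 ⊓ ae volume) (𝓝[>] 0 ⊓ ae volume) := by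
  have hnhds : Tendsto (fun x : ℝ => 1 - x) (𝓝[<] 1) (𝓝[>] 0) :=
    tendsto_nhdsWithin_iff.2
      ⟨(Continuous.tendsto' (by fun_prop) 1 0 (sub_self 1)).mono_left nhdsWithin_le_nhds,
        eventually_mem_nhdsWithin.mono fun x (hx : x < 1) => sub_pos.2 hx⟩
  exact hnhds.inf
    (Measure.measurePreserving_sub_left volume (1 : ℝ)).quasiMeasurePreserving.tendsto_ae

lemma exists_tendsto_nhdsLT_of_sub_le {I : ℕ → ℝ → ℝ} {G : ℝ → ℝ} {C : ℝ}
    (hI : ∀ n x₁ x₂, 0 ≤ x₁ → x₁ ≤ x₂ → x₂ ≤ 1 → I n x₂ - I n x₁ ≤ C * (x₂ - x₁))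
    (h1 : ∀ n, 0 ≤ I n 1)
    (hlim : ∀ᵐ x ∂(volume.restrict (Icc 0 1)), Tendsto (fun n => I n x) atTop (𝓝 (G x))) :
    ∃ L, 0 ≤ L ∧ Tendsto G (𝓝[<] 1 ⊓ ae volume) (𝓝 L) := by
  have hpre : MeasurePreserving (fun x : ℝ => 1 - x) (volume.restrict (Icc 0 1))
      (volume.restrict (Icc 0 1)) := by
    simpa using (Measure.measurePreserving_sub_left volume (1 : ℝ)).restrict_preimage
      (measurableSet_Icc (a := (0 : ℝ)) (b := 1))
  obtain ⟨L, hL, hGL⟩ := exists_tendsto_nhdsGT_of_sub_le (I := fun n x => -I n (1 - x))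
    (G := fun x => -G (1 - x)) (C := C)
    (fun n x₁ x₂ hx₁ hx hx₂ => by
      linarith [hI n (1 - x₂) (1 - x₁) (by linarith) (by linarith) (by linarith)])
    (fun n => by simpa using h1 n)
    ((hpre.quasiMeasurePreserving.ae hlim).mono fun x hx => hx.neg)
  refine ⟨-L, neg_nonneg.2 hL, ?_⟩
  simpa [Function.comp_def] using (hGL.comp tendsto_one_sub_nhdsLT_inf_ae).neg

lemma exists_tendsto_of_forall_abs_sub_le {ι : Type*} {l : Filter ι} {g : ι → ℝ}
    (h : ∀ κ > 0, ∃ g' : ι → ℝ, (∀ x, |g x - g' x| ≤ κ) ∧ ∃ L ≤ 0, Tendsto g' l (𝓝 L)) :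
    ∃ L ≤ 0, Tendsto g l (𝓝 L) := by
  rcases l.eq_or_neBot with rfl | hl
  · exact ⟨0, le_rfl, tendsto_bot⟩
  have hnear (κ : ℝ) (hκ : 0 < κ) : ∃ L ≤ 0, ∀ᶠ x in l, dist (g x) L < κ := by
    obtain ⟨g', hg', L, hL, ht⟩ := h (κ / 2) (half_pos hκ)
    refine ⟨L, hL, (Metric.tendsto_nhds.1 ht _ (half_pos hκ)).mono fun x hx => ?_⟩
    calc dist (g x) L ≤ dist (g x) (g' x) + dist (g' x) L := dist_triangle _ _ _
      _ < κ / 2 + κ / 2 := add_lt_add_of_le_of_lt (hg' x) hx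
      _ = κ := add_halves κ
  have hcauchy : Cauchy (map g l) := by
    refine Metric.cauchy_iff.2 ⟨hl.map g, fun κ hκ => ?_⟩
    obtain ⟨L, -, hL⟩ := hnear (κ / 2) (half_pos hκ)
    refine ⟨Metric.ball L (κ / 2), hL, fun x hx y hy => ?_⟩
    linarith [dist_triangle_right x y L, Metric.mem_ball.1 hx, Metric.mem_ball.1 hy]
  obtain ⟨L, hL⟩ := cauchy_map_iff_exists_tendsto.1 hcauchy
  refine ⟨L, le_of_forall_pos_le_add fun κ hκ => ?_, hL⟩
  obtain ⟨L', hL', hev⟩ := hnear κ hκ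
  refine le_of_tendsto hL (hev.mono fun x hx => ?_)
  linarith [(abs_lt.1 hx).2]

lemma exists_contDiff_nonneg_near {φ : ℝ → ℝ} {a b η : ℝ} (hφ : ContinuousOn φ (Icc a b))
    (hφ0 : ∀ t ∈ Icc a b, 0 ≤ φ t) (hη : 0 < η) (n : WithTop ℕ∞) :
    ∃ φ' : ℝ → ℝ, ContDiff ℝ n φ' ∧ (∀ t ∈ Icc a b, 0 ≤ φ' t) ∧
      ∀ t ∈ Icc a b, |φ t - φ' t| ≤ η := by
  obtain ⟨P, hP⟩ := exists_polynomial_near_of_continuousOn a b φ hφ (η / 2) (half_pos hη)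
  have hPsm : ContDiff ℝ n fun t : ℝ => P.eval t := by
    have h : ContDiff ℝ n fun t : ℝ => Polynomial.aeval t P := Polynomial.contDiff_aeval P n
    simpa only [Polynomial.coe_aeval_eq_eval] using h
  refine ⟨fun t => P.eval t + η / 2, hPsm.add contDiff_const, fun t ht => ?_, fun t ht => ?_⟩
  · linarith [hφ0 t ht, (abs_lt.1 (hP t ht)).1]
  · obtain ⟨h₁, h₂⟩ := abs_lt.1 (hP t ht)
    rw [abs_le]
    constructor <;> linarith

namespace IsViscousLimit

variable {T p M : ℝ} {g₀ g₁ v0 F Q φ : ℝ → ℝ} {e : ℕ → ℝ} {v : ℕ → ℝ × ℝ → ℝ} {w : ℝ × ℝ → ℝ}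

lemma exists_integral_entropyFlux_sub_le (H : IsViscousLimit T p g₀ g₁ v0 M e v w) (hT : 0 ≤ T)
    (hFQ : IsLaxPair F Q) (hφ : ContDiff ℝ 1 φ) (hφ0 : ∀ t ∈ Icc 0 T, 0 ≤ φ t) :
    ∃ C, ∀ n x₁ x₂, 0 ≤ x₁ → x₁ ≤ x₂ → x₂ ≤ 1 →
      (∫ t in (0 : ℝ)..T, φ t * entropyFlux (e n) p F Q (v n) (t, x₂))
        - ∫ t in (0 : ℝ)..T, φ t * entropyFlux (e n) p F Q (v n) (t, x₁) ≤ C * (x₂ - x₁) := by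
  obtain ⟨B, hB⟩ := isCompact_Icc.exists_bound_of_continuousOn (s := Icc (0 : ℝ) 1)
    hFQ.contDiff_one.continuous.continuousOn
  obtain ⟨D, hD⟩ := isCompact_Icc.exists_bound_of_continuousOn (s := Icc 0 T)
    (hφ.continuous_deriv le_rfl).continuousOn
  refine ⟨D * B * T + φ T * B + φ 0 * B, fun n x₁ x₂ hx₁ hx hx₂ => ?_⟩
  have hψ : ContDiff ℝ 1 fun z : ℝ × ℝ => φ z.1 := hφ.comp contDiff_fst
  have hDt (z : ℝ × ℝ) : Dt (fun z : ℝ × ℝ => φ z.1) z = deriv φ z.1 :=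
    (hasDerivAt_Dt (t := z.1) (x := z.2) (hψ.differentiable one_ne_zero _)).deriv.symm
  have hDx (z : ℝ × ℝ) : Dx (fun z : ℝ × ℝ => φ z.1) z = 0 :=
    (hasDerivAt_Dx (t := z.1) (x := z.2) (hψ.differentiable one_ne_zero _)).unique
      (hasDerivAt_const z.2 (φ z.1))
  have hFB {z : ℝ × ℝ} (hz : z ∈ Icc 0 T ×ˢ Icc x₁ x₂) : |F (v n z)| ≤ B :=
    hB _ ((H.sol n).mem _ ⟨hz.1, hx₁.trans hz.2.1, hz.2.2.trans hx₂⟩)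
  have hbulk := abs_setIntegral_Icc_prod_Icc_le (f := fun z => deriv φ z.1 * F (v n z))
    (C := D * B) hT hx fun z hz => by
      rw [abs_mul]
      exact mul_le_mul (hD _ hz.1) (hFB hz) (abs_nonneg _) ((norm_nonneg _).trans (hD _ hz.1))
  have hslice (t : ℝ) (ht : t ∈ Icc 0 T) :
      |∫ x in x₁..x₂, φ t * F (v n (t, x))| ≤ φ t * B * (x₂ - x₁) :=
    abs_intervalIntegral_le hx fun x hx' => by
      rw [abs_mul, abs_of_nonneg (hφ0 t ht)]
      exact mul_le_mul_of_nonneg_left (hFB ⟨ht, hx'⟩) (hφ0 t ht)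
  have hineq := (H.sol n).integral_entropy_inequality hT (H.pos n).le hFQ hψ
    (fun z hz => hφ0 z.1 hz.1) hx₁ hx hx₂
  simp only [hDt, hDx, zero_mul, add_zero] at hineq
  linarith [(abs_le.1 (hslice T ⟨hT, le_rfl⟩)).1, (abs_le.1 (hslice 0 ⟨le_rfl, hT⟩)).2,
    (abs_le.1 hbulk).2]

lemma ae_tendsto_integral_entropyFlux (H : IsViscousLimit T p g₀ g₁ v0 M e v w) (hT : 0 ≤ T)
    (hp : 0 ≤ p) (hFQ : IsLaxPair F Q) (hφ : Continuous φ) :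
    ∀ᵐ x ∂(volume.restrict (Icc (0 : ℝ) 1)),
      Tendsto (fun n => ∫ t in (0 : ℝ)..T, φ t * entropyFlux (e n) p F Q (v n) (t, x)) atTop
        (𝓝 (p * ∫ t in (0 : ℝ)..T, φ t * Q (w (t, x)))) := by
  obtain ⟨B, hB⟩ := H.exists_abs_entropyFlux_le hp hFQ
  obtain ⟨D, hD⟩ := isCompact_Icc.exists_bound_of_continuousOn (s := Icc 0 T) hφ.continuousOn
  filter_upwards [ae_ae_of_ae_rect_swap (H.ae_tendsto_entropyFlux hFQ),
    ae_restrict_mem measurableSet_Icc] with x hlim hx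
  simp only [← intervalIntegral.integral_const_mul, mul_left_comm p]
  refine tendsto_intervalIntegral_of_bounded (C := D * B) hT (fun n => ?_) (fun n t ht => ?_) ?_
  · have hE := ((H.sol n).contDiff_entropyFlux hFQ).continuous
    fun_prop
  · rw [abs_mul]
    exact mul_le_mul (hD t ht) (hB n _ ⟨ht, hx⟩) (abs_nonneg _) ((norm_nonneg _).trans (hD t ht))
  · filter_upwards [hlim] with t ht using ht.const_mul (φ t)

lemma exists_trace_left_of_contDiff {c : ℝ} (H : IsViscousLimit T p g₀ g₁ v0 M e v w) (hT : 0 ≤ T)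
    (hp : 0 < p) (B : IsBoundaryFlux p g₀ c) (hFQ : IsLaxPair F Q) (hF : deriv F c = 0)
    (hQ : Q c = 0) (hφ : ContDiff ℝ 1 φ) (hφ0 : ∀ t ∈ Icc 0 T, 0 ≤ φ t) :
    ∃ L ≤ 0, Tendsto (fun x => ∫ t in (0 : ℝ)..T, φ t * Q (w (t, x)))
      (𝓝[>] 0 ⊓ ae volume) (𝓝 L) := by
  obtain ⟨C, hC⟩ := H.exists_integral_entropyFlux_sub_le hT hFQ hφ hφ0
  have hleft (n : ℕ) :
      ∫ t in (0 : ℝ)..T, φ t * entropyFlux (e n) p F Q (v n) (t, 0) ≤ 0 := by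
    rw [← neg_nonneg, ← intervalIntegral.integral_neg]
    exact intervalIntegral.integral_nonneg hT fun t ht => neg_nonneg.2
      (mul_nonpos_of_nonneg_of_nonpos (hφ0 t ht)
        ((H.sol n).entropyFlux_left_nonpos B hFQ hF hQ ht))
  obtain ⟨L, hL, hlim⟩ := exists_tendsto_nhdsGT_of_sub_le hC hleft
    (H.ae_tendsto_integral_entropyFlux hT hp.le hFQ hφ.continuous)
  refine ⟨p⁻¹ * L, mul_nonpos_of_nonneg_of_nonpos (inv_nonneg.2 hp.le) hL, ?_⟩
  simpa only [inv_mul_cancel_left₀ hp.ne'] using hlim.const_mul p⁻¹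

lemma exists_trace_right_of_contDiff {c : ℝ} (H : IsViscousLimit T p g₀ g₁ v0 M e v w)
    (hT : 0 ≤ T) (hp : 0 < p) (B : IsBoundaryFlux p g₁ (1 - c)) (hFQ : IsLaxPair F Q)
    (hF : deriv F c = 0) (hQ : Q c = 0) (hφ : ContDiff ℝ 1 φ) (hφ0 : ∀ t ∈ Icc 0 T, 0 ≤ φ t) :
    ∃ L, 0 ≤ L ∧ Tendsto (fun x => ∫ t in (0 : ℝ)..T, φ t * Q (w (t, x)))
      (𝓝[<] 1 ⊓ ae volume) (𝓝 L) := by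
  obtain ⟨C, hC⟩ := H.exists_integral_entropyFlux_sub_le hT hFQ hφ hφ0
  have hright (n : ℕ) :
      0 ≤ ∫ t in (0 : ℝ)..T, φ t * entropyFlux (e n) p F Q (v n) (t, 1) :=
    intervalIntegral.integral_nonneg hT fun t ht =>
      mul_nonneg (hφ0 t ht) ((H.sol n).entropyFlux_right_nonneg B hFQ hF hQ ht)
  obtain ⟨L, hL, hlim⟩ := exists_tendsto_nhdsLT_of_sub_le hC hright
    (H.ae_tendsto_integral_entropyFlux hT hp.le hFQ hφ.continuous)
  refine ⟨p⁻¹ * L, mul_nonneg (inv_nonneg.2 hp.le) hL, ?_⟩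
  simpa only [inv_mul_cancel_left₀ hp.ne'] using hlim.const_mul p⁻¹

lemma intervalIntegrable_trace (H : IsViscousLimit T p g₀ g₁ v0 M e v w) (hT : 0 ≤ T)
    (hQ : Continuous Q) (hφ : ContinuousOn φ (Icc 0 T)) (x : ℝ) :
    IntervalIntegrable (fun t => φ t * Q (w (t, x))) volume 0 T := by
  obtain ⟨B, hB⟩ := isCompact_Icc.exists_bound_of_continuousOn (s := Icc (0 : ℝ) 1) hQ.continuousOn
  have hQw : IntervalIntegrable (fun t => Q (w (t, x))) volume 0 T := by
    rw [intervalIntegrable_iff_integrableOn_Ioc_of_le hT]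
    exact Measure.integrableOn_of_bounded (M := B) (by simp)
      (hQ.measurable.comp (H.measurable.comp measurable_prodMk_right)).aestronglyMeasurable
      (Eventually.of_forall fun t => hB _ (H.mem _))
  exact hQw.continuousOn_mul (by rwa [uIcc_of_le hT])

lemma abs_trace_sub_le (H : IsViscousLimit T p g₀ g₁ v0 M e v w) (hT : 0 ≤ T)
    {φ' : ℝ → ℝ} {B κ : ℝ} (hQ : Continuous Q) (hφ : ContinuousOn φ (Icc 0 T))
    (hφ' : ContinuousOn φ' (Icc 0 T)) (hB : ∀ a ∈ Icc (0 : ℝ) 1, |Q a| ≤ B)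
    (hκ : ∀ t ∈ Icc 0 T, |φ t - φ' t| ≤ κ) (x : ℝ) :
    |(∫ t in (0 : ℝ)..T, φ t * Q (w (t, x))) - ∫ t in (0 : ℝ)..T, φ' t * Q (w (t, x))|
      ≤ κ * B * T := by
  rw [← intervalIntegral.integral_sub (H.intervalIntegrable_trace hT hQ hφ x)
    (H.intervalIntegrable_trace hT hQ hφ' x)]
  refine (abs_intervalIntegral_le (C := κ * B) hT fun t ht => ?_).trans_eq (by rw [sub_zero])
  rw [← sub_mul, abs_mul]
  exact mul_le_mul (hκ t ht) (hB _ (H.mem _)) (abs_nonneg _) ((abs_nonneg _).trans (hκ t ht))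

lemma exists_trace_of_contDiff {l : Filter ℝ} (H : IsViscousLimit T p g₀ g₁ v0 M e v w)
    (hT : 0 ≤ T) (hQ : Continuous Q)
    (htrace : ∀ φ : ℝ → ℝ, ContDiff ℝ 1 φ → (∀ t ∈ Icc 0 T, 0 ≤ φ t) →
      ∃ L ≤ 0, Tendsto (fun x => ∫ t in (0 : ℝ)..T, φ t * Q (w (t, x))) l (𝓝 L))
    (hφ : ContinuousOn φ (Icc 0 T)) (hφ0 : ∀ t ∈ Icc 0 T, 0 ≤ φ t) :
    ∃ L ≤ 0, Tendsto (fun x => ∫ t in (0 : ℝ)..T, φ t * Q (w (t, x))) l (𝓝 L) := by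
  obtain ⟨B, hB⟩ := isCompact_Icc.exists_bound_of_continuousOn (s := Icc (0 : ℝ) 1) hQ.continuousOn
  have hB0 : 0 ≤ B := (norm_nonneg _).trans (hB 0 ⟨le_rfl, zero_le_one⟩)
  refine exists_tendsto_of_forall_abs_sub_le fun κ hκ => ?_
  obtain ⟨φ', hφ', hφ'0, hclose⟩ :=
    exists_contDiff_nonneg_near hφ hφ0 (show 0 < κ / (B * T + 1) by positivity) 1
  refine ⟨_, fun x => ?_, htrace φ' hφ' hφ'0⟩
  calc _ ≤ κ / (B * T + 1) * B * T :=
        H.abs_trace_sub_le hT hQ hφ hφ'.continuous.continuousOn hB hclose x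
    _ = κ * (B * T / (B * T + 1)) := by ring
    _ ≤ κ := mul_le_of_le_one_right hκ.le (div_le_one_of_le₀ (by linarith) (by positivity))

lemma exists_trace_left {c : ℝ} (H : IsViscousLimit T p g₀ g₁ v0 M e v w) (hT : 0 ≤ T)
    (hp : 0 < p) (B : IsBoundaryFlux p g₀ c) (hFQ : IsLaxPair F Q) (hF : deriv F c = 0)
    (hQ : Q c = 0) (hφ : ContinuousOn φ (Icc 0 T)) (hφ0 : ∀ t ∈ Icc 0 T, 0 ≤ φ t) :
    ∃ L ≤ 0, Tendsto (fun x => ∫ t in (0 : ℝ)..T, φ t * Q (w (t, x)))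
      (𝓝[>] 0 ⊓ ae volume) (𝓝 L) :=
  H.exists_trace_of_contDiff hT hFQ.2.1.continuous
    (fun _ => H.exists_trace_left_of_contDiff hT hp B hFQ hF hQ) hφ hφ0

lemma exists_trace_right {c : ℝ} (H : IsViscousLimit T p g₀ g₁ v0 M e v w) (hT : 0 ≤ T)
    (hp : 0 < p) (B : IsBoundaryFlux p g₁ (1 - c)) (hFQ : IsLaxPair F Q) (hF : deriv F c = 0)
    (hQ : Q c = 0) (hφ : ContinuousOn φ (Icc 0 T)) (hφ0 : ∀ t ∈ Icc 0 T, 0 ≤ φ t) :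
    ∃ L, 0 ≤ L ∧ Tendsto (fun x => ∫ t in (0 : ℝ)..T, φ t * Q (w (t, x)))
      (𝓝[<] 1 ⊓ ae volume) (𝓝 L) := by
  have htrace (φ' : ℝ → ℝ) (hφ' : ContDiff ℝ 1 φ') (hφ'0 : ∀ t ∈ Icc 0 T, 0 ≤ φ' t) :
      ∃ L ≤ 0, Tendsto (fun x => ∫ t in (0 : ℝ)..T, φ' t * -Q (w (t, x)))
        (𝓝[<] 1 ⊓ ae volume) (𝓝 L) := by
    obtain ⟨L, hL, hlim⟩ := H.exists_trace_right_of_contDiff hT hp B hFQ hF hQ hφ' hφ'0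
    refine ⟨-L, neg_nonpos.2 hL, ?_⟩
    simpa only [mul_neg, intervalIntegral.integral_neg] using hlim.neg
  obtain ⟨L, hL, hlim⟩ :=
    H.exists_trace_of_contDiff (Q := fun u => -Q u) hT hFQ.2.1.continuous.neg htrace hφ hφ0
  refine ⟨-L, neg_nonneg.2 hL, ?_⟩
  simpa only [mul_neg, intervalIntegral.integral_neg, neg_neg] using hlim.neg

end IsViscousLimit

/-! ### The vanishing viscosity limit -/

/-- `w` is an entropy solution of `∂ₜ w + p ∂ₓ J(w) = 0` on `rect T` with initial datum `v0` and
boundary data `vm` at `x = 0` and `vp` at `x = 1`, the boundary data being understood in the sense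
of Otto. Essential limits are limits along the infimum of the neighborhood filter with
`ae volume`. -/
structure IsEntropySolution (T p vm vp : ℝ) (v0 : ℝ → ℝ) (w : ℝ × ℝ → ℝ) : Prop where
  entropy : ∀ F Q : ℝ → ℝ, IsLaxPair F Q → ∀ ψ : ℝ × ℝ → ℝ, ContDiff ℝ (⊤ : ℕ∞) ψ →
    tsupport ψ ⊆ Ioo 0 T ×ˢ Ioo (0 : ℝ) 1 → (∀ z, 0 ≤ ψ z) →
    0 ≤ ∫ z in Ioo 0 T ×ˢ Ioo (0 : ℝ) 1, (F (w z) * Dt ψ z + p * Q (w z) * Dx ψ z)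
  init : Tendsto (fun t => ∫ x in (0 : ℝ)..1, |w (t, x) - v0 x|) (𝓝[>] 0 ⊓ ae volume) (𝓝 0)
  boundary : ∀ F Q : ℝ → ℝ → ℝ, IsBoundaryPair F Q → ∀ φ : ℝ → ℝ, ContinuousOn φ (Icc 0 T) →
    (∀ t ∈ Icc (0 : ℝ) T, 0 ≤ φ t) →
    (∃ L ≤ 0, Tendsto (fun x => ∫ t in (0 : ℝ)..T, φ t * Q (w (t, x)) vm)
      (𝓝[>] 0 ⊓ ae volume) (𝓝 L)) ∧
    ∃ L, 0 ≤ L ∧ Tendsto (fun x => ∫ t in (0 : ℝ)..T, φ t * Q (w (t, x)) vp)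
      (𝓝[<] 1 ⊓ ae volume) (𝓝 L)

lemma IsViscousLimit.isEntropySolution {T p M vm vp : ℝ} {g₀ g₁ v0 : ℝ → ℝ} {e : ℕ → ℝ}
    {v : ℕ → ℝ × ℝ → ℝ} {w : ℝ × ℝ → ℝ} (H : IsViscousLimit T p g₀ g₁ v0 M e v w) (hT : 0 < T)
    (hp : 0 < p) (B₀ : IsBoundaryFlux p g₀ vm) (B₁ : IsBoundaryFlux p g₁ (1 - vp)) :
    IsEntropySolution T p vm vp v0 w where
  entropy F Q hFQ ψ hψ hsupp hψ0 := by
    rw [restrict_Ioo_prod_Ioo]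
    refine (H.integral_entropy_nonneg hT.le hp.le hFQ (hψ.of_le (by simp)) hsupp hψ0).trans_eq ?_
    congr 1
    ext z
    ring
  init := H.tendsto_init hT hp.le
  boundary F Q hFQ φ hφ hφ0 := by
    have hvp : vp ∈ Icc (0 : ℝ) 1 := ⟨by linarith [B₁.mem.2], by linarith [B₁.mem.1]⟩
    obtain ⟨hm, -, hFm, hQm⟩ := hFQ vm B₀.mem
    obtain ⟨hp', -, hFp, hQp⟩ := hFQ vp hvp
    exact ⟨H.exists_trace_left hT.le hp B₀ hm hFm hQm hφ hφ0,
      H.exists_trace_right hT.le hp B₁ hp' hFp hQp hφ hφ0⟩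

lemma isRobinSol_of_deriv {T p α β γ δ ε : ℝ} {v0 : ℝ → ℝ} {v : ℝ × ℝ → ℝ} (hT : 0 < T)
    (hsm : ContDiff ℝ 3 v) (hmem : ∀ z ∈ rect T, v z ∈ Icc (0 : ℝ) 1)
    (hpde : ∀ t ∈ Ioo 0 T, ∀ x ∈ Ioo (0 : ℝ) 1, deriv (fun s => v (s, x)) t
      = ε * deriv (deriv fun y => v (t, y)) x - p * deriv (fun y => J (v (t, y))) x)
    (hinit : ∀ x ∈ Icc (0 : ℝ) 1, v (0, x) = v0 x)
    (hbc0 : ∀ t ∈ Icc (0 : ℝ) T,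
      ε * deriv (fun y => v (t, y)) 0 - p * J (v (t, 0)) + α - (α + γ) * v (t, 0) = 0)
    (hbc1 : ∀ t ∈ Icc (0 : ℝ) T,
      ε * deriv (fun y => v (t, y)) 1 - p * J (v (t, 1)) - δ + (β + δ) * v (t, 1) = 0) :
    IsRobinSol T p (fun a => (α + γ) * a - α) (fun a => (β + δ) * a - β) v0 ε v := by
  have hd : Differentiable ℝ v := hsm.differentiable three_ne_zero
  have hDx (t : ℝ) : deriv (fun y => v (t, y)) = fun x => Dx v (t, x) :=
    funext fun x => (hasDerivAt_Dx (hd (t, x))).deriv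
  have hflux : ContDiff ℝ 2 (flux ε p v) := contDiff_flux hsm (by norm_num)
  refine ⟨hsm, hmem, fun z hz => ?_, hinit, fun t ht => ?_, fun t ht => ?_⟩
  · refine eqOn_rect_of_eqOn_Ioo_prod_Ioo hT (contDiff_Dt (m := 2) hsm (by norm_num)).continuous
      (contDiff_Dx (m := 1) hflux (by norm_num)).continuous ?_ hz
    rintro ⟨t, x⟩ ⟨ht, hx⟩
    have hDxx := hasDerivAt_Dx ((contDiff_Dx (m := 2) hsm (by norm_num)).differentiable
      two_ne_zero (t, x))
    have hJ : HasDerivAt (fun y => J (v (t, y))) ((1 - 2 * v (t, x)) * Dx v (t, x)) x :=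
      (hasDerivAt_J _).comp x (hasDerivAt_Dx (hd (t, x)))
    calc Dt v (t, x) = deriv (fun s => v (s, x)) t := (hasDerivAt_Dt (hd (t, x))).deriv.symm
      _ = ε * Dx (Dx v) (t, x) - p * ((1 - 2 * v (t, x)) * Dx v (t, x)) := by
        rw [hpde t ht x hx, hDx, hDxx.deriv, hJ.deriv]
      _ = Dx (flux ε p v) (t, x) := (fderiv_flux (hsm.of_le (by norm_num)) _ _).symm
  · have h := hbc0 t ht
    rw [hDx] at h
    simp only [flux]
    linarith
  · have h := hbc1 t ht
    rw [hDx] at h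
    simp only [flux]
    linarith

theorem stmt4_general {T p vm vp : ℝ} {g₀ g₁ v0 : ℝ → ℝ} {u : ℝ → ℝ × ℝ → ℝ} (hT : 0 < T)
    (hp : 0 < p) (B₀ : IsBoundaryFlux p g₀ vm) (B₁ : IsBoundaryFlux p g₁ (1 - vp))
    (S : ∀ ε > 0, IsRobinSol T p g₀ g₁ v0 ε (u ε)) :
    ∃ w : ℝ × ℝ → ℝ, Measurable w ∧ (∀ z, w z ∈ Icc (0 : ℝ) 1) ∧
      (∀ g : ℝ × ℝ → ℝ, IntegrableOn g (rect T) →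
        Tendsto (fun ε => ∫ z in rect T, u ε z * g z) (𝓝[>] 0) (𝓝 (∫ z in rect T, w z * g z))) ∧
      IsEntropySolution T p vm vp v0 w := by
  obtain ⟨M, K, V, U, H⟩ := exists_isViscousFamily B₀ B₁ hT hp.le S
  obtain ⟨e, L⟩ := H.exists_isViscousLimit hT.le hp
  exact ⟨limitDensity U, L.measurable, L.mem, fun g hg => H.tendsto_setIntegral_mul hT.le hg,
    L.isEntropySolution hT hp B₀ B₁⟩

/-- Theorem 2.8, Robin boundary case: vanishing viscosity limit of the viscous
conservation law with Robin boundary conditions converges (weak-⋆ in `L^∞`) to the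
entropy solution with boundary data `v₋`, `v₊` given by the stationary densities. -/
theorem stmt4 (T p α β γ δ : ℝ) (hT : 0 < T) (hp : 0 < p)
    (hα : 0 ≤ α) (hβ : 0 ≤ β) (hγ : 0 ≤ γ) (hδ : 0 ≤ δ)
    (v0 : ℝ → ℝ) (hv0sm : ContDiff ℝ (⊤ : ℕ∞) v0)
    (hv0b : ∀ x ∈ Set.Icc (0:ℝ) 1, v0 x ∈ Set.Icc (0:ℝ) 1)
    (vm vp : ℝ)
    (hvm : vm = (p + α + γ - Real.sqrt ((p - α + γ)^2 + 4*α*γ)) / (2*p))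
    (hvp : vp = (p - β - δ + Real.sqrt ((p - β + δ)^2 + 4*β*δ)) / (2*p))
    (u : ℝ → ℝ × ℝ → ℝ)
    (hsm : ∀ ε > (0:ℝ), ContDiff ℝ (⊤ : ℕ∞) (u ε))
    (hub : ∀ ε > (0:ℝ), ∀ z ∈ Set.Icc (0:ℝ) T ×ˢ Set.Icc (0:ℝ) 1, u ε z ∈ Set.Icc (0:ℝ) 1)
    (hpde : ∀ ε > (0:ℝ), ∀ t ∈ Set.Ioo 0 T, ∀ x ∈ Set.Ioo (0:ℝ) 1,
      deriv (fun s => u ε (s, x)) t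
        = ε * deriv (deriv (fun y => u ε (t, y))) x
          - p * deriv (fun y => J (u ε (t, y))) x)
    (hinit : ∀ ε > (0:ℝ), ∀ x ∈ Set.Icc (0:ℝ) 1, u ε (0, x) = v0 x)
    (hbc0 : ∀ ε > (0:ℝ), ∀ t ∈ Set.Icc (0:ℝ) T,
      ε * deriv (fun y => u ε (t, y)) 0 - p * J (u ε (t, 0))
        + α - (α + γ) * u ε (t, 0) = 0)
    (hbc1 : ∀ ε > (0:ℝ), ∀ t ∈ Set.Icc (0:ℝ) T,
      ε * deriv (fun y => u ε (t, y)) 1 - p * J (u ε (t, 1))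
        - δ + (β + δ) * u ε (t, 1) = 0) :
    ∃ w : ℝ × ℝ → ℝ, Measurable w ∧
      (∀ᵐ z ∂(volume.restrict (Set.Icc (0:ℝ) T ×ˢ Set.Icc (0:ℝ) 1)), w z ∈ Set.Icc (0:ℝ) 1) ∧
      -- weak-⋆ convergence in L^∞([0,T]×[0,1]) as ε → 0⁺
      (∀ g : ℝ × ℝ → ℝ, IntegrableOn g (Set.Icc (0:ℝ) T ×ˢ Set.Icc (0:ℝ) 1) →
        Tendsto (fun ε => ∫ z in Set.Icc (0:ℝ) T ×ˢ Set.Icc (0:ℝ) 1, u ε z * g z)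
          (nhdsWithin 0 (Set.Ioi 0))
          (nhds (∫ z in Set.Icc (0:ℝ) T ×ˢ Set.Icc (0:ℝ) 1, w z * g z))) ∧
      -- (i) the entropy inequality
      (∀ F Q : ℝ → ℝ, IsLaxPair F Q → ∀ ψ : ℝ × ℝ → ℝ,
        ContDiff ℝ (⊤ : ℕ∞) ψ → HasCompactSupport ψ →
        tsupport ψ ⊆ Set.Ioo 0 T ×ˢ Set.Ioo (0:ℝ) 1 → (∀ z, 0 ≤ ψ z) →
        0 ≤ ∫ z in Set.Ioo (0:ℝ) T ×ˢ Set.Ioo (0:ℝ) 1,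
              (F (w z) * fderiv ℝ ψ z (1, 0) + p * Q (w z) * fderiv ℝ ψ z (0, 1))) ∧
      -- (ii) the initial condition, as an essential limit t → 0+
      Tendsto (fun t => ∫ x in (0:ℝ)..1, |w (t, x) - v0 x|)
        (nhdsWithin 0 (Set.Ioi 0) ⊓ ae volume) (nhds 0) ∧
      -- (iii) the Otto boundary conditions, as essential limits x → 0+ and x → 1−
      (∀ F Q : ℝ → ℝ → ℝ, IsBoundaryPair F Q →
        ∀ φ : ℝ → ℝ, ContinuousOn φ (Set.Icc 0 T) → (∀ t ∈ Set.Icc (0:ℝ) T, 0 ≤ φ t) →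
        (∃ Lm ≤ (0:ℝ), Tendsto (fun x => ∫ t in (0:ℝ)..T, φ t * Q (w (t, x)) vm)
            (nhdsWithin 0 (Set.Ioi 0) ⊓ ae volume) (nhds Lm)) ∧
        (∃ Lp, 0 ≤ Lp ∧ Tendsto (fun x => ∫ t in (0:ℝ)..T, φ t * Q (w (t, x)) vp)
            (nhdsWithin 1 (Set.Iio 1) ⊓ ae volume) (nhds Lp))) := by
  have B₀ := isBoundaryFlux_robin hp hα hγ hvm
  have B₁ : IsBoundaryFlux p (fun a => (β + δ) * a - β) (1 - vp) :=
    isBoundaryFlux_robin hp hβ hδ (by rw [hvp]; field_simp; ring)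
  have S (ε : ℝ) (hε : 0 < ε) := isRobinSol_of_deriv hT (contDiff_infty.1 (hsm ε hε) 3) (hub ε hε)
    (hpde ε hε) (hinit ε hε) (hbc0 ε hε) (hbc1 ε hε)
  obtain ⟨w, hw, hmem, hlim, E⟩ := stmt4_general hT hp B₀ B₁ S
  exact ⟨w, hw, .of_forall hmem, hlim, fun F Q hFQ ψ hψ _ => E.entropy F Q hFQ ψ hψ, E.init,
    E.boundary⟩
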